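/- Suppose n > n₁ ≥ 1 and m > m₁ ≥ 1 are integers with n ≥ 300 and L_n − L_{n₁} = 𝒫_m − 𝒫_{m₁}. Then n − 3 < 1.8·10^{41}·(1 + log(2n))³, and consequently n < 2.45·10^{47}. -/

import Mathlib

/-- The Padovan sequence: 𝒫₀ = 𝒫₁ = 𝒫₂ = 1, 𝒫_{k+3} = 𝒫_{k+1} + 𝒫_k. -/
def padovan : ℕ → ℕ
  | 0 => 1
  | 1 => 1
  | 2 => 1
  | k + 3 => padovan (k + 1) + padovan k

/-- The Lucas sequence: L₀ = 2, L₁ = 1, L_{k+2} = L_{k+1} + L_k. -/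
def lucasSeq : ℕ → ℕ
  | 0 => 2
  | 1 => 1
  | k + 2 => lucasSeq (k + 1) + lucasSeq k

section part1x
open MvPolynomial

abbrev MP2 := MvPolynomial (Fin 2) ℝ

noncomputable abbrev VD (D : ℕ) : Submodule ℝ MP2 := restrictTotalDegree (Fin 2) ℝ D

def tri (D : ℕ) : ℕ := ∑ i : Fin (D+1), (D + 1 - (i:ℕ))

lemma two_tri (D : ℕ) : 2 * tri D = (D+1)*(D+2) := by
  unfold tri
  rw [Fin.sum_univ_eq_sum_range (fun i => D + 1 - i)]
  rw [← Finset.sum_range_reflect]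
  have : ∑ j ∈ Finset.range (D+1), (D + 1 - (D + 1 - 1 - j)) = ∑ j ∈ Finset.range (D+1), (j+1) := by
    apply Finset.sum_congr rfl
    intro j hj
    have := Finset.mem_range.mp hj
    omega
  rw [this]
  clear this
  induction D with
  | zero => simp
  | succ k ih => rw [Finset.sum_range_succ, mul_add, ih]; ring

noncomputable def triEquiv (D : ℕ) : {n : Fin 2 →₀ ℕ | (n.sum fun _ e => e) ≤ D} ≃ (Σ i : Fin (D+1), Fin (D + 1 - (i:ℕ))) where
  toFun n := ⟨⟨n.1 0, by
      have := n.2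
      simp only [Set.mem_ofPred_eq] at this
      rw [Finsupp.sum_fintype _ _ (by simp)] at this
      simp at this; omega⟩, ⟨n.1 1, by
      have := n.2
      simp only [Set.mem_ofPred_eq] at this
      rw [Finsupp.sum_fintype _ _ (by simp)] at this
      simp at this; simp; omega⟩⟩
  invFun p := ⟨Finsupp.equivFunOnFinite.symm ![p.1.1, p.2.1], by
      simp only [Set.mem_ofPred_eq]
      rw [Finsupp.sum_fintype _ _ (by simp)]
      have h1 := p.1.2
      have h2 := p.2.2
      simp; omega⟩
  left_inv n := by
    apply Subtype.ext
    ext i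
    fin_cases i <;> simp
  right_inv p := by
    rcases p with ⟨⟨a, ha⟩, ⟨b, hb⟩⟩
    simp

instance (D : ℕ) : Finite {n : Fin 2 →₀ ℕ | (n.sum fun _ e => e) ≤ D} := Finite.of_equiv _ (triEquiv D).symm

instance VD_fin (D : ℕ) : Module.Finite ℝ (VD D) :=
  Module.Finite.of_basis (basisRestrictSupport ℝ {n : Fin 2 →₀ ℕ | (n.sum fun _ e => e) ≤ D})

lemma finrank_VD (D : ℕ) : Module.finrank ℝ (VD D) = tri D := by
  have := Module.finrank_eq_nat_card_basis (basisRestrictSupport ℝ {n : Fin 2 →₀ ℕ | (n.sum fun _ e => e) ≤ D})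
  rw [Nat.card_congr (triEquiv D)] at this
  rw [Nat.card_eq_fintype_card, Fintype.card_sigma] at this
  unfold VD restrictTotalDegree
  rw [this, tri]
  simp

lemma mem_VD {D : ℕ} {p : MP2} : p ∈ VD D ↔ p.totalDegree ≤ D := mem_restrictTotalDegree _ _ _

/-- evaluation on a finite set -/
noncomputable def evA (A : Finset (Fin 2 → ℝ)) : MP2 →ₗ[ℝ] (A → ℝ) :=
  LinearMap.pi fun a => (MvPolynomial.aeval (a : Fin 2 → ℝ)).toLinearMap

lemma evA_apply (A : Finset (Fin 2 → ℝ)) (p : MP2) (a : A) : evA A p a = eval (a : Fin 2 → ℝ) p := by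
  simp [evA, MvPolynomial.aeval_eq_eval]

lemma exists_sep (A : Finset (Fin 2 → ℝ)) (a : Fin 2 → ℝ) (ha : a ∈ A) :
    ∃ p : MP2, p.totalDegree ≤ A.card ∧ eval a p ≠ 0 ∧ ∀ b ∈ A, b ≠ a → eval b p = 0 := by
  classical
  have h : ∀ b : Fin 2 → ℝ, ∃ q : MP2, q.totalDegree ≤ 1 ∧ (b ≠ a → eval a q ≠ 0 ∧ eval b q = 0) := by
    intro b
    by_cases hb : b = a
    · exact ⟨0, by simp, fun h => absurd hb h⟩
    · obtain ⟨i, hi⟩ := Function.ne_iff.mp hb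
      refine ⟨X i - C (b i), ?_, fun _ => ⟨?_, ?_⟩⟩
      · refine (totalDegree_sub _ _).trans ?_
        simp
      · simp; exact sub_ne_zero.mpr (Ne.symm hi)
      · simp
  choose q hq1 hq2 using h
  refine ⟨∏ b ∈ A.erase a, q b, ?_, ?_, ?_⟩
  · refine (totalDegree_finsetProd _ _).trans ?_
    refine (Finset.sum_le_card_nsmul _ _ 1 (fun b _ => hq1 b)).trans ?_
    simp [Finset.card_erase_of_mem ha]
  · rw [map_prod]
    exact Finset.prod_ne_zero_iff.mpr fun b hb => (hq2 b (Finset.ne_of_mem_erase hb)).1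
  · intro b hb hne
    rw [map_prod]
    exact Finset.prod_eq_zero (Finset.mem_erase.mpr ⟨hne, hb⟩) (hq2 b hne).2

lemma evA_surj (A : Finset (Fin 2 → ℝ)) (D : ℕ) (hD : A.card ≤ D) :
    Function.Surjective ((evA A).comp (VD D).subtype) := by
  classical
  have h : ∀ a : A, ∃ p : MP2, p.totalDegree ≤ A.card ∧ eval a.1 p ≠ 0 ∧ ∀ b ∈ A, b ≠ a.1 → eval b p = 0 :=
    fun a => exists_sep A a.1 a.2
  choose p h1 h2 h3 using h
  intro f
  refine ⟨∑ a : A, (f a / eval a.1 (p a)) • (⟨p a, mem_VD.mpr ((h1 a).trans hD)⟩ : VD D), ?_⟩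
  ext b
  rw [map_sum, Finset.sum_apply, Finset.sum_eq_single b]
  · simp [evA_apply, h2 b]
  · intro a _ hab
    have := h3 a b.1 b.2 (fun h => hab (Subtype.ext h.symm))
    simp [evA_apply, this]
  · simp

lemma bezout (p q : MP2) (hp : Irreducible p) (hpq : ¬ p ∣ q) (A : Finset (Fin 2 → ℝ))
    (hA : ∀ a ∈ A, eval a p = 0 ∧ eval a q = 0) : A.card ≤ p.totalDegree * q.totalDegree := by
  classical
  have hprime : Prime p := hp.prime
  have hp0 : p ≠ 0 := hp.ne_zero
  have hq0 : q ≠ 0 := fun h => hpq (h ▸ dvd_zero p)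
  set e := p.totalDegree with he
  set f := q.totalDegree with hf
  set a := A.card with ha
  -- D = a + e + f
  let Φ : (VD (a + f)) × (VD (a + e)) →ₗ[ℝ] VD (a + e + f) :=
    { toFun := fun uv => ⟨p * uv.1.1 + q * uv.2.1, by
        rw [mem_VD]
        refine (totalDegree_add _ _).trans (max_le ?_ ?_)
        · refine (totalDegree_mul _ _).trans ?_
          have := mem_VD.mp uv.1.2
          omega
        · refine (totalDegree_mul _ _).trans ?_
          have := mem_VD.mp uv.2.2
          omega⟩
      map_add' := by intro x y; apply Subtype.ext; simp; ring
      map_smul' := by intro c x; apply Subtype.ext; simp }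
  have hker : Module.finrank ℝ (LinearMap.ker Φ) ≤ tri a := by
    have hmem : ∀ s : VD a, (⟨-(q * s.1), by
        rw [mem_VD, totalDegree_neg]
        refine (totalDegree_mul _ _).trans ?_
        have := mem_VD.mp s.2
        omega⟩, ⟨p * s.1, by
        rw [mem_VD]
        refine (totalDegree_mul _ _).trans ?_
        have := mem_VD.mp s.2
        omega⟩) ∈ LinearMap.ker Φ := by
      intro s
      rw [LinearMap.mem_ker]
      apply Subtype.ext
      simp [Φ]; ring
    let Ψ : VD a →ₗ[ℝ] LinearMap.ker Φ :=
      { toFun := fun s => ⟨_, hmem s⟩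
        map_add' := by
          intro x y; apply Subtype.ext; apply Prod.ext <;> apply Subtype.ext <;> simp <;> ring
        map_smul' := by
          intro c x; apply Subtype.ext; apply Prod.ext <;> apply Subtype.ext <;> simp }
    have hsurj : Function.Surjective Ψ := by
      rintro ⟨⟨⟨u, hu⟩, ⟨v, hv⟩⟩, huv⟩
      have h0 : p * u + q * v = 0 := by
        have := congrArg Subtype.val (LinearMap.mem_ker.mp huv)
        simpa [Φ] using this
      have hdvd : p ∣ q * v := ⟨-u, by linear_combination h0⟩
      obtain ⟨s, hs⟩ := (hprime.dvd_or_dvd hdvd).resolve_left hpq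
      have hus : u = -(q * s) := by
        have : p * (u + q * s) = 0 := by rw [hs] at h0; linear_combination h0
        rcases mul_eq_zero.mp this with h | h
        · exact absurd h hp0
        · linear_combination h
      have hsd : s ∈ VD a := by
        rw [mem_VD]
        by_cases hs0 : s = 0
        · simp [hs0]
        · have := mem_VD.mp hv
          rw [hs, totalDegree_mul_of_isDomain hp0 hs0] at this
          omega
      refine ⟨⟨s, hsd⟩, ?_⟩
      apply Subtype.ext; apply Prod.ext <;> apply Subtype.ext
      · simp [Ψ, hus]
      · simp [Ψ, hs]
    calc Module.finrank ℝ (LinearMap.ker Φ) ≤ Module.finrank ℝ (VD a) :=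
          LinearMap.finrank_le_finrank_of_surjective hsurj
      _ = tri a := finrank_VD a
  have hrn := LinearMap.finrank_range_add_finrank_ker Φ
  rw [Module.finrank_prod, finrank_VD, finrank_VD] at hrn
  let E := (evA A).comp (VD (a + e + f)).subtype
  have hE := LinearMap.finrank_range_add_finrank_ker E
  have hsE : Function.Surjective E := evA_surj A _ (by omega)
  rw [LinearMap.range_eq_top.mpr hsE, finrank_top, finrank_VD, Module.finrank_fintype_fun_eq_card, Fintype.card_coe] at hE
  have hle : LinearMap.range Φ ≤ LinearMap.ker E := by
    rintro _ ⟨uv, rfl⟩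
    rw [LinearMap.mem_ker]
    ext b
    have := hA b.1 b.2
    simp [E, evA_apply, Φ, this.1, this.2]
  have hfr := Submodule.finrank_mono hle
  have t1 := two_tri a
  have t2 := two_tri (a+e)
  have t3 := two_tri (a+f)
  have t4 := two_tri (a+e+f)
  nlinarith
end part1x

section part2x
open MvPolynomial

noncomputable def lin (τ a : Fin 2 → ℝ) : MP2 := C (τ 1) * (X 0 - C (a 0)) - C (τ 0) * (X 1 - C (a 1))

lemma lin_eval (τ a x : Fin 2 → ℝ) : eval x (lin τ a) = τ 1 * (x 0 - a 0) - τ 0 * (x 1 - a 1) := by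
  simp [lin]

lemma lin_totalDegree_le (τ a : Fin 2 → ℝ) : (lin τ a).totalDegree ≤ 1 := by
  unfold lin
  refine (totalDegree_sub _ _).trans (max_le ?_ ?_)
  · refine (totalDegree_mul _ _).trans ?_
    rw [totalDegree_C, zero_add]
    refine (totalDegree_sub _ _).trans ?_
    simp
  · refine (totalDegree_mul _ _).trans ?_
    rw [totalDegree_C, zero_add]
    refine (totalDegree_sub _ _).trans ?_
    simp

lemma unit_of_deg0 (p : MP2) (hp : p ≠ 0) (h : p.totalDegree = 0) : IsUnit p := by
  have h1 := totalDegree_eq_zero_iff_eq_C.mp h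
  rw [h1] at hp ⊢
  have : coeff 0 p ≠ 0 := fun h => hp (by rw [h, map_zero])
  exact (isUnit_iff_ne_zero.mpr this).map C

lemma lin_deg (τ a : Fin 2 → ℝ) (hτ : τ ≠ 0) : (lin τ a).totalDegree = 1 := by
  refine le_antisymm (lin_totalDegree_le τ a) ?_
  by_contra h
  have h0 : (lin τ a).totalDegree = 0 := by omega
  have h1 := totalDegree_eq_zero_iff_eq_C.mp h0
  have hc : ∀ x : Fin 2 → ℝ, τ 1 * (x 0 - a 0) - τ 0 * (x 1 - a 1) = coeff 0 (lin τ a) := by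
    intro x
    rw [← lin_eval, h1, eval_C, coeff_zero_C]
  have e0 := hc a
  have e1 := hc ![a 0 + 1, a 1]
  have e2 := hc ![a 0, a 1 + 1]
  simp at e0 e1 e2
  apply hτ
  ext i; fin_cases i
  · simp; linarith
  · simp; linarith

lemma lin_ne (τ a : Fin 2 → ℝ) (hτ : τ ≠ 0) : lin τ a ≠ 0 := by
  intro h
  have := lin_deg τ a hτ
  rw [h] at this
  simp at this

lemma lin_irred (τ a : Fin 2 → ℝ) (hτ : τ ≠ 0) : Irreducible (lin τ a) := by
  have h1 := lin_deg τ a hτ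
  have h0 : lin τ a ≠ 0 := lin_ne τ a hτ
  constructor
  · intro hu
    have := (isUnit_iff_totalDegree_of_isReduced.mp hu).2
    omega
  · intro u v huv
    have hu : u ≠ 0 := by rintro rfl; simp [huv] at h0
    have hv : v ≠ 0 := by rintro rfl; simp [huv] at h0
    rw [huv, totalDegree_mul_of_isDomain hu hv] at h1
    rcases Nat.eq_zero_or_pos u.totalDegree with h | h
    · exact Or.inl (unit_of_deg0 u hu h)
    · exact Or.inr (unit_of_deg0 v hv (by omega))

/-- shift of a polynomial -/
noncomputable def sh (τ : Fin 2 → ℝ) (q : MP2) : MP2 := bind₁ (fun i => X i + C (τ i)) q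

lemma sh_eval (τ x : Fin 2 → ℝ) (q : MP2) : eval x (sh τ q) = eval (x + τ) q := by
  unfold sh
  rw [← MvPolynomial.coe_aeval_eq_eval, RingHom.coe_coe, aeval_bind₁, ← MvPolynomial.coe_aeval_eq_eval, RingHom.coe_coe]
  congr 2
  ext i
  simp

lemma sh_deg (τ : Fin 2 → ℝ) (q : MP2) : (sh τ q).totalDegree ≤ q.totalDegree := by
  unfold sh
  rw [bind₁, MvPolynomial.aeval_def, eval₂_eq']
  refine totalDegree_finsetSum_le fun d hd => ?_
  refine (totalDegree_mul _ _).trans ?_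
  have h1 : (algebraMap ℝ MP2 (coeff d q)).totalDegree = 0 := totalDegree_C _
  rw [h1, zero_add]
  refine (totalDegree_finsetProd _ _).trans ?_
  have h2 : ∀ i : Fin 2, ((X i + C (τ i) : MP2) ^ d i).totalDegree ≤ d i := by
    intro i
    refine (totalDegree_pow _ _).trans ?_
    have : (X i + C (τ i) : MP2).totalDegree ≤ 1 := by
      refine (totalDegree_add _ _).trans ?_
      simp
    nlinarith
  refine (Finset.sum_le_sum fun i _ => h2 i).trans ?_
  have := le_totalDegree hd
  rwa [Finsupp.sum_fintype _ _ (by simp)] at this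

lemma lin_dvd (q : MP2) (τ a : Fin 2 → ℝ) (hτ : τ ≠ 0) (h : ∀ k : ℕ, eval (a + (k : ℝ) • τ) q = 0) :
    lin τ a ∣ q := by
  classical
  by_contra hn
  have hinj : Function.Injective (fun k : ℕ => a + (k : ℝ) • τ) := by
    intro k k' hk
    have : (k : ℝ) • τ = (k' : ℝ) • τ := by simpa using hk
    exact_mod_cast smul_left_injective ℝ hτ this
  let A := (Finset.range (q.totalDegree + 1)).image (fun k : ℕ => a + (k : ℝ) • τ)
  have hA : A.card = q.totalDegree + 1 := by
    rw [Finset.card_image_of_injective _ hinj, Finset.card_range]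
  have := bezout (lin τ a) q (lin_irred τ a hτ) hn A (by
    intro x hx
    obtain ⟨k, _, rfl⟩ := Finset.mem_image.mp hx
    refine ⟨?_, h k⟩
    rw [lin_eval]; simp; ring)
  rw [hA, lin_deg τ a hτ] at this
  omega

lemma irred_count (q : MP2) (hq : Irreducible q) (S D : Finset (Fin 2 → ℝ)) (c Cc : ℕ)
    (hD : ∀ x ∈ S, ∀ y ∈ S, x ≠ y → y - x ∈ D) (hDc : D.card ≤ c ^ 2) (hc : c + 1 ≤ Cc)
    (hline : ∀ τ ∈ D, τ ≠ 0 → ∀ a ∈ S, (S.filter fun x => eval x (lin τ a) = 0).card ≤ Cc) :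
    (S.filter fun x => eval x q = 0).card ≤ Cc * q.totalDegree := by
  classical
  have he : 1 ≤ q.totalDegree := by
    by_contra h
    exact hq.not_isUnit (unit_of_deg0 q hq.ne_zero (by omega))
  set A := S.filter fun x => eval x q = 0 with hA
  set e := q.totalDegree with hedef
  by_cases hcase : ∃ τ ∈ D, τ ≠ 0 ∧ q ∣ sh τ q
  · obtain ⟨τ, hτD, hτ, w, hw⟩ := hcase
    rcases A.eq_empty_or_nonempty with h | ⟨a, ha⟩
    · simp [h]
    · have haS := (Finset.mem_filter.mp ha).1
      have haq := (Finset.mem_filter.mp ha).2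
      have hw0 : ∀ k : ℕ, eval (a + (k : ℝ) • τ) q = 0 := by
        intro k
        induction k with
        | zero => simpa using haq
        | succ k ih =>
          have := sh_eval τ (a + (k : ℝ) • τ) q
          rw [hw, map_mul, ih, zero_mul] at this
          rw [this]
          congr 2
          push_cast
          rw [add_smul, one_smul, add_assoc]
      have hd := lin_dvd q τ a hτ hw0
      have hass : Associated (lin τ a) q := (lin_irred τ a hτ).associated_of_dvd hq hd
      obtain ⟨g, hg⟩ := hass.symm.dvd
      calc A.card ≤ (S.filter fun x => eval x (lin τ a) = 0).card := by
            apply Finset.card_le_card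
            intro x hx
            rw [hA, Finset.mem_filter] at hx
            rw [Finset.mem_filter]
            refine ⟨hx.1, ?_⟩
            rw [hg, map_mul, hx.2, zero_mul]
        _ ≤ Cc := hline τ hτD hτ a haS
        _ ≤ Cc * e := Nat.le_mul_of_pos_right _ he
  · push Not at hcase
    have hoff : A.offDiag.card ≤ D.card * (e * e) := by
      have hmaps : ∀ p ∈ A.offDiag, p.2 - p.1 ∈ D.erase 0 := by
        intro p hp
        rw [Finset.mem_offDiag] at hp
        rw [Finset.mem_erase]
        exact ⟨sub_ne_zero.mpr (Ne.symm hp.2.2), hD _ (Finset.mem_filter.mp hp.1).1 _ (Finset.mem_filter.mp hp.2.1).1 hp.2.2⟩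
      refine (Finset.card_le_mul_card_image_of_maps_to hmaps (e*e) ?_).trans ?_
      · intro τ hτ
        rw [Finset.mem_erase] at hτ
        have hb := bezout q (sh τ q) hq (hcase τ hτ.2 hτ.1) ((A.offDiag.filter fun p => p.2 - p.1 = τ).image Prod.fst) (by
          intro x hx
          obtain ⟨p, hp, rfl⟩ := Finset.mem_image.mp hx
          rw [Finset.mem_filter, Finset.mem_offDiag] at hp
          refine ⟨(Finset.mem_filter.mp hp.1.1).2, ?_⟩
          rw [sh_eval, ← hp.2, add_sub_cancel]
          exact (Finset.mem_filter.mp hp.1.2.1).2)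
        rw [Finset.card_image_of_injOn] at hb
        · exact hb.trans (Nat.mul_le_mul_left _ (sh_deg τ q))
        · intro p hp p' hp' h
          simp only [Finset.coe_filter, Set.mem_ofPred_eq] at hp hp'
          apply Prod.ext h
          have h1 := hp.2
          have h2 := hp'.2
          rw [← h2, h] at h1
          simpa using h1
      · rw [mul_comm]
        exact Nat.mul_le_mul_right _ (Finset.card_le_card (Finset.erase_subset _ _))
    rw [Finset.offDiag_card] at hoff
    have h2 : A.card * A.card - A.card ≤ (c * e) ^ 2 := by
      refine hoff.trans ?_
      calc D.card * (e*e) ≤ c^2 * (e*e) := Nat.mul_le_mul_right _ hDc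
        _ = (c*e)^2 := by ring
    have h3 : A.card ≤ c * e + 1 := by
      by_contra hcon
      push Not at hcon
      have h4 : A.card * A.card ≤ (c*e)^2 + A.card := by omega
      obtain ⟨k, hk⟩ := Nat.exists_eq_add_of_le hcon
      rw [hk] at h4
      generalize c * e = y at h4
      simp only [Nat.succ_eq_add_one] at h4
      ring_nf at h4
      nlinarith [Nat.zero_le (y*k), Nat.zero_le (k*k), h4]
    calc A.card ≤ c * e + 1 := h3
      _ ≤ (c + 1) * e := by nlinarith
      _ ≤ Cc * e := Nat.mul_le_mul_right _ hc

lemma zero_count (Q : MP2) (hQ : Q ≠ 0) (S D : Finset (Fin 2 → ℝ)) (c Cc : ℕ)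
    (hD : ∀ x ∈ S, ∀ y ∈ S, x ≠ y → y - x ∈ D) (hDc : D.card ≤ c ^ 2) (hc : c + 1 ≤ Cc)
    (hline : ∀ τ ∈ D, τ ≠ 0 → ∀ a ∈ S, (S.filter fun x => eval x (lin τ a) = 0).card ≤ Cc) :
    (S.filter fun x => eval x Q = 0).card ≤ Cc * Q.totalDegree := by
  classical
  revert hQ
  induction Q using WfDvdMonoid.induction_on_irreducible with
  | zero => intro h; exact absurd rfl h
  | unit u hu =>
    intro _
    rw [Finset.filter_eq_empty_iff.mpr]
    · simp
    · intro x _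
      exact (hu.map (eval x)).ne_zero
  | mul a i ha hi ih =>
    intro _
    rw [totalDegree_mul_of_isDomain hi.ne_zero ha, mul_add]
    have : (S.filter fun x => eval x (i * a) = 0) ⊆ (S.filter fun x => eval x i = 0) ∪ (S.filter fun x => eval x a = 0) := by
      intro x hx
      simp only [Finset.mem_filter, Finset.mem_union, map_mul, mul_eq_zero] at hx ⊢
      tauto
    refine (Finset.card_le_card this).trans ((Finset.card_union_le _ _).trans ?_)
    exact add_le_add (irred_count i hi S D c Cc hD hDc hc hline) (ih ha)

lemma line_pts (Q : MP2) (hQ : Q ≠ 0) (S : Finset (Fin 2 → ℝ)) (M : ℕ)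
    (hline : ∀ τ, τ ≠ 0 → ∀ a ∈ S, (S.filter fun x => eval x (lin τ a) = 0).card ≤ M) :
    ∃ S' ⊆ S, (∀ x ∈ S, x ∉ S' → ∀ τ a, τ ≠ 0 → eval x (lin τ a) = 0 → ¬ lin τ a ∣ Q) ∧
      S'.card ≤ M * Q.totalDegree := by
  classical
  revert hQ
  induction Q using WfDvdMonoid.induction_on_irreducible with
  | zero => intro h; exact absurd rfl h
  | unit u hu =>
    intro _
    refine ⟨∅, by simp, ?_, by simp⟩
    intro x _ _ τ a hτ _ hd
    exact (lin_irred τ a hτ).not_isUnit (isUnit_of_dvd_unit hd hu)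
  | mul q i hq hi ih =>
    intro _
    obtain ⟨S', h1, h2, h3⟩ := ih hq
    have he : 1 ≤ i.totalDegree := by
      by_contra h
      exact hi.not_isUnit (unit_of_deg0 i hi.ne_zero (by omega))
    rw [totalDegree_mul_of_isDomain hi.ne_zero hq, mul_add]
    by_cases hl : ∃ τ a, τ ≠ 0 ∧ a ∈ S ∧ lin τ a ∣ i
    · obtain ⟨τ, a, hτ, haS, hd⟩ := hl
      refine ⟨S' ∪ S.filter fun x => eval x (lin τ a) = 0, Finset.union_subset h1 (Finset.filter_subset _ _), ?_, ?_⟩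
      · intro x hxS hx τ' a' hτ' hx0 hd'
        rw [Finset.mem_union, not_or, Finset.mem_filter, not_and] at hx
        rcases (lin_irred τ' a' hτ').prime.dvd_or_dvd hd' with h | h
        · have e1 : Associated (lin τ' a') i := (lin_irred τ' a' hτ').associated_of_dvd hi h
          have e2 : Associated (lin τ a) i := (lin_irred τ a hτ).associated_of_dvd hi hd
          obtain ⟨g, hg⟩ := (e1.trans e2.symm).dvd
          apply hx.2 hxS
          rw [hg, map_mul, hx0, zero_mul]
        · exact h2 x hxS hx.1 τ' a' hτ' hx0 h
      · refine (Finset.card_union_le _ _).trans ?_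
        have := hline τ hτ a haS
        nlinarith
    · refine ⟨S', h1, ?_, by nlinarith [Nat.zero_le (M * i.totalDegree)]⟩
      intro x hxS hx τ' a' hτ' hx0 hd'
      rcases (lin_irred τ' a' hτ').prime.dvd_or_dvd hd' with h | h
      · apply hl
        refine ⟨τ', x, hτ', hxS, ?_⟩
        have : lin τ' x = lin τ' a' := by
          rw [lin_eval] at hx0
          unfold lin
          have hc := congrArg (C : ℝ → MP2) hx0
          simp only [map_sub, map_mul, map_zero] at hc
          linear_combination (-1) * hc
        rw [this]; exact h
      · exact h2 x hxS hx τ' a' hτ' hx0 h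
end part2x

section part3x
section oneD
open Polynomial

lemma coeff_prod_top {ι : Type*} (s : Finset ι) (f : ι → ℝ[X]) (d : ι → ℕ)
    (h : ∀ i ∈ s, (f i).natDegree ≤ d i) :
    (∏ i ∈ s, f i).natDegree ≤ ∑ i ∈ s, d i ∧ (∏ i ∈ s, f i).coeff (∑ i ∈ s, d i) = ∏ i ∈ s, (f i).coeff (d i) := by
  classical
  induction s using Finset.induction_on with
  | empty => simp
  | insert a s ha ih =>
    have h1 := ih (fun i hi => h i (Finset.mem_insert_of_mem hi))
    have h2 := h a (Finset.mem_insert_self _ _)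
    rw [Finset.prod_insert ha, Finset.sum_insert ha, Finset.prod_insert ha]
    refine ⟨(natDegree_mul_le).trans (add_le_add h2 h1.1), ?_⟩
    rw [coeff_mul_add_eq_of_natDegree_le h2 h1.1, h1.2]

noncomputable def mat1 {N : ℕ} (Q : Fin N → ℝ[X]) (e : Fin N → ℕ) (ζ : ℝ) : Matrix (Fin N) (Fin N) ℝ[X] :=
  Matrix.of fun i l => (Q l).comp (X + C ((i:ℕ):ℝ)) * C ((ζ ^ e l) ^ (i:ℕ))

lemma mat1_entry {N : ℕ} (Q : Fin N → ℝ[X]) (e : Fin N → ℕ) (ζ : ℝ) (i l : Fin N) :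
    (mat1 Q e ζ i l).natDegree ≤ (Q l).natDegree ∧
    (mat1 Q e ζ i l).coeff (Q l).natDegree = (Q l).leadingCoeff * (ζ ^ e l) ^ (i:ℕ) := by
  constructor
  · unfold mat1
    rw [Matrix.of_apply]
    refine (natDegree_mul_C_le _ _).trans ?_
    rw [natDegree_comp, natDegree_X_add_C, mul_one]
  · unfold mat1
    rw [Matrix.of_apply, coeff_mul_C]
    congr 1
    have h := coeff_comp_degree_mul_degree (p := Q l) (q := X + C ((i:ℕ):ℝ)) (by rw [natDegree_X_add_C]; norm_num)
    rw [natDegree_X_add_C, mul_one, (monic_X_add_C _).leadingCoeff, one_pow, mul_one] at h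
    exact h

lemma mat1_det {N : ℕ} (Q : Fin N → ℝ[X]) (hQ : ∀ l, Q l ≠ 0) (e : Fin N → ℕ) (he : Function.Injective e)
    (ζ : ℝ) (h0 : 0 < ζ) (h1 : ζ ≠ 1) : (mat1 Q e ζ).det ≠ 0 := by
  intro hdet
  have hc : (mat1 Q e ζ).det.coeff (∑ l, (Q l).natDegree) =
      (∏ l, (Q l).leadingCoeff) * (Matrix.vandermonde fun l => ζ ^ e l).det := by
    rw [← Matrix.det_transpose (Matrix.vandermonde _), Matrix.det_apply, Matrix.det_apply, finsetSum_coeff, Finset.mul_sum]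
    apply Finset.sum_congr rfl
    intro σ _
    rw [coeff_smul, (coeff_prod_top Finset.univ (fun l => mat1 Q e ζ (σ l) l) (fun l => (Q l).natDegree)
      (fun l _ => (mat1_entry Q e ζ (σ l) l).1)).2, mul_smul_comm]
    congr 1
    rw [← Finset.prod_mul_distrib]
    apply Finset.prod_congr rfl
    intro l _
    rw [(mat1_entry Q e ζ (σ l) l).2]
    simp [Matrix.vandermonde_apply]
  rw [hdet, coeff_zero] at hc
  have : (Matrix.vandermonde fun l => ζ ^ e l).det ≠ 0 := by
    rw [Matrix.det_vandermonde_ne_zero_iff]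
    exact (pow_right_injective₀ h0 h1).comp he
  rcases mul_eq_zero.mp hc.symm with h | h
  · obtain ⟨l, _, hl⟩ := Finset.prod_eq_zero_iff.mp h
    exact hQ l (leadingCoeff_eq_zero.mp hl)
  · exact this h

lemma mat1_natDegree {N : ℕ} (Q : Fin N → ℝ[X]) (e : Fin N → ℕ) (ζ : ℝ) (K : ℕ) (hK : ∀ l, (Q l).natDegree ≤ K) :
    (mat1 Q e ζ).det.natDegree ≤ N * K := by
  rw [Matrix.det_apply]
  refine natDegree_sum_le_of_forall_le _ _ fun σ _ => ?_
  refine (natDegree_smul_le _ _).trans ?_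
  refine (coeff_prod_top Finset.univ (fun l => mat1 Q e ζ (σ l) l) (fun l => K)
      (fun l _ => (mat1_entry Q e ζ (σ l) l).1.trans (hK l))).1.trans ?_
  simp

lemma oneD {M : ℕ} (Q : Fin M → ℝ[X]) (hQ : ∃ l, Q l ≠ 0) (K : ℕ) (hK : ∀ l, (Q l).natDegree ≤ K)
    (ζ : ℝ) (h0 : 0 < ζ) (h1 : ζ ≠ 1) (U : Finset ℝ)
    (hU : ∀ u ∈ U, ∃ Z : ℝ, Z ≠ 0 ∧ ∀ i < M, ∑ l, (Q l).eval (u + i) * (ζ ^ i * Z) ^ (l:ℕ) = 0) :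
    U.card ≤ M * K := by
  classical
  set s := Finset.univ.filter fun l => Q l ≠ 0 with hs
  set N := s.card with hN
  have hNM : N ≤ M := (Finset.card_le_univ s).trans (by simp)
  have hNpos : 0 < N := by
    obtain ⟨l, hl⟩ := hQ
    exact Finset.card_pos.mpr ⟨l, by simp [hs, hl]⟩
  let em : Fin N → Fin M := s.orderEmbOfFin rfl
  have hem : Function.Injective em := (s.orderEmbOfFin rfl).injective
  have hems : ∀ j, em j ∈ s := fun j => s.orderEmbOfFin_mem rfl j
  set D := (mat1 (fun j => Q (em j)) (fun j => (em j : ℕ)) ζ).det with hD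
  have hDne : D ≠ 0 := mat1_det _ (fun j => (Finset.mem_filter.mp (hems j)).2) _ (Fin.val_injective.comp hem) ζ h0 h1
  have hDdeg : D.natDegree ≤ N * K := mat1_natDegree _ _ ζ K (fun j => hK _)
  have hroot : ∀ u ∈ U, D.IsRoot u := by
    intro u hu
    obtain ⟨Z, hZ, hz⟩ := hU u hu
    rw [IsRoot.def, hD]
    have e1 : eval u (mat1 (fun j => Q (em j)) (fun j => (em j : ℕ)) ζ).det =
      ((evalRingHom u).mapMatrix (mat1 (fun j => Q (em j)) (fun j => (em j : ℕ)) ζ)).det := by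
      rw [← RingHom.map_det]; rfl
    rw [e1]
    by_contra hne
    have := Matrix.eq_zero_of_mulVec_eq_zero hne (v := fun j => Z ^ (em j : ℕ)) (by
      ext i
      have hzi := hz i (i.2.trans_le hNM)
      rw [← Finset.sum_subset (Finset.subset_univ s)] at hzi
      · have e2 : s = Finset.univ.image em := by
          ext x
          have := s.range_orderEmbOfFin rfl
          rw [Finset.mem_image, ← Finset.mem_coe, ← this, Set.mem_range]
          constructor
          · rintro ⟨y, hy⟩; exact ⟨y, Finset.mem_univ _, hy⟩
          · rintro ⟨y, _, hy⟩; exact ⟨y, hy⟩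
        rw [e2, Finset.sum_image (fun a _ b _ h => hem h)] at hzi
        rw [Matrix.mulVec, dotProduct]
        simp only [Pi.zero_apply]
        rw [← hzi]
        apply Finset.sum_congr rfl
        intro j _
        simp [mat1]
        ring
      · intro l _ hl
        simp [hs] at hl
        simp [hl])
    have := congrFun this ⟨0, hNpos⟩
    simp at this
    exact hZ this.1
  have : U.card ≤ D.natDegree := by
    calc U.card ≤ D.roots.toFinset.card := Finset.card_le_card fun u hu => by
          rw [Multiset.mem_toFinset, mem_roots hDne]; exact hroot u hu
      _ ≤ D.roots.card := Multiset.toFinset_card_le _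
      _ ≤ D.natDegree := card_roots' _
  exact this.trans (hDdeg.trans (Nat.mul_le_mul_right _ hNM))
end oneD

section twoD
open MvPolynomial

def e0 (t : ℝ) : Fin 2 → ℝ := ![t, 0]

lemma twoD {M : ℕ} (P : Fin M → MP2) (hP : ∃ l, P l ≠ 0) (K : ℕ) (hK : ∀ l, (P l).totalDegree ≤ K)
    (ζ : ℝ) (h0 : 0 < ζ) (h1 : ζ ≠ 1) :
    ∃ Δ : MP2, Δ ≠ 0 ∧ Δ.totalDegree ≤ M * K ∧ ∀ (x : Fin 2 → ℝ) (Z : ℝ), Z ≠ 0 →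
      (∀ i < M, ∑ l, eval (x + e0 i) (P l) * (ζ ^ i * Z) ^ (l:ℕ) = 0) → eval x Δ = 0 := by
  classical
  set s := Finset.univ.filter fun l => P l ≠ 0 with hs
  set N := s.card with hN
  have hNM : N ≤ M := (Finset.card_le_univ s).trans (by simp)
  have hNpos : 0 < N := by
    obtain ⟨l, hl⟩ := hP
    exact Finset.card_pos.mpr ⟨l, by simp [hs, hl]⟩
  let em : Fin N → Fin M := s.orderEmbOfFin rfl
  have hem : Function.Injective em := (s.orderEmbOfFin rfl).injective
  have hems : ∀ j, em j ∈ s := fun j => s.orderEmbOfFin_mem rfl j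
  let A : Matrix (Fin N) (Fin N) MP2 := Matrix.of fun i l => sh (e0 (i:ℕ)) (P (em l)) * C ((ζ ^ (em l : ℕ)) ^ (i:ℕ))
  refine ⟨A.det, ?_, ?_, ?_⟩
  · intro hdet
    have hprod : ∏ j, P (em j) ≠ 0 := Finset.prod_ne_zero_iff.mpr fun j _ => (Finset.mem_filter.mp (hems j)).2
    obtain ⟨x, hx⟩ : ∃ x, eval x (∏ j, P (em j)) ≠ 0 := by
      by_contra hcon
      push Not at hcon
      exact hprod (MvPolynomial.funext fun x => by rw [hcon x, map_zero])
    let φ : MP2 →ₐ[ℝ] Polynomial ℝ := aeval ![Polynomial.X, Polynomial.C (x 1)]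
    have hφe : ∀ (p : MP2) (u : ℝ), Polynomial.eval u (φ p) = eval ![u, x 1] p := by
      intro p u
      have : (Polynomial.aeval u).comp φ = MvPolynomial.aeval ![u, x 1] := by
        apply MvPolynomial.algHom_ext
        intro i
        fin_cases i <;> simp [φ]
      have h := congrArg (fun f => f p) this
      simpa [MvPolynomial.aeval_eq_eval, Polynomial.aeval_def] using h
    have hdet1 : (mat1 (fun j => φ (P (em j))) (fun j => (em j : ℕ)) ζ).det ≠ 0 := by
      apply mat1_det _ _ _ (Fin.val_injective.comp hem) ζ h0 h1
      intro j hj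
      rw [map_prod] at hx
      apply Finset.prod_ne_zero_iff.mp hx j (Finset.mem_univ _)
      have := hφe (P (em j)) (x 0)
      rw [hj] at this
      rw [show x = ![x 0, x 1] from by ext i; fin_cases i <;> rfl]
      simpa using this.symm
    apply hdet1
    have : mat1 (fun j => φ (P (em j))) (fun j => (em j : ℕ)) ζ = φ.toRingHom.mapMatrix A := by
      ext1 i l
      apply Polynomial.funext
      intro u
      have h3 : eval ![u, x 1] (A i l) = Polynomial.eval u (φ (A i l)) := (hφe _ _).symm
      simp only [RingHom.mapMatrix_apply, Matrix.map_apply, AlgHom.toRingHom_eq_coe, RingHom.coe_coe]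
      rw [← h3]
      simp only [mat1, A, Matrix.of_apply, map_mul, Polynomial.eval_mul, Polynomial.eval_C, MvPolynomial.eval_C,
        Polynomial.eval_comp, Polynomial.eval_add, Polynomial.eval_X, hφe, sh_eval]
      congr 3
      ext k; fin_cases k <;> simp [e0]
    rw [this, ← RingHom.map_det, hdet, map_zero]
  · rw [Matrix.det_apply]
    refine totalDegree_finsetSum_le fun σ _ => ?_
    have : (Equiv.Perm.sign σ • ∏ i, A (σ i) i).totalDegree = (∏ i, A (σ i) i).totalDegree := by
      rcases Int.units_eq_one_or (Equiv.Perm.sign σ) with h | h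
      · rw [h, one_smul]
      · rw [h, Units.neg_smul, one_smul, totalDegree_neg]
    rw [this]
    refine (totalDegree_finsetProd _ _).trans ?_
    refine (Finset.sum_le_card_nsmul _ _ K fun j _ => ?_).trans ?_
    · refine (totalDegree_mul _ _).trans ?_
      rw [totalDegree_C, add_zero]
      exact (sh_deg _ _).trans (hK _)
    · simp; exact Nat.mul_le_mul_right _ hNM
  · intro x Z hZ hz
    have e1 : eval x A.det = ((eval x).mapMatrix A).det := by
      rw [← RingHom.map_det]
    rw [e1]
    by_contra hne
    have := Matrix.eq_zero_of_mulVec_eq_zero hne (v := fun j => Z ^ (em j : ℕ)) (by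
      ext i
      have hzi := hz i (i.2.trans_le hNM)
      rw [← Finset.sum_subset (Finset.subset_univ s)] at hzi
      · have e2 : s = Finset.univ.image em := by
          ext x
          have := s.range_orderEmbOfFin rfl
          rw [Finset.mem_image, ← Finset.mem_coe, ← this, Set.mem_range]
          constructor
          · rintro ⟨y, hy⟩; exact ⟨y, Finset.mem_univ _, hy⟩
          · rintro ⟨y, _, hy⟩; exact ⟨y, hy⟩
        rw [e2, Finset.sum_image (fun a _ b _ h => hem h)] at hzi
        rw [Matrix.mulVec, dotProduct]
        simp only [Pi.zero_apply]
        rw [← hzi]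
        apply Finset.sum_congr rfl
        intro j _
        simp [A, sh_eval]
        ring
      · intro l _ hl
        simp [hs] at hl
        simp [hl])
    have := congrFun this ⟨0, hNpos⟩
    simp at this
    exact hZ this.1
end twoD
end part3x

section part4x
open MvPolynomial

def pt (n m : ℤ) (x : ℤ × ℤ × ℤ) : Fin 2 → ℝ := ![(x.1 : ℝ) + x.2.2 * n, (x.2.1 : ℝ) - x.2.2 * m]

noncomputable def Box (R S T : ℕ) : Finset (ℤ × ℤ × ℤ) :=
  Finset.Icc (-(R:ℤ)) R ×ˢ (Finset.Icc (-(S:ℤ)) S ×ˢ Finset.Icc (-(T:ℤ)) T)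

lemma mem_Box {R S T : ℕ} {x : ℤ × ℤ × ℤ} : x ∈ Box R S T ↔ |x.1| ≤ R ∧ |x.2.1| ≤ S ∧ |x.2.2| ≤ T := by
  simp [Box, abs_le]

lemma card_Box (R S T : ℕ) : (Box R S T).card = (2*R+1)*((2*S+1)*(2*T+1)) := by
  simp only [Box, Finset.card_product, Int.card_Icc]
  congr 1
  · omega
  · congr 1 <;> omega

lemma fibre (n m : ℤ) (R S T Rm P0 : ℕ) (hP0 : 0 < P0) (hR : R ≤ Rm) (hS : S ≤ Rm)
    (τ a : Fin 2 → ℝ) (hτ : τ ≠ 0) (Y : Finset (ℤ × ℤ × ℤ)) (hY : Y ⊆ Box R S T)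
    (hl : ∀ y ∈ Y, eval (pt n m y) (lin τ a) = 0) :
    Y.card ≤ (2*T+1) * (2*Rm/P0+1) ∨ ∃ p q : ℤ, (p ≠ 0 ∨ q ≠ 0) ∧ |p| < P0 ∧ |q| < P0 ∧ τ 1 * p = τ 0 * q := by
  classical
  by_cases hcard : Y.card ≤ (2*T+1) * (2*Rm/P0+1)
  · exact Or.inl hcard
  right
  push Not at hcard
  have key : ∀ f : ℤ × ℤ × ℤ → ℤ, (∀ y ∈ Y, |f y| ≤ Rm) →
      ∃ y ∈ Y, ∃ y' ∈ Y, y ≠ y' ∧ y.2.2 = y'.2.2 ∧ |f y' - f y| < P0 := by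
    intro f hf
    have hcard2 : (Finset.Icc (-(T:ℤ)) T ×ˢ Finset.Icc (0:ℤ) ((2*Rm/P0 : ℕ) : ℤ)).card < Y.card := by
      rw [Finset.card_product, Int.card_Icc, Int.card_Icc]
      have a1 : ((T:ℤ) + 1 - -(T:ℤ)).toNat = 2*T+1 := by omega
      have a2 : (((2*Rm/P0 : ℕ) : ℤ) + 1 - 0).toNat = 2*Rm/P0+1 := by
        generalize 2*Rm/P0 = z
        omega
      rw [a1, a2]
      exact hcard
    obtain ⟨y, hy, y', hy', hne, heq⟩ := Finset.exists_ne_map_eq_of_card_lt_of_maps_to (s := Y)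
      (t := Finset.Icc (-(T:ℤ)) T ×ˢ Finset.Icc (0:ℤ) ((2*Rm/P0 : ℕ) : ℤ)) hcard2
      (f := fun y => (y.2.2, (f y + Rm) / P0)) (by
        intro y hy
        have hb := mem_Box.mp (hY hy)
        have h1 := abs_le.mp (hf y hy)
        have hP : (0:ℤ) < P0 := by exact_mod_cast hP0
        simp only [Finset.mem_coe, Finset.mem_product, Finset.mem_Icc]
        refine ⟨abs_le.mp hb.2.2, Int.ediv_nonneg (by linarith) hP.le, ?_⟩
        push_cast
        exact Int.ediv_le_ediv hP (by linarith))
    refine ⟨y, hy, y', hy', hne, (Prod.ext_iff.mp heq).1, ?_⟩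
    have h2 := (Prod.ext_iff.mp heq).2
    simp only at h2
    have hP : (0:ℤ) < P0 := by exact_mod_cast hP0
    have e1 := Int.mul_ediv_add_emod (f y + Rm) P0
    have e2 := Int.mul_ediv_add_emod (f y' + Rm) P0
    have b1 := Int.emod_nonneg (f y + Rm) hP.ne'
    have b2 := Int.emod_nonneg (f y' + Rm) hP.ne'
    have c1 := Int.emod_lt_of_pos (f y + Rm) hP
    have c2 := Int.emod_lt_of_pos (f y' + Rm) hP
    rw [h2] at e1
    rw [abs_lt]
    constructor <;> linarith
  have hdiff : ∀ y ∈ Y, ∀ y' ∈ Y, y.2.2 = y'.2.2 → τ 1 * ((y'.1 - y.1 : ℤ) : ℝ) = τ 0 * ((y'.2.1 - y.2.1 : ℤ) : ℝ) := by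
    intro y hy y' hy' h
    have h1 := hl y hy
    have h2 := hl y' hy'
    rw [lin_eval] at h1 h2
    simp only [pt, Matrix.cons_val_zero, Matrix.cons_val_one] at h1 h2
    rw [← h] at h2
    push_cast
    linarith
  rcases le_total (|τ 1|) (|τ 0|) with hab | hab
  · have h0 : τ 0 ≠ 0 := by
      intro h
      rw [h, abs_zero] at hab
      apply hτ
      ext i; fin_cases i
      · exact h
      · simpa using hab
    obtain ⟨y, hy, y', hy', hne, ht, hlt⟩ := key (fun y => y.1) (fun y hy => by
      have := (mem_Box.mp (hY hy)).1
      have h' : (R:ℤ) ≤ Rm := by exact_mod_cast hR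
      linarith)
    have hd := hdiff y hy y' hy' ht
    have hle : |y'.2.1 - y.2.1| ≤ |y'.1 - y.1| := by
      have : |τ 0| * |((y'.2.1 - y.2.1 : ℤ) : ℝ)| ≤ |τ 0| * |((y'.1 - y.1 : ℤ) : ℝ)| := by
        rw [← abs_mul, ← hd, abs_mul]
        exact mul_le_mul_of_nonneg_right hab (abs_nonneg _)
      have := le_of_mul_le_mul_left this (abs_pos.mpr h0)
      exact_mod_cast this
    refine ⟨y'.1 - y.1, y'.2.1 - y.2.1, ?_, hlt, hle.trans_lt hlt, hd⟩
    by_contra hcon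
    push Not at hcon
    apply hne
    refine Prod.ext ?_ (Prod.ext ?_ ht)
    · linarith [hcon.1]
    · linarith [hcon.2]
  · have h0 : τ 1 ≠ 0 := by
      intro h
      rw [h, abs_zero] at hab
      apply hτ
      ext i; fin_cases i
      · simpa using hab
      · exact h
    obtain ⟨y, hy, y', hy', hne, ht, hlt⟩ := key (fun y => y.2.1) (fun y hy => by
      have := (mem_Box.mp (hY hy)).2.1
      have h' : (S:ℤ) ≤ Rm := by exact_mod_cast hS
      linarith)
    have hd := hdiff y hy y' hy' ht
    have hle : |y'.1 - y.1| ≤ |y'.2.1 - y.2.1| := by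
      have : |τ 1| * |((y'.1 - y.1 : ℤ) : ℝ)| ≤ |τ 1| * |((y'.2.1 - y.2.1 : ℤ) : ℝ)| := by
        rw [← abs_mul, hd, abs_mul]
        exact mul_le_mul_of_nonneg_right hab (abs_nonneg _)
      have := le_of_mul_le_mul_left this (abs_pos.mpr h0)
      exact_mod_cast this
    refine ⟨y'.1 - y.1, y'.2.1 - y.2.1, ?_, hle.trans_lt hlt, hlt, hd⟩
    by_contra hcon
    push Not at hcon
    apply hne
    refine Prod.ext ?_ (Prod.ext ?_ ht)
    · linarith [hcon.1]
    · linarith [hcon.2]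

lemma par (τ a x : Fin 2 → ℝ) (p q : ℤ) (hτ : τ ≠ 0) (hpq : p ≠ 0 ∨ q ≠ 0) (h : τ 1 * p = τ 0 * q)
    (hx : eval x (lin τ a) = 0) : (q:ℝ) * (x 0 - a 0) = p * (x 1 - a 1) := by
  rw [lin_eval] at hx
  by_cases h0 : τ 0 = 0
  · have h1 : τ 1 ≠ 0 := by
      intro h1; apply hτ; ext i; fin_cases i
      · exact h0
      · exact h1
    rw [h0] at h hx
    have hp : (p:ℝ) = 0 := by
      rcases mul_eq_zero.mp (h.trans (zero_mul _)) with h' | h'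
      · exact absurd h' h1
      · exact h'
    have hx' : x 0 - a 0 = 0 := by
      have : τ 1 * (x 0 - a 0) = 0 := by linarith
      rcases mul_eq_zero.mp this with h' | h'
      · exact absurd h' h1
      · exact h'
    rw [hp, hx']; ring
  · have : τ 0 * ((q:ℝ) * (x 0 - a 0)) = τ 0 * (p * (x 1 - a 1)) := by
      rw [← mul_assoc, ← h]
      linear_combination (p:ℝ) * hx
    exact mul_left_cancel₀ h0 this

lemma line_bound (n m : ℤ) (R S T Rm P0 : ℕ) (hP0 : 0 < P0) (hR : R ≤ Rm) (hS : S ≤ Rm) (hT : P0 ≤ 2*T+1)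
    (hδ : ∀ p q : ℤ, (p ≠ 0 ∨ q ≠ 0) → |p| < P0 → |q| < P0 → 4 * (P0:ℤ) * Rm < |q * n + p * m|)
    (τ a : Fin 2 → ℝ) (hτ : τ ≠ 0) (Y : Finset (ℤ × ℤ × ℤ)) (hY : Y ⊆ Box R S T)
    (hl : ∀ y ∈ Y, eval (pt n m y) (lin τ a) = 0) :
    Y.card ≤ (2*T+1) * (2*Rm/P0+1) := by
  classical
  rcases fibre n m R S T Rm P0 hP0 hR hS τ a hτ Y hY hl with h | ⟨p, q, hpq, hp, hq, hr⟩
  · exact h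
  have hsame : ∀ y ∈ Y, ∀ y' ∈ Y, q * (y'.1 - y.1) = p * (y'.2.1 - y.2.1) ∧ y.2.2 = y'.2.2 := by
    intro y hy y' hy'
    have h1 := par τ a _ p q hτ hpq hr (hl y hy)
    have h2 := par τ a _ p q hτ hpq hr (hl y' hy')
    simp only [pt, Matrix.cons_val_zero, Matrix.cons_val_one] at h1 h2
    have h3 : (q:ℝ) * (y'.1 - y.1) + (y'.2.2 - y.2.2) * (q * n + p * m) = p * (y'.2.1 - y.2.1) := by
      linarith
    have h4 : q * (y'.1 - y.1) + (y'.2.2 - y.2.2) * (q * n + p * m) = p * (y'.2.1 - y.2.1) := by exact_mod_cast h3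
    have ht : y'.2.2 - y.2.2 = 0 := by
      by_contra hne
      have hb := mem_Box.mp (hY hy)
      have hb' := mem_Box.mp (hY hy')
      have hR' : (R:ℤ) ≤ Rm := by exact_mod_cast hR
      have hS' : (S:ℤ) ≤ Rm := by exact_mod_cast hS
      have i1 : |y'.1 - y.1| ≤ 2*Rm := (abs_sub _ _).trans (by linarith [hb.1, hb'.1])
      have i2 : |y'.2.1 - y.2.1| ≤ 2*Rm := (abs_sub _ _).trans (by linarith [hb.2.1, hb'.2.1])
      have e : (y'.2.2 - y.2.2) * (q * n + p * m) = p * (y'.2.1 - y.2.1) - q * (y'.1 - y.1) := by linarith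
      have e2 : |q * n + p * m| ≤ |(y'.2.2 - y.2.2) * (q * n + p * m)| := by
        rw [abs_mul]
        exact le_mul_of_one_le_left (abs_nonneg _) (Int.one_le_abs hne)
      have e3 : |p * (y'.2.1 - y.2.1) - q * (y'.1 - y.1)| ≤ P0 * (2*Rm) + P0 * (2*Rm) := by
        refine (abs_sub _ _).trans ?_
        rw [abs_mul, abs_mul]
        exact add_le_add (mul_le_mul hp.le i2 (abs_nonneg _) (by positivity)) (mul_le_mul hq.le i1 (abs_nonneg _) (by positivity))
      have := hδ p q hpq hp hq
      rw [e] at e2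
      linarith
    rw [ht, zero_mul, add_zero] at h4
    exact ⟨h4, by linarith⟩
  have hcard : Y.card ≤ 2 * Rm + 1 := by
    have : (Finset.Icc (-(Rm:ℤ)) Rm).card = 2 * Rm + 1 := by rw [Int.card_Icc]; omega
    rw [← this]
    by_cases hp0 : p = 0
    · have hq0 : q ≠ 0 := hpq.resolve_left (fun h => h hp0)
      apply Finset.card_le_card_of_injOn (fun y => y.2.1)
      · intro y hy
        have hb := (mem_Box.mp (hY hy)).2.1
        have hS' : (S:ℤ) ≤ Rm := by exact_mod_cast hS
        simp only [Finset.coe_Icc, Set.mem_Icc]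
        exact abs_le.mp (hb.trans hS')
      · intro y hy y' hy' h
        obtain ⟨h1, h2⟩ := hsame y hy y' hy'
        rw [hp0, zero_mul] at h1
        have := (mul_eq_zero.mp h1).resolve_left hq0
        exact Prod.ext (by linarith) (Prod.ext h h2)
    · apply Finset.card_le_card_of_injOn (fun y => y.1)
      · intro y hy
        have hb := (mem_Box.mp (hY hy)).1
        have hR' : (R:ℤ) ≤ Rm := by exact_mod_cast hR
        simp only [Finset.coe_Icc, Set.mem_Icc]
        exact abs_le.mp (hb.trans hR')
      · intro y hy y' hy' h
        obtain ⟨h1, h2⟩ := hsame y hy y' hy'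
        simp only at h
        rw [h, sub_self, mul_zero] at h1
        have := (mul_eq_zero.mp h1.symm).resolve_left hp0
        exact Prod.ext h (Prod.ext (by linarith) h2)
  have h5 : 2 * Rm + 1 ≤ P0 * (2*Rm/P0+1) := by
    have := Nat.lt_mul_div_succ (2*Rm) hP0
    omega
  exact hcard.trans (h5.trans (Nat.mul_le_mul_right _ hT))

noncomputable def Zf (α γ η : ℝ) (x : ℤ × ℤ × ℤ) : ℝ := α ^ x.1 * γ ^ x.2.1 * η ^ x.2.2

lemma pt_inj (n m : ℤ) (R S T : ℕ) (hn : 2 * (R:ℤ) < n) : Set.InjOn (pt n m) (Box R S T : Set (ℤ × ℤ × ℤ)) := by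
  intro x hx y hy h
  have hx' := mem_Box.mp (Finset.mem_coe.mp hx)
  have hy' := mem_Box.mp (Finset.mem_coe.mp hy)
  have h0 := congrFun h 0
  have h1 := congrFun h 1
  simp only [pt, Matrix.cons_val_zero, Matrix.cons_val_one] at h0 h1
  have h0' : x.1 + x.2.2 * n = y.1 + y.2.2 * n := by exact_mod_cast h0
  have h1' : x.2.1 - x.2.2 * m = y.2.1 - y.2.2 * m := by exact_mod_cast h1
  have ht : x.2.2 - y.2.2 = 0 := by
    by_contra hne
    have e : (x.2.2 - y.2.2) * n = y.1 - x.1 := by linarith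
    have h2 : |y.1 - x.1| ≤ 2 * R := (abs_sub _ _).trans (by linarith [hx'.1, hy'.1])
    rw [← e, abs_mul] at h2
    have h3 := Int.one_le_abs hne
    have h4 := le_abs_self n
    nlinarith [abs_nonneg n]
  have ht' : x.2.2 = y.2.2 := by linarith
  rw [ht'] at h0' h1'
  exact Prod.ext (by linarith) (Prod.ext (by linarith) ht')

theorem zero_estimate (n m : ℤ) (α γ η : ℝ) (hα : 0 < α) (hγ : 0 < γ) (hη : 0 < η)
    (hind : ∀ p q : ℤ, α ^ p * γ ^ q = 1 → p = 0 ∧ q = 0)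
    (M K R S T Rm P0 P2 c Cc : ℕ) (hP0 : 0 < P0) (hP2 : 0 < P2) (hR : R ≤ Rm) (hS : S ≤ Rm) (hT : P0 ≤ 2*T+1)
    (hn : 2 * (R:ℤ) < n)
    (hδ : ∀ p q : ℤ, (p ≠ 0 ∨ q ≠ 0) → |p| < P0 → |q| < P0 → 4 * (P0:ℤ) * Rm < |q * n + p * m|)
    (hc : (4*R+1)*((4*S+1)*(4*T+1)) ≤ c^2) (hcC : c + 1 ≤ Cc) (hC1 : (2*T+1) * (2*Rm/P2+1) ≤ Cc) (hC2 : M * K ≤ Cc)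
    (hB : Cc * (M * K) + (2*T+1) * (2*Rm/P0+1) * K < (2*R+1)*((2*S+1)*(2*T+1)))
    (P : Fin M → MP2) (hP : ∃ l, P l ≠ 0) (hK : ∀ l, (P l).totalDegree ≤ K)
    (hvan : ∀ x ∈ Box (R + M * P2) (S + M * P2) T, ∑ l, eval (pt n m x) (P l) * (Zf α γ η x) ^ (l:ℕ) = 0) : False := by
  classical
  have hα1 : α ≠ 1 := by
    intro h
    have := hind 1 0 (by simp [h])
    simp at this
  have hshift : ∀ x ∈ Box R S T, ∀ p q : ℤ, |p| ≤ P2 → |q| ≤ P2 → ∀ i : ℕ, i < M →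
      ∑ l, eval (pt n m x + (i:ℝ) • ![(p:ℝ), (q:ℝ)]) (P l) * ((α ^ p * γ ^ q) ^ i * Zf α γ η x) ^ (l:ℕ) = 0 := by
    intro x hx p q hp hq i hi
    have hb := mem_Box.mp hx
    have hmem : (x.1 + i * p, x.2.1 + i * q, x.2.2) ∈ Box (R + M * P2) (S + M * P2) T := by
      have hi' : (i:ℤ) ≤ M := by exact_mod_cast hi.le
      have hle : ∀ z : ℤ, |z| ≤ P2 → |(i:ℤ) * z| ≤ M * P2 := by
        intro z hz
        rw [abs_mul, Nat.abs_cast]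
        exact mul_le_mul hi' hz (abs_nonneg _) (by positivity)
      rw [mem_Box]
      refine ⟨?_, ?_, hb.2.2⟩
      · refine (abs_add_le _ _).trans ?_
        push_cast
        exact add_le_add hb.1 (hle p hp)
      · refine (abs_add_le _ _).trans ?_
        push_cast
        exact add_le_add hb.2.1 (hle q hq)
    have h := hvan _ hmem
    have e1 : pt n m (x.1 + i * p, x.2.1 + i * q, x.2.2) = pt n m x + (i:ℝ) • ![(p:ℝ), (q:ℝ)] := by
      ext k; fin_cases k <;> simp [pt] <;> ring
    have e2 : Zf α γ η (x.1 + i * p, x.2.1 + i * q, x.2.2) = (α ^ p * γ ^ q) ^ i * Zf α γ η x := by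
      simp only [Zf]
      rw [zpow_add₀ hα.ne', zpow_add₀ hγ.ne', mul_comm (i:ℤ) p, mul_comm (i:ℤ) q, zpow_mul, zpow_mul, zpow_natCast, zpow_natCast, mul_pow]
      ring
    rw [e1, e2] at h
    exact h
  have hZne : ∀ x, Zf α γ η x ≠ 0 := by
    intro x; unfold Zf; positivity
  obtain ⟨Δ, hΔ0, hΔd, hΔ⟩ := twoD P hP K hK α hα hα1
  obtain ⟨l0, hl0⟩ := hP
  set Sg := (Box R S T).image (pt n m) with hSg
  have hSgcard : Sg.card = (2*R+1)*((2*S+1)*(2*T+1)) := by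
    rw [hSg, Finset.card_image_of_injOn (pt_inj n m R S T hn), card_Box]
  have hpull : ∀ X : Finset (Fin 2 → ℝ), X ⊆ Sg → ∃ Y ⊆ Box R S T, (∀ y ∈ Y, pt n m y ∈ X) ∧ X.card ≤ Y.card := by
    intro X hX
    refine ⟨(Box R S T).filter fun y => pt n m y ∈ X, Finset.filter_subset _ _, fun y hy => (Finset.mem_filter.mp hy).2, ?_⟩
    have : X ⊆ ((Box R S T).filter fun y => pt n m y ∈ X).image (pt n m) := by
      intro x hx
      obtain ⟨y, hy, rfl⟩ := Finset.mem_image.mp (hX hx)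
      exact Finset.mem_image.mpr ⟨y, Finset.mem_filter.mpr ⟨hy, hx⟩, rfl⟩
    exact (Finset.card_le_card this).trans Finset.card_image_le
  obtain ⟨S', hS'sub, hS'1, hS'2⟩ := line_pts (P l0) hl0 Sg ((2*T+1) * (2*Rm/P0+1)) (by
    intro τ hτ a _
    obtain ⟨Y, hY, hY1, hY2⟩ := hpull (Sg.filter fun x => eval x (lin τ a) = 0) (Finset.filter_subset _ _)
    exact hY2.trans (line_bound n m R S T Rm P0 hP0 hR hS hT hδ τ a hτ Y hY fun y hy => (Finset.mem_filter.mp (hY1 y hy)).2))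
  set S2 := Sg \ S' with hS2
  have hcount := zero_count Δ hΔ0 S2 ((Box (2*R) (2*S) (2*T)).image (pt n m)) c Cc (by
      intro x hx y hy _
      obtain ⟨u, hu, rfl⟩ := Finset.mem_image.mp (Finset.mem_sdiff.mp hx).1
      obtain ⟨v, hv, rfl⟩ := Finset.mem_image.mp (Finset.mem_sdiff.mp hy).1
      have hu' := mem_Box.mp hu
      have hv' := mem_Box.mp hv
      refine Finset.mem_image.mpr ⟨v - u, ?_, ?_⟩
      · rw [mem_Box]
        push_cast
        refine ⟨(abs_sub _ _).trans ?_, (abs_sub _ _).trans ?_, (abs_sub _ _).trans ?_⟩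
        · linarith [hu'.1, hv'.1]
        · linarith [hu'.2.1, hv'.2.1]
        · linarith [hu'.2.2, hv'.2.2]
      · ext k; fin_cases k <;> simp [pt] <;> ring)
    (by
      refine Finset.card_image_le.trans ?_
      rw [card_Box]
      refine le_trans (le_of_eq ?_) hc
      ring) hcC (by
      intro τ _ hτ a ha
      by_contra hcon
      push Not at hcon
      have haSg := (Finset.mem_sdiff.mp ha)
      have hnd : ¬ lin τ a ∣ P l0 := hS'1 a haSg.1 haSg.2 τ a hτ (by rw [lin_eval]; ring)
      obtain ⟨Y, hY, hY1, hY2⟩ := hpull (S2.filter fun x => eval x (lin τ a) = 0)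
        ((Finset.filter_subset _ _).trans Finset.sdiff_subset)
      rcases fibre n m R S T Rm P2 hP2 hR hS τ a hτ Y hY (fun y hy => (Finset.mem_filter.mp (hY1 y hy)).2) with h | ⟨p, q, hpq, hp, hq, hr⟩
      · omega
      set v : Fin 2 → ℝ := ![(p:ℝ), (q:ℝ)] with hv
      have hv0 : v ≠ 0 := by
        intro h
        have h0 := congrFun h 0
        have h1 := congrFun h 1
        simp [hv] at h0 h1
        rcases hpq with h | h
        · exact h h0
        · exact h h1
      -- coordinate along the line
      have hcoord : ∀ x, eval x (lin τ a) = 0 → ∃ u : ℝ, x = a + u • v := by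
        intro x hx
        have h := par τ a x p q hτ hpq hr hx
        by_cases hp0 : p = 0
        · have hq0 : (q:ℝ) ≠ 0 := by
            have := hpq.resolve_left (fun h => h hp0)
            exact_mod_cast this
          rw [hp0] at h
          simp [hq0] at h
          refine ⟨(x 1 - a 1)/q, ?_⟩
          ext k; fin_cases k
          · simp [hv, hp0]; linarith
          · simp [hv]; field_simp; ring
        · have hp0' : (p:ℝ) ≠ 0 := by exact_mod_cast hp0
          refine ⟨(x 0 - a 0)/p, ?_⟩
          ext k; fin_cases k
          · simp [hv]; field_simp; ring
          · simp [hv]; field_simp; linarith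
      have hcoord' : ∀ x : Fin 2 → ℝ, ∃ u : ℝ, eval x (lin τ a) = 0 → x = a + u • v := by
        intro x
        by_cases hx : eval x (lin τ a) = 0
        · obtain ⟨u, hu⟩ := hcoord x hx
          exact ⟨u, fun _ => hu⟩
        · exact ⟨0, fun h => absurd h hx⟩
      choose g hg using hcoord'
      let φ : MP2 →ₐ[ℝ] Polynomial ℝ := aeval fun k => Polynomial.C (a k) + Polynomial.X * Polynomial.C (v k)
      have hφe : ∀ (f : MP2) (u : ℝ), Polynomial.eval u (φ f) = eval (a + u • v) f := by
        intro f u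
        have : (Polynomial.aeval u).comp φ = MvPolynomial.aeval (a + u • v) := by
          apply MvPolynomial.algHom_ext
          intro i
          simp [φ]
          exact mul_comm _ _
        have h : Polynomial.aeval u (φ f) = MvPolynomial.aeval (a + u • v) f := congrArg (fun F => F f) this
        rw [Polynomial.coe_aeval_eq_eval, MvPolynomial.aeval_eq_eval] at h
        exact h
      have h1 := oneD (fun l => φ (P l)) ⟨l0, by
          intro h0
          apply hnd
          have hd : lin v a ∣ P l0 := lin_dvd _ v a hv0 (fun k => by rw [← hφe, h0]; simp)
          have hass : lin τ a ∣ lin v a := by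
            apply lin_dvd _ τ a hτ
            intro k
            rw [lin_eval]
            simp [hv]
            linear_combination (-(k:ℝ)) * hr
          exact hass.trans hd⟩ K (by
            intro l
            have := MvPolynomial.aeval_natDegree_le (P l) (hK l) (fun k => Polynomial.C (a k) + Polynomial.X * Polynomial.C (v k)) (n := 1) (by
              intro i
              compute_degree)
            rw [mul_one] at this
            exact this)
        (α ^ p * γ ^ q) (by positivity) (by
          intro h
          have := hind p q h
          rcases hpq with h' | h'
          · exact h' this.1
          · exact h' this.2) ((S2.filter fun x => eval x (lin τ a) = 0).image g) (by
          intro u hu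
          obtain ⟨x, hx, rfl⟩ := Finset.mem_image.mp hu
          rw [Finset.mem_filter] at hx
          have hxe := hg x hx.2
          obtain ⟨y, hy, hyx⟩ := Finset.mem_image.mp (Finset.mem_sdiff.mp hx.1).1
          refine ⟨Zf α γ η y, hZne y, fun i hi => ?_⟩
          have := hshift y hy p q hp.le hq.le i hi
          rw [← this]
          apply Finset.sum_congr rfl
          intro l _
          rw [hφe]
          congr 3
          rw [hyx, add_smul, ← add_assoc, ← hxe])
      rw [Finset.card_image_of_injOn] at h1
      · omega
      · intro x hx y hy hxy
        simp only [Finset.coe_filter, Set.mem_ofPred_eq] at hx hy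
        rw [hg x hx.2, hg y hy.2, hxy])
  have hall : (S2.filter fun x => eval x Δ = 0) = S2 := by
    apply Finset.filter_true_of_mem
    intro x hx
    obtain ⟨y, hy, rfl⟩ := Finset.mem_image.mp (Finset.mem_sdiff.mp hx).1
    apply hΔ _ (Zf α γ η y) (hZne y)
    intro i hi
    have := hshift y hy 1 0 (by simp; omega) (by simp) i hi
    rw [← this]
    apply Finset.sum_congr rfl
    intro l _
    congr 3
    · congr 1
      ext k; fin_cases k <;> simp [e0]
    · simp
  rw [hall] at hcount
  have h5 : Sg.card - S'.card ≤ S2.card := by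
    rw [hS2]; exact Finset.le_card_sdiff _ _
  have h6 : S'.card ≤ (2*T+1) * (2*Rm/P0+1) * K := hS'2.trans (Nat.mul_le_mul_left _ (hK l0))
  have h7 : Cc * Δ.totalDegree ≤ Cc * (M * K) := Nat.mul_le_mul_left _ hΔd
  omega
end part4x

section part5x
lemma pigeon {ι κ : Type*} [Fintype ι] [Fintype κ] [DecidableEq ι] [DecidableEq κ] (A : κ → ι → ℝ) (X : ℕ) (N : κ → ℕ) (ε : κ → ℝ)
    (hε : ∀ k, 0 < ε k) (hA : ∀ k, (X:ℝ) * ∑ i, |A k i| < N k * ε k)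
    (hN : ∏ k, N k < (X + 1) ^ Fintype.card ι) :
    ∃ p : ι → ℤ, p ≠ 0 ∧ (∀ i, |p i| ≤ X) ∧ ∀ k, |∑ i, A k i * p i| ≤ ε k := by
  classical
  let off : κ → ℝ := fun k => (X:ℝ) * ∑ i, max (-A k i) 0
  let val : (ι → ℕ) → κ → ℝ := fun p k => ∑ i, A k i * p i + off k
  have hval : ∀ p ∈ Fintype.piFinset (fun _ : ι => Finset.range (X+1)), ∀ k, 0 ≤ val p k ∧ val p k < N k * ε k := by
    intro p hp k
    have hp' : ∀ i, (p i : ℝ) ≤ X := by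
      intro i
      have := Finset.mem_range.mp (Fintype.mem_piFinset.mp hp i)
      exact_mod_cast Nat.lt_succ_iff.mp this
    have e : val p k = ∑ i, (A k i * p i + X * max (-A k i) 0) := by
      simp only [val, off]
      rw [Finset.sum_add_distrib, Finset.mul_sum]
    rw [e]
    constructor
    · apply Finset.sum_nonneg
      intro i _
      have h0 : (0:ℝ) ≤ p i := by positivity
      rcases le_total 0 (A k i) with h | h
      · rw [max_eq_right (by linarith)]; nlinarith
      · rw [max_eq_left (by linarith)]; nlinarith [hp' i]
    · refine lt_of_le_of_lt ?_ (hA k)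
      rw [Finset.mul_sum]
      apply Finset.sum_le_sum
      intro i _
      have h0 : (0:ℝ) ≤ p i := by positivity
      rcases le_total 0 (A k i) with h | h
      · rw [max_eq_right (by linarith), abs_of_nonneg h]; nlinarith [hp' i]
      · rw [max_eq_left (by linarith), abs_of_nonpos h]; nlinarith [hp' i]
  obtain ⟨p, hp, q, hq, hne, heq⟩ := Finset.exists_ne_map_eq_of_card_lt_of_maps_to
    (s := Fintype.piFinset (fun _ : ι => Finset.range (X+1))) (t := Fintype.piFinset (fun k : κ => Finset.range (N k)))
    (by simpa [Fintype.card_piFinset] using hN) (f := fun p k => ⌊val p k / ε k⌋₊) (by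
      intro p hp
      rw [Finset.mem_coe, Fintype.mem_piFinset]
      intro k
      rw [Finset.mem_range, Nat.floor_lt (div_nonneg (hval p hp k).1 (hε k).le), div_lt_iff₀ (hε k)]
      exact (hval p hp k).2)
  refine ⟨fun i => (p i : ℤ) - q i, ?_, ?_, ?_⟩
  · intro h
    apply hne
    ext i
    have := congrFun h i
    simp at this
    omega
  · intro i
    have h1 := Finset.mem_range.mp (Fintype.mem_piFinset.mp hp i)
    have h2 := Finset.mem_range.mp (Fintype.mem_piFinset.mp hq i)
    change |(p i : ℤ) - q i| ≤ X
    rw [abs_le]; constructor <;> omega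
  · intro k
    have h1 : ⌊val p k / ε k⌋₊ = ⌊val q k / ε k⌋₊ := congrFun heq k
    have a1 := Nat.floor_le (div_nonneg (hval p hp k).1 (hε k).le)
    have a2 := Nat.lt_floor_add_one (val p k / ε k)
    have b1 := Nat.floor_le (div_nonneg (hval q hq k).1 (hε k).le)
    have b2 := Nat.lt_floor_add_one (val q k / ε k)
    rw [h1] at a1 a2
    have e : ∑ i, A k i * (((p i : ℤ) - q i : ℤ) : ℝ) = val p k - val q k := by
      simp only [val]
      push_cast
      simp only [mul_sub]
      rw [Finset.sum_sub_distrib]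
      ring
    have e1 : val p k = ε k * (val p k / ε k) := by field_simp [(hε k).ne']
    have e2 : val q k = ε k * (val q k / ε k) := by field_simp [(hε k).ne']
    rw [e, e1, e2, ← mul_sub, abs_mul, abs_of_pos (hε k)]
    have : |val p k / ε k - val q k / ε k| ≤ 1 := by rw [abs_le]; constructor <;> linarith
    nlinarith [hε k]
end part5x

section part6x
noncomputable def cf (l1 l2 : ℝ) (k1 k2 a : ℕ) : ℝ :=
  if k1 ≤ a then (k2.choose (a - k1) : ℝ) * (-l1) ^ (a - k1) / l2 ^ k2 else 0

lemma cf_sum (l1 l2 : ℝ) (h2 : l2 ≠ 0) (K k1 k2 : ℕ) (hK : k1 + k2 < K) (z1 z2 w : ℝ) (hw : l2 * z2 = w - l1 * z1) :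
    ∑ a ∈ Finset.range K, cf l1 l2 k1 k2 a * (z1 ^ a * w ^ (k1 + k2 - a)) = z1 ^ k1 * z2 ^ k2 := by
  obtain ⟨d, rfl⟩ := Nat.exists_eq_add_of_lt hK
  have e1 : k1 + k2 + d + 1 = k1 + ((k2 + 1) + d) := by ring
  rw [e1, Finset.sum_range_add, Finset.sum_range_add]
  have h0 : ∑ a ∈ Finset.range k1, cf l1 l2 k1 k2 a * (z1 ^ a * w ^ (k1 + k2 - a)) = 0 := by
    apply Finset.sum_eq_zero
    intro a ha
    have := Finset.mem_range.mp ha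
    rw [cf, if_neg (by omega), zero_mul]
  have h3 : ∑ x ∈ Finset.range d, cf l1 l2 k1 k2 (k1 + (k2 + 1 + x)) * (z1 ^ (k1 + (k2 + 1 + x)) * w ^ (k1 + k2 - (k1 + (k2 + 1 + x)))) = 0 := by
    apply Finset.sum_eq_zero
    intro a _
    rw [cf, if_pos (by omega), Nat.choose_eq_zero_of_lt (by omega)]
    simp
  rw [h0, h3, zero_add, add_zero]
  have hz : z2 = (-l1 * z1 + w) / l2 := by field_simp; linarith
  rw [hz, div_pow, add_pow, Finset.sum_div, Finset.mul_sum]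
  apply Finset.sum_congr rfl
  intro i hi
  rw [cf, if_pos (by omega)]
  have e2 : k1 + i - k1 = i := by omega
  have e3 : k1 + k2 - (k1 + i) = k2 - i := by omega
  rw [e2, e3, pow_add, mul_pow]
  ring

lemma cf_abs (l1 l2 : ℝ) (h1 : 0 ≤ l1) (h2 : 0 < l2) (k1 k2 a : ℕ) : |cf l1 l2 k1 k2 a| = cf (-l1) l2 k1 k2 a := by
  unfold cf
  split_ifs
  · rw [abs_div, abs_mul, abs_pow, abs_neg, abs_of_nonneg h1, abs_of_pos (pow_pos h2 _), Nat.abs_cast, neg_neg]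
  · simp

lemma cf_abs_sum (l1 l2 : ℝ) (h1 : 0 ≤ l1) (h2 : 0 < l2) (K k1 k2 : ℕ) (hK : k1 + k2 < K) (B D b : ℝ) (hB : 0 ≤ B) (hD : 0 ≤ D)
    (hb1 : 1 ≤ b) (hb2 : B ≤ b) (hb3 : (D + l1 * B) / l2 ≤ b) :
    ∑ a ∈ Finset.range K, |cf l1 l2 k1 k2 a| * (B ^ a * D ^ (k1 + k2 - a)) ≤ b ^ K := by
  simp only [cf_abs l1 l2 h1 h2]
  rw [cf_sum (-l1) l2 h2.ne' K k1 k2 hK B ((D + l1 * B) / l2) D (by field_simp; ring)]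
  calc B ^ k1 * ((D + l1 * B) / l2) ^ k2 ≤ b ^ k1 * b ^ k2 := by
        gcongr
    _ = b ^ (k1 + k2) := by rw [pow_add]
    _ ≤ b ^ K := pow_le_pow_right₀ hb1 hK.le

lemma pow_fact_le (y : ℝ) (hy : 0 ≤ y) (j : ℕ) : y ^ j / j.factorial ≤ Real.exp (20 * y) / 20 ^ j := by
  have := Real.pow_div_factorial_le_exp (20 * y) (by positivity) j
  rw [le_div_iff₀ (by positivity)]
  rw [mul_pow] at this
  calc y ^ j / j.factorial * 20 ^ j = 20 ^ j * y ^ j / j.factorial := by ring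
    _ ≤ _ := this

lemma exp_tail (y : ℝ) (N : ℕ) : |Real.exp y - ∑ j ∈ Finset.range N, y ^ j / j.factorial| ≤ Real.exp (20 * |y|) / 20 ^ N := by
  have h1 : HasSum (fun j : ℕ => y ^ j / j.factorial) (Real.exp y) := by
    rw [Real.exp_eq_exp_ℝ]; exact NormedSpace.expSeries_div_hasSum_exp y
  have h2 : HasSum (fun j : ℕ => (20 * |y|) ^ j / j.factorial) (Real.exp (20 * |y|)) := by
    rw [Real.exp_eq_exp_ℝ]; exact NormedSpace.expSeries_div_hasSum_exp _
  have h3 : HasSum (fun j : ℕ => y ^ (j+N) / (j+N).factorial) (Real.exp y - ∑ j ∈ Finset.range N, y ^ j / j.factorial) :=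
    (hasSum_nat_add_iff' N).mpr h1
  have h4 : HasSum (fun j : ℕ => (20 * |y|) ^ (j+N) / (j+N).factorial) (Real.exp (20 * |y|) - ∑ j ∈ Finset.range N, (20 * |y|) ^ j / j.factorial) :=
    (hasSum_nat_add_iff' N).mpr h2
  have h5 := h4.div_const ((20:ℝ) ^ N)
  have hb : ∀ j : ℕ, ‖y ^ (j+N) / (j+N).factorial‖ ≤ (20 * |y|) ^ (j+N) / (j+N).factorial / 20 ^ N := by
    intro j
    rw [norm_div, norm_pow, Real.norm_eq_abs, Real.norm_natCast, le_div_iff₀ (by positivity), mul_pow, pow_add 20]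
    have : (1:ℝ) ≤ 20 ^ j := one_le_pow₀ (by norm_num)
    have h0 : 0 ≤ |y| ^ (j+N) / (j+N).factorial * 20 ^ N := by positivity
    calc |y| ^ (j+N) / (j+N).factorial * 20 ^ N ≤ (|y| ^ (j+N) / (j+N).factorial * 20 ^ N) * 20 ^ j := le_mul_of_one_le_right h0 this
      _ = _ := by ring
  have h6 := tsum_of_norm_bounded h5 hb
  rw [h3.tsum_eq, Real.norm_eq_abs] at h6
  refine h6.trans ?_
  gcongr
  have : 0 ≤ ∑ j ∈ Finset.range N, (20 * |y|) ^ j / j.factorial := Finset.sum_nonneg fun j _ => by positivity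
  linarith

noncomputable def ex (s : ℝ) (e j : ℕ) : ℝ := if e ≤ j then s ^ (j - e) / (j - e).factorial else 0

lemma ex_bound (s W Lr : ℝ) (hW : 0 ≤ W) (hs : |s| ≤ Lr) (e j : ℕ) :
    W ^ j * |ex s e j| ≤ (20 * W) ^ e * (Real.exp (20 * (Lr * W)) / 20 ^ j) := by
  have hL : 0 ≤ Lr := (abs_nonneg s).trans hs
  unfold ex
  split_ifs with h
  · obtain ⟨d, rfl⟩ := Nat.exists_eq_add_of_le h
    rw [Nat.add_sub_cancel_left, abs_div, abs_pow, Nat.abs_cast]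
    have h1 := pow_fact_le (Lr * W) (by positivity) d
    calc W ^ (e + d) * (|s| ^ d / d.factorial) = W ^ e * ((|s| * W) ^ d / d.factorial) := by rw [pow_add, mul_pow]; ring
      _ ≤ W ^ e * ((Lr * W) ^ d / d.factorial) := by gcongr
      _ ≤ W ^ e * (Real.exp (20 * (Lr * W)) / 20 ^ d) := by gcongr
      _ = _ := by rw [mul_pow, pow_add]; field_simp
  · rw [abs_zero, mul_zero]; positivity

lemma ex_tail (s w W Lr : ℝ) (hw : |w| ≤ W) (hs : |s| ≤ Lr) (e J : ℕ) :
    |w ^ e * Real.exp (s * w) - ∑ j ∈ Finset.range J, w ^ j * ex s e j| ≤ (20 * W) ^ e * (Real.exp (20 * (Lr * W)) / 20 ^ J) := by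
  have hL : 0 ≤ Lr := (abs_nonneg s).trans hs
  have hW : 0 ≤ W := (abs_nonneg w).trans hw
  have hsum : ∑ j ∈ Finset.range J, w ^ j * ex s e j = w ^ e * ∑ j ∈ Finset.range (J - e), (s * w) ^ j / j.factorial := by
    rcases le_total e J with h | h
    · obtain ⟨d, rfl⟩ := Nat.exists_eq_add_of_le h
      rw [Finset.sum_range_add, Nat.add_sub_cancel_left]
      have : ∑ j ∈ Finset.range e, w ^ j * ex s e j = 0 := by
        apply Finset.sum_eq_zero
        intro j hj
        have := Finset.mem_range.mp hj
        rw [ex, if_neg (by omega), mul_zero]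
      rw [this, zero_add, Finset.mul_sum]
      apply Finset.sum_congr rfl
      intro j _
      rw [ex, if_pos (by omega), Nat.add_sub_cancel_left, pow_add, mul_pow]
      ring
    · rw [Nat.sub_eq_zero_of_le h]
      simp only [Finset.range_zero, Finset.sum_empty, mul_zero]
      apply Finset.sum_eq_zero
      intro j hj
      have := Finset.mem_range.mp hj
      rw [ex, if_neg (by omega), mul_zero]
  rw [hsum, ← mul_sub, abs_mul, abs_pow]
  have h1 := exp_tail (s * w) (J - e)
  have h2 : Real.exp (20 * |s * w|) ≤ Real.exp (20 * (Lr * W)) := by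
    apply Real.exp_le_exp.mpr
    rw [abs_mul]
    gcongr
  have h3 : Real.exp (20 * (Lr * W)) / 20 ^ (J - e) ≤ 20 ^ e * (Real.exp (20 * (Lr * W)) / 20 ^ J) := by
    have : (20:ℝ) ^ J ≤ 20 ^ e * 20 ^ (J - e) := by
      rw [← pow_add]; exact pow_le_pow_right₀ (by norm_num) (by omega)
    rw [div_le_iff₀ (by positivity)]
    have h0 := Real.exp_pos (20 * (Lr * W))
    have : 1 ≤ 20 ^ e * (20:ℝ) ^ (J - e) / 20 ^ J := by rw [le_div_iff₀ (by positivity)]; linarith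
    calc Real.exp (20 * (Lr * W)) ≤ Real.exp (20 * (Lr * W)) * (20 ^ e * (20:ℝ) ^ (J - e) / 20 ^ J) := le_mul_of_one_le_right h0.le this
      _ = _ := by ring
  calc |w| ^ e * |Real.exp (s * w) - ∑ j ∈ Finset.range (J - e), (s * w) ^ j / j.factorial|
      ≤ W ^ e * (20 ^ e * (Real.exp (20 * (Lr * W)) / 20 ^ J)) := by
        gcongr
        refine h1.trans (le_trans ?_ h3)
        gcongr
    _ = _ := by rw [mul_pow]; ring
end part6x

section part7x
theorem aux_fn {ι : Type} [Fintype ι] [Nonempty ι] (k1 k2 : ι → ℕ) (s om : ι → ℝ) (K J x : ℕ) (W b l1 l2 B1 Lr : ℝ)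
    (hk : ∀ u, k1 u + k2 u < K) (hs : ∀ u, |s u| ≤ Lr) (hom : ∀ u, |om u| ≤ 3)
    (hcard : K * (J * (J + 1)) ≤ 2 * (x * Fintype.card ι))
    (hW : 0 ≤ W) (hB1 : 0 ≤ B1) (hl1 : 0 ≤ l1) (hl2 : 0 < l2) (hb1 : 1 ≤ b) (hb2 : B1 ≤ b) (hb3 : (20 * W + l1 * B1) / l2 ≤ b) :
    ∃ p : ι → ℤ, p ≠ 0 ∧ (∀ u, |p u| ≤ 20 ^ x) ∧ ∀ z1 z2 w : ℝ, |z1| ≤ B1 → |w| ≤ W → w = z1 * l1 + z2 * l2 →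
      |∑ u, (p u : ℝ) * (om u * (z1 ^ k1 u * z2 ^ k2 u * Real.exp (s u * w)))| ≤
        (K * J + 1) * (2 * (20 ^ x * (Fintype.card ι * (3 * b ^ K * (Real.exp (20 * (Lr * W)) / 20 ^ J))))) := by
  classical
  set Ex := Real.exp (20 * (Lr * W)) with hEx
  have hEx0 : 0 < Ex := Real.exp_pos _
  have hb0 : 0 < b := by linarith
  set ε : ℝ := 2 * (20 ^ x * (Fintype.card ι * (3 * b ^ K * (Ex / 20 ^ J)))) with hε
  have hU : (0:ℝ) < Fintype.card ι := by exact_mod_cast Fintype.card_pos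
  have hε0 : 0 < ε := by positivity
  have hsum : ∀ u, ∑ a ∈ Finset.range K, |cf l1 l2 (k1 u) (k2 u) a| * (B1 ^ a * (20 * W) ^ (k1 u + k2 u - a)) ≤ b ^ K :=
    fun u => cf_abs_sum l1 l2 hl1 hl2 K _ _ (hk u) B1 (20 * W) b hB1 (by positivity) hb1 hb2 hb3
  let A : Fin K × Fin J → ι → ℝ := fun aj u => B1 ^ (aj.1 : ℕ) * W ^ (aj.2 : ℕ) * (om u * (cf l1 l2 (k1 u) (k2 u) aj.1 * ex (s u) (k1 u + k2 u - aj.1) aj.2))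
  have hAb : ∀ aj u, |A aj u| ≤ 3 * b ^ K * (Ex / 20 ^ (aj.2 : ℕ)) := by
    rintro ⟨a, j⟩ u
    have h1 := ex_bound (s u) W Lr hW (hs u) (k1 u + k2 u - a) j
    have h2 : |cf l1 l2 (k1 u) (k2 u) a| * (B1 ^ (a:ℕ) * (20 * W) ^ (k1 u + k2 u - a)) ≤ b ^ K := by
      refine le_trans ?_ (hsum u)
      exact Finset.single_le_sum (f := fun a => |cf l1 l2 (k1 u) (k2 u) a| * (B1 ^ a * (20 * W) ^ (k1 u + k2 u - a)))
        (fun i _ => by positivity) (Finset.mem_range.mpr a.2)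
    show |B1 ^ (a : ℕ) * W ^ (j : ℕ) * (om u * (cf l1 l2 (k1 u) (k2 u) a * ex (s u) (k1 u + k2 u - a) j))| ≤ 3 * b ^ K * (Ex / 20 ^ (j : ℕ))
    rw [abs_mul, abs_mul, abs_mul, abs_mul, abs_of_nonneg (pow_nonneg hB1 _), abs_of_nonneg (pow_nonneg hW _)]
    calc B1 ^ (a : ℕ) * W ^ (j : ℕ) * (|om u| * (|cf l1 l2 (k1 u) (k2 u) a| * |ex (s u) (k1 u + k2 u - a) j|))
        = |om u| * (|cf l1 l2 (k1 u) (k2 u) a| * B1 ^ (a : ℕ) * (W ^ (j : ℕ) * |ex (s u) (k1 u + k2 u - a) j|)) := by ring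
      _ ≤ 3 * (|cf l1 l2 (k1 u) (k2 u) a| * B1 ^ (a : ℕ) * ((20 * W) ^ (k1 u + k2 u - a) * (Ex / 20 ^ (j : ℕ)))) := by
          gcongr
          exact hom u
      _ = 3 * (|cf l1 l2 (k1 u) (k2 u) a| * (B1 ^ (a : ℕ) * (20 * W) ^ (k1 u + k2 u - a))) * (Ex / 20 ^ (j : ℕ)) := by ring
      _ ≤ _ := by gcongr
  have hpig := pigeon A (20 ^ x) (fun aj => 20 ^ (J - (aj.2 : ℕ))) (fun _ => ε) (fun _ => hε0) (by
    rintro ⟨a, j⟩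
    have h1 : ∑ i, |A (a, j) i| ≤ Fintype.card ι * (3 * b ^ K * (Ex / 20 ^ (j : ℕ))) := by
      refine (Finset.sum_le_card_nsmul _ _ _ (fun u _ => hAb (a, j) u)).trans ?_
      rw [Finset.card_univ, nsmul_eq_mul]
    have h2 : ((20 ^ (J - (j:ℕ)) : ℕ) : ℝ) * ε = 2 * (20 ^ x * (Fintype.card ι * (3 * b ^ K * (Ex / 20 ^ (j : ℕ))))) := by
      have : (20:ℝ) ^ J = 20 ^ (J - (j:ℕ)) * 20 ^ (j:ℕ) := by rw [← pow_add]; congr 1; omega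
      rw [hε, this]; push_cast; field_simp
    show ((20 ^ x : ℕ) : ℝ) * ∑ i, |A (a, j) i| < ((20 ^ (J - (j:ℕ)) : ℕ) : ℝ) * ε
    rw [h2]
    have h3 : (0:ℝ) < 20 ^ x * (Fintype.card ι * (3 * b ^ K * (Ex / 20 ^ (j : ℕ)))) := by positivity
    have h4 : ((20 ^ x : ℕ) : ℝ) * ∑ i, |A (a, j) i| ≤ 20 ^ x * (Fintype.card ι * (3 * b ^ K * (Ex / 20 ^ (j : ℕ)))) := by
      push_cast; gcongr
    linarith) (by
    have h1 : ∏ aj : Fin K × Fin J, 20 ^ (J - (aj.2 : ℕ)) = 20 ^ (K * ∑ j ∈ Finset.range J, (J - j)) := by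
      rw [Finset.prod_pow_eq_pow_sum, Fintype.sum_prod_type]
      simp [Finset.sum_range]
    rw [h1]
    have h2 : (∑ j ∈ Finset.range J, (J - j)) * 2 = J * (J + 1) := by
      have := Finset.sum_range_reflect (fun i => i + 1) J
      have h3 : ∑ j ∈ Finset.range J, (J - j) = ∑ j ∈ Finset.range J, (j + 1) := by
        rw [← this]; apply Finset.sum_congr rfl; intro i hi; have := Finset.mem_range.mp hi; omega
      rw [h3, Finset.sum_add_distrib, add_mul, Finset.sum_range_id_mul_two]
      cases J <;> simp; ring
    have h3 : K * ∑ j ∈ Finset.range J, (J - j) ≤ x * Fintype.card ι := by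
      nlinarith
    calc 20 ^ (K * ∑ j ∈ Finset.range J, (J - j)) ≤ 20 ^ (x * Fintype.card ι) := Nat.pow_le_pow_right (by norm_num) h3
      _ = (20 ^ x) ^ Fintype.card ι := by rw [pow_mul]
      _ < (20 ^ x + 1) ^ Fintype.card ι := Nat.pow_lt_pow_left (by omega) Fintype.card_ne_zero)
  obtain ⟨p, hp0, hpX, hpε⟩ := hpig
  refine ⟨p, hp0, fun u => by exact_mod_cast hpX u, ?_⟩
  intro z1 z2 w hz1 hw hwz
  -- split
  set tl : ι → ℕ → ℝ := fun u a => w ^ (k1 u + k2 u - a) * Real.exp (s u * w) - ∑ j ∈ Finset.range J, w ^ j * ex (s u) (k1 u + k2 u - a) j with htl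
  have hid : ∀ u, z1 ^ k1 u * z2 ^ k2 u * Real.exp (s u * w) =
      (∑ a ∈ Finset.range K, ∑ j ∈ Finset.range J, z1 ^ a * w ^ j * (cf l1 l2 (k1 u) (k2 u) a * ex (s u) (k1 u + k2 u - a) j)) +
      ∑ a ∈ Finset.range K, cf l1 l2 (k1 u) (k2 u) a * z1 ^ a * tl u a := by
    intro u
    rw [← cf_sum l1 l2 hl2.ne' K (k1 u) (k2 u) (hk u) z1 z2 w (by rw [hwz]; ring), Finset.sum_mul, ← Finset.sum_add_distrib]
    apply Finset.sum_congr rfl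
    intro a _
    rw [htl]
    simp only
    rw [mul_sub, Finset.mul_sum]
    have : ∑ j ∈ Finset.range J, z1 ^ a * w ^ j * (cf l1 l2 (k1 u) (k2 u) a * ex (s u) (k1 u + k2 u - a) j) =
      ∑ j ∈ Finset.range J, cf l1 l2 (k1 u) (k2 u) a * z1 ^ a * (w ^ j * ex (s u) (k1 u + k2 u - a) j) :=
      Finset.sum_congr rfl fun j _ => by ring
    rw [this]; ring
  have hmain : ∑ u, (p u : ℝ) * (om u * (z1 ^ k1 u * z2 ^ k2 u * Real.exp (s u * w))) =
      (∑ a ∈ Finset.range K, ∑ j ∈ Finset.range J, z1 ^ a * w ^ j * ∑ u, (om u * (cf l1 l2 (k1 u) (k2 u) a * ex (s u) (k1 u + k2 u - a) j)) * p u) +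
      ∑ u, (p u : ℝ) * (om u * ∑ a ∈ Finset.range K, cf l1 l2 (k1 u) (k2 u) a * z1 ^ a * tl u a) := by
    have : ∑ a ∈ Finset.range K, ∑ j ∈ Finset.range J, z1 ^ a * w ^ j * ∑ u, (om u * (cf l1 l2 (k1 u) (k2 u) a * ex (s u) (k1 u + k2 u - a) j)) * p u
      = ∑ u, (p u : ℝ) * (om u * ∑ a ∈ Finset.range K, ∑ j ∈ Finset.range J, z1 ^ a * w ^ j * (cf l1 l2 (k1 u) (k2 u) a * ex (s u) (k1 u + k2 u - a) j)) := by
      simp only [Finset.mul_sum]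
      rw [Finset.sum_comm' (t' := Finset.range J) (s' := fun _ => Finset.range K) (by simp [and_comm])]
      have : ∀ y ∈ Finset.range J, ∑ a ∈ Finset.range K, ∑ u, z1 ^ a * w ^ y * ((om u * (cf l1 l2 (k1 u) (k2 u) a * ex (s u) (k1 u + k2 u - a) y)) * p u) = 
        ∑ u, ∑ a ∈ Finset.range K, z1 ^ a * w ^ y * ((om u * (cf l1 l2 (k1 u) (k2 u) a * ex (s u) (k1 u + k2 u - a) y)) * p u) := fun y _ => Finset.sum_comm
      rw [Finset.sum_congr rfl this, Finset.sum_comm]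
      apply Finset.sum_congr rfl
      intro u _
      rw [Finset.sum_comm]
      apply Finset.sum_congr rfl
      intro a _
      apply Finset.sum_congr rfl
      intro j _
      ring
    rw [this, ← Finset.sum_add_distrib]
    apply Finset.sum_congr rfl
    intro u _
    rw [hid u]; ring
  rw [hmain]
  have t1 : |∑ a ∈ Finset.range K, ∑ j ∈ Finset.range J, z1 ^ a * w ^ j * ∑ u, (om u * (cf l1 l2 (k1 u) (k2 u) a * ex (s u) (k1 u + k2 u - a) j)) * p u| ≤ K * J * ε := by
    refine (Finset.abs_sum_le_sum_abs _ _).trans ?_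
    have : ∀ a ∈ Finset.range K, |∑ j ∈ Finset.range J, z1 ^ a * w ^ j * ∑ u, (om u * (cf l1 l2 (k1 u) (k2 u) a * ex (s u) (k1 u + k2 u - a) j)) * p u| ≤ J * ε := by
      intro a ha
      refine (Finset.abs_sum_le_sum_abs _ _).trans ?_
      refine (Finset.sum_le_card_nsmul _ _ ε ?_).trans (by simp)
      intro j hj
      have h := hpε (⟨a, Finset.mem_range.mp ha⟩, ⟨j, Finset.mem_range.mp hj⟩)
      refine le_trans ?_ h
      have e : ∑ u, A (⟨a, Finset.mem_range.mp ha⟩, ⟨j, Finset.mem_range.mp hj⟩) u * p u = B1 ^ a * W ^ j * ∑ u, (om u * (cf l1 l2 (k1 u) (k2 u) a * ex (s u) (k1 u + k2 u - a) j)) * p u := by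
        rw [Finset.mul_sum]
        apply Finset.sum_congr rfl
        intro u _
        simp only [A]; ring
      rw [e, abs_mul, abs_mul (B1 ^ a * W ^ j), abs_mul, abs_mul, abs_pow, abs_pow, abs_pow, abs_pow, abs_of_nonneg hB1, abs_of_nonneg hW]
      gcongr
    refine (Finset.sum_le_card_nsmul _ _ _ this).trans ?_
    rw [Finset.card_range, nsmul_eq_mul]; linarith
  have t2 : |∑ u, (p u : ℝ) * (om u * ∑ a ∈ Finset.range K, cf l1 l2 (k1 u) (k2 u) a * z1 ^ a * tl u a)| ≤ ε := by
    refine (Finset.abs_sum_le_sum_abs _ _).trans ?_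
    have : ∀ u ∈ Finset.univ, |(p u : ℝ) * (om u * ∑ a ∈ Finset.range K, cf l1 l2 (k1 u) (k2 u) a * z1 ^ a * tl u a)| ≤ 20 ^ x * (3 * (b ^ K * (Ex / 20 ^ J))) := by
      intro u _
      rw [abs_mul, abs_mul]
      have h1 : |(p u : ℝ)| ≤ 20 ^ x := by
        have := hpX u
        rw [← Int.cast_abs]; exact_mod_cast this
      have h2 : |∑ a ∈ Finset.range K, cf l1 l2 (k1 u) (k2 u) a * z1 ^ a * tl u a| ≤ b ^ K * (Ex / 20 ^ J) := by
        refine (Finset.abs_sum_le_sum_abs _ _).trans ?_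
        calc _ ≤ ∑ a ∈ Finset.range K, |cf l1 l2 (k1 u) (k2 u) a| * (B1 ^ a * (20 * W) ^ (k1 u + k2 u - a)) * (Ex / 20 ^ J) := by
              apply Finset.sum_le_sum
              intro a _
              have h3 := ex_tail (s u) w W Lr hw (hs u) (k1 u + k2 u - a) J
              rw [abs_mul, abs_mul, abs_pow]
              calc _ ≤ |cf l1 l2 (k1 u) (k2 u) a| * B1 ^ a * ((20 * W) ^ (k1 u + k2 u - a) * (Ex / 20 ^ J)) := by gcongr
                _ = _ := by ring
          _ ≤ _ := by
              rw [← Finset.sum_mul]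
              gcongr
              exact hsum u
      gcongr
      exact hom u
    refine (Finset.sum_le_card_nsmul _ _ _ this).trans ?_
    rw [Finset.card_univ, nsmul_eq_mul, hε]
    have : (0:ℝ) < 20 ^ x * (Fintype.card ι * (3 * b ^ K * (Ex / 20 ^ J))) := by positivity
    calc _ = 20 ^ x * (Fintype.card ι * (3 * b ^ K * (Ex / 20 ^ J))) := by ring
      _ ≤ _ := by linarith
  calc _ ≤ K * J * ε + ε := (abs_add_le _ _).trans (add_le_add t1 t2)
    _ = _ := by ring
end part7x

section part8x
lemma liouville {F : Type} [Field F] [NumberField F] (φ : F →+* ℝ) (hd : Module.finrank ℚ F ≤ 6) (y : F)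
    (hy : IsIntegral ℤ y) (hy0 : y ≠ 0) (Bd : ℝ) (hBd : 1 ≤ Bd) (hB : ∀ σ : F →+* ℂ, ‖σ y‖ ≤ Bd) : 1 ≤ |φ y| * Bd ^ 5 := by
  classical
  have h1 := Algebra.norm_eq_prod_embeddings ℚ ℂ y
  have h2 : IsIntegral ℤ (Algebra.norm ℚ y) := Algebra.isIntegral_norm ℚ hy
  obtain ⟨N, hN⟩ := IsIntegrallyClosed.isIntegral_iff.mp h2
  have hN0 : N ≠ 0 := by
    rintro rfl
    rw [map_zero] at hN
    exact hy0 (Algebra.norm_eq_zero_iff.mp hN.symm)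
  have hN1 : (1:ℝ) ≤ ‖algebraMap ℚ ℂ (Algebra.norm ℚ y)‖ := by
    rw [← hN]
    rw [eq_intCast, map_intCast, Complex.norm_intCast]
    exact_mod_cast Int.one_le_abs hN0
  rw [h1, norm_prod] at hN1
  let σ0 : F →ₐ[ℚ] ℂ := (Complex.ofRealHom.comp φ).toRatAlgHom
  have hc : Fintype.card (F →ₐ[ℚ] ℂ) = Module.finrank ℚ F := AlgHom.card ℚ F ℂ
  rw [← Finset.mul_prod_erase _ _ (Finset.mem_univ σ0)] at hN1
  have h3 : ‖σ0 y‖ = |φ y| := by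
    show ‖((φ y : ℝ) : ℂ)‖ = _
    simp
  rw [h3] at hN1
  have h4 : ∏ σ ∈ Finset.univ.erase σ0, ‖σ y‖ ≤ Bd ^ 5 := by
    refine (Finset.prod_le_prod (fun _ _ => norm_nonneg _) (fun σ _ => hB σ.toRingHom)).trans ?_
    rw [Finset.prod_const]
    apply pow_le_pow_right₀ hBd
    rw [Finset.card_erase_of_mem (Finset.mem_univ _), Finset.card_univ, hc]; omega
  exact hN1.trans (by gcongr)

structure Dat (F : Type) [Field F] [NumberField F] where
  φ : F →+* ℝ
  a : F
  g : F
  om : Fin 6 → F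
  hd : Module.finrank ℚ F ≤ 6
  ha : IsIntegral ℤ a
  ha' : IsIntegral ℤ a⁻¹
  hg : IsIntegral ℤ g
  hg' : IsIntegral ℤ g⁻¹
  hom : ∀ i, IsIntegral ℤ (om i)
  a1 : 1 < φ a
  g1 : 1 < φ g
  ca : ∀ σ : F →+* ℂ, ‖σ a‖ ≤ φ a
  ca' : ∀ σ : F →+* ℂ, ‖σ a⁻¹‖ ≤ φ a
  cg : ∀ σ : F →+* ℂ, ‖σ g‖ ≤ φ g
  cg' : ∀ σ : F →+* ℂ, ‖σ g⁻¹‖ ≤ φ g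
  com : ∀ (σ : F →+* ℂ) i, ‖σ (om i)‖ ≤ 3
  rom : ∀ i, |φ (om i)| ≤ 3
  lin : ∀ c : Fin 6 → ℤ, ∑ i, (c i : ℝ) * φ (om i) = 0 → c = 0
  ind : ∀ p q : ℤ, (φ a) ^ p * (φ g) ^ q = 1 → p = 0 ∧ q = 0

lemma int_zpow {F : Type} [Field F] {a : F} (ha : IsIntegral ℤ a) (ha' : IsIntegral ℤ a⁻¹) (k : ℤ) : IsIntegral ℤ (a ^ k) := by
  rcases Int.eq_nat_or_neg k with ⟨n, rfl | rfl⟩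
  · rw [zpow_natCast]; exact ha.pow n
  · rw [zpow_neg, zpow_natCast, ← inv_pow]; exact ha'.pow n

lemma norm_zpow_le {F : Type} [Field F] (σ : F →+* ℂ) {a : F} {A : ℝ} (hA : 1 ≤ A) (h : ‖σ a‖ ≤ A) (h' : ‖σ a⁻¹‖ ≤ A) (k : ℤ) (N : ℕ) (hk : |k| ≤ N) :
    ‖σ (a ^ k)‖ ≤ A ^ N := by
  rcases Int.eq_nat_or_neg k with ⟨n, rfl | rfl⟩
  · rw [zpow_natCast, map_pow, norm_pow]
    refine (pow_le_pow_left₀ (norm_nonneg _) h n).trans (pow_le_pow_right₀ hA ?_)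
    simp at hk; omega
  · rw [zpow_neg, zpow_natCast, ← inv_pow, map_pow, norm_pow]
    refine (pow_le_pow_left₀ (norm_nonneg _) h' n).trans (pow_le_pow_right₀ hA ?_)
    simp at hk; omega

lemma vanish {F : Type} [Field F] [NumberField F] (D : Dat F) (e1 e2 : F) (h1 : IsIntegral ℤ e1) (h2 : IsIntegral ℤ e2) (h10 : e1 ≠ 0) (h20 : e2 ≠ 0)
    (H : ℝ) (hH1 : 1 ≤ H) (c1 : ∀ σ : F →+* ℂ, ‖σ e1‖ ≤ H) (c2 : ∀ σ : F →+* ℂ, ‖σ e2‖ ≤ H)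
    {ι : Type} [Fintype ι] [Nonempty ι] (k1 k2 : ι → ℕ) (sI : ι → ℤ) (oi : ι → Fin 6) (K L x : ℕ) (b G : ℝ) (hb : 1 ≤ b)
    (hk : ∀ u, k1 u + k2 u < K) (hs : ∀ u, |sI u| ≤ L) (p : ι → ℤ) (hp : ∀ u, |p u| ≤ 20 ^ x)
    (R S T : ℕ) (r s t z1 z2 : ℤ) (hr : |r| ≤ R) (hss : |s| ≤ S) (ht : |t| ≤ T) (hz1 : |(z1 : ℝ)| ≤ b) (hz2 : |(z2 : ℝ)| ≤ b)
    (hG : D.φ D.a ^ (R * L) * D.φ D.g ^ (S * L) ≤ G)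
    (Y : ℝ) (hY : Y = ∑ u, (p u : ℝ) * (D.φ (D.om (oi u)) * ((z1 : ℝ) ^ k1 u * (z2 : ℝ) ^ k2 u * (D.φ D.a ^ r * D.φ D.g ^ s * (D.φ e1 / D.φ e2) ^ t) ^ sI u)))
    (hsm : |Y| * H ^ (2 * (T * L)) * (Fintype.card ι * (20 ^ x * (3 * b ^ K)) * G * H ^ (2 * (T * L))) ^ 5 < 1) : Y = 0 := by
  by_contra hY0
  have ha0 : D.a ≠ 0 := fun h => by have := D.a1; rw [h, map_zero] at this; linarith
  have hg0 : D.g ≠ 0 := fun h => by have := D.g1; rw [h, map_zero] at this; linarith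
  have hts : ∀ u, |t * sI u| ≤ T * L := fun u => by rw [abs_mul]; gcongr; exact hs u
  have hrs : ∀ u, |r * sI u| ≤ (R * L : ℕ) := fun u => by rw [abs_mul]; push_cast; gcongr; exact hs u
  have hsss : ∀ u, |s * sI u| ≤ (S * L : ℕ) := fun u => by rw [abs_mul]; push_cast; gcongr; exact hs u
  let tm : ι → F := fun u => (p u : F) * (D.om (oi u) * ((z1 : F) ^ k1 u * (z2 : F) ^ k2 u * (D.a ^ (r * sI u) * D.g ^ (s * sI u) * (e1 ^ (T * L + t * sI u).toNat * e2 ^ (T * L - t * sI u).toNat))))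
  let y : F := ∑ u, tm u
  have hint : IsIntegral ℤ y := by
    refine IsIntegral.sum _ fun u _ => ?_
    have iz : ∀ z : ℤ, IsIntegral ℤ (z : F) := fun z => isIntegral_algebraMap (R := ℤ) (x := z)
    exact (iz _).mul ((D.hom _).mul ((((iz _).pow _).mul ((iz _).pow _)).mul (((int_zpow D.ha D.ha' _).mul (int_zpow D.hg D.hg' _)).mul ((h1.pow _).mul (h2.pow _)))))
  have hφy : D.φ y = Y * (D.φ e1 * D.φ e2) ^ (T * L) := by
    rw [hY, Finset.sum_mul, map_sum]
    apply Finset.sum_congr rfl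
    intro u _
    have f1 : D.φ e1 ≠ 0 := (map_ne_zero _).mpr h10
    have f2 : D.φ e2 ≠ 0 := (map_ne_zero _).mpr h20
    have fa : D.φ D.a ≠ 0 := (map_ne_zero _).mpr ha0
    have fg : D.φ D.g ≠ 0 := (map_ne_zero _).mpr hg0
    have := abs_le.mp (hts u)
    have q1 : ((T * L + t * sI u).toNat : ℤ) = T * L + t * sI u := Int.toNat_of_nonneg (by linarith)
    have q2 : ((T * L - t * sI u).toNat : ℤ) = T * L - t * sI u := Int.toNat_of_nonneg (by linarith)
    have w1 : D.φ e1 ^ (T * L + t * sI u).toNat = D.φ e1 ^ (T * L : ℕ) * D.φ e1 ^ (t * sI u) := by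
      rw [← zpow_natCast, q1, zpow_add₀ f1, ← zpow_natCast (D.φ e1) (T * L)]; push_cast; rfl
    have w2 : D.φ e2 ^ (T * L - t * sI u).toNat = D.φ e2 ^ (T * L : ℕ) * (D.φ e2 ^ (t * sI u))⁻¹ := by
      rw [← zpow_natCast, q2, zpow_sub₀ f2, ← zpow_natCast (D.φ e2) (T * L)]; push_cast; rfl
    simp only [tm, map_mul, map_pow, map_intCast, map_zpow₀]
    rw [w1, w2, mul_zpow, mul_zpow, ← zpow_mul, ← zpow_mul, ← zpow_mul, div_zpow, mul_pow]
    ring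
  have hy0 : y ≠ 0 := by
    intro h
    rw [h, map_zero] at hφy
    have f1 : D.φ e1 ≠ 0 := (map_ne_zero _).mpr h10
    have f2 : D.φ e2 ≠ 0 := (map_ne_zero _).mpr h20
    have := mul_ne_zero hY0 (pow_ne_zero (T * L) (mul_ne_zero f1 f2))
    exact this hφy.symm
  have hAG : (1:ℝ) ≤ D.φ D.a ^ (R * L) * D.φ D.g ^ (S * L) := one_le_mul_of_one_le_of_one_le (one_le_pow₀ D.a1.le) (one_le_pow₀ D.g1.le)
  have hG1 : 1 ≤ G := hAG.trans hG
  have hbK : 1 ≤ b ^ K := one_le_pow₀ hb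
  have hU : (1:ℝ) ≤ Fintype.card ι := by exact_mod_cast Fintype.card_pos
  have h20x : (1:ℝ) ≤ 20 ^ x := one_le_pow₀ (by norm_num)
  have hHT : 1 ≤ H ^ (2 * (T * L)) := one_le_pow₀ hH1
  have hb0 : 0 < b := by linarith
  have hBd1 : 1 ≤ Fintype.card ι * (20 ^ x * (3 * b ^ K)) * G * H ^ (2 * (T * L)) := by
    refine one_le_mul_of_one_le_of_one_le (one_le_mul_of_one_le_of_one_le (one_le_mul_of_one_le_of_one_le hU (one_le_mul_of_one_le_of_one_le h20x (by linarith))) hG1) hHT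
  have hkey := liouville D.φ D.hd y hint hy0 _ hBd1 (by
    intro σ
    rw [map_sum]
    refine (norm_sum_le _ _).trans ?_
    have : ∀ u ∈ Finset.univ, ‖σ (tm u)‖ ≤ 20 ^ x * (3 * (b ^ K * (G * H ^ (2 * (T * L))))) := by
      intro u _
      have nz : ∀ z : ℤ, ‖σ (z : F)‖ = |(z:ℝ)| := fun z => by rw [map_intCast, Complex.norm_intCast]
      have hpu : |(p u : ℝ)| ≤ 20 ^ x := by rw [← Int.cast_abs]; exact_mod_cast hp u
      have := abs_le.mp (hts u)
      have hab : ‖σ (e1 ^ (T * L + t * sI u).toNat)‖ * ‖σ (e2 ^ (T * L - t * sI u).toNat)‖ ≤ H ^ (2 * (T * L)) := by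
        rw [map_pow, map_pow, norm_pow, norm_pow]
        calc _ ≤ H ^ (T * L + t * sI u).toNat * H ^ (T * L - t * sI u).toNat := by
              gcongr
              · exact c1 σ
              · exact c2 σ
          _ = H ^ (2 * (T * L)) := by rw [← pow_add]; congr 1; zify; rw [Int.toNat_of_nonneg (by linarith), Int.toNat_of_nonneg (by linarith)]; ring
      have hz : ‖σ (z1 : F)‖ ^ k1 u * ‖σ (z2 : F)‖ ^ k2 u ≤ b ^ K := by
        rw [nz, nz]
        calc _ ≤ b ^ k1 u * b ^ k2 u := by gcongr
          _ = b ^ (k1 u + k2 u) := (pow_add _ _ _).symm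
          _ ≤ _ := pow_le_pow_right₀ hb (hk u).le
      have hag : ‖σ (D.a ^ (r * sI u))‖ * ‖σ (D.g ^ (s * sI u))‖ ≤ G := by
        refine le_trans ?_ hG
        exact mul_le_mul (norm_zpow_le σ D.a1.le (D.ca σ) (D.ca' σ) _ _ (hrs u)) (norm_zpow_le σ D.g1.le (D.cg σ) (D.cg' σ) _ _ (hsss u)) (norm_nonneg _) (pow_nonneg (zero_le_one.trans D.a1.le) _)
      simp only [tm, map_mul σ, norm_mul, nz (p u)]
      rw [map_pow σ (z1 : F), map_pow σ (z2 : F), norm_pow, norm_pow]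
      gcongr
      exact D.com σ _
    refine (Finset.sum_le_card_nsmul _ _ _ this).trans ?_
    rw [Finset.card_univ, nsmul_eq_mul]
    apply le_of_eq; ring)
  have hreal : |D.φ e1 * D.φ e2| ≤ H * H := by
    have q1 := c1 (Complex.ofRealHom.comp D.φ)
    have q2 := c2 (Complex.ofRealHom.comp D.φ)
    simp at q1 q2
    rw [abs_mul]; gcongr
  rw [hφy, abs_mul, abs_pow] at hkey
  have : |D.φ e1 * D.φ e2| ^ (T * L) ≤ H ^ (2 * (T * L)) := by
    calc _ ≤ (H * H) ^ (T * L) := pow_le_pow_left₀ (abs_nonneg _) hreal _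
      _ = _ := by rw [← sq, ← pow_mul]
  have : |Y| * |D.φ e1 * D.φ e2| ^ (T * L) * (Fintype.card ι * (20 ^ x * (3 * b ^ K)) * G * H ^ (2 * (T * L))) ^ 5 ≤ |Y| * H ^ (2 * (T * L)) * (Fintype.card ι * (20 ^ x * (3 * b ^ K)) * G * H ^ (2 * (T * L))) ^ 5 := by
    gcongr
  linarith
end part8x

section part9x
open MvPolynomial

abbrev Idx (K L : ℕ) := (Σ k : Fin K, Fin (k.1 + 1)) × Fin (2 * L + 1) × Fin 6

lemma card_Idx (K L : ℕ) : Fintype.card (Idx K L) = 3 * (2 * L + 1) * (K * (K + 1)) := by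
  rw [Fintype.card_prod, Fintype.card_prod, Fintype.card_sigma]
  simp only [Fintype.card_fin]
  have : (∑ k : Fin K, (k.1 + 1)) * 2 = K * (K + 1) := by
    rw [← Finset.sum_range (fun k => k + 1), Finset.sum_add_distrib, add_mul, Finset.sum_range_id_mul_two]
    cases K <;> simp; ring
  nlinarith

lemma exp_diff (A B C : ℝ) (hA : A ≤ C) (hB : B ≤ C) : |Real.exp A - Real.exp B| ≤ Real.exp C * |A - B| := by
  wlog h : B ≤ A generalizing A B
  · rw [abs_sub_comm, abs_sub_comm A]; exact this B A hB hA (by linarith)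
  rw [abs_of_nonneg (sub_nonneg.mpr (Real.exp_le_exp.mpr h)), abs_of_nonneg (by linarith)]
  have h1 : Real.exp B = Real.exp A * Real.exp (B - A) := by rw [← Real.exp_add]; ring_nf
  have h2 := Real.add_one_le_exp (B - A)
  have h3 := Real.exp_le_exp.mpr hA
  have h4 := Real.exp_pos A
  rw [h1]
  calc Real.exp A - Real.exp A * Real.exp (B - A) = Real.exp A * (1 - Real.exp (B - A)) := by ring
    _ ≤ Real.exp A * (A - B) := mul_le_mul_of_nonneg_left (by linarith) h4.le
    _ ≤ _ := mul_le_mul_of_nonneg_right h3 (by linarith)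

noncomputable def PP {F : Type} [Field F] [NumberField F] (D : Dat F) {K L : ℕ} (p : Idx K L → ℤ) (l : Fin (2 * L + 1)) : MP2 :=
  ∑ k : (Σ k : Fin K, Fin (k.1 + 1)), monomial (Finsupp.single 0 k.2.1 + Finsupp.single 1 (k.1.1 - k.2.1)) (∑ i, (p (k, l, i) : ℝ) * D.φ (D.om i))

lemma PP_ne {F : Type} [Field F] [NumberField F] (D : Dat F) {K L : ℕ} (p : Idx K L → ℤ) (hp : p ≠ 0) : ∃ l, PP D p l ≠ 0 := by
  classical
  by_contra hcon
  push Not at hcon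
  apply hp
  funext ⟨k, l, i⟩
  have h1 : coeff (Finsupp.single 0 k.2.1 + Finsupp.single 1 (k.1.1 - k.2.1)) (PP D p l) = ∑ i, (p (k, l, i) : ℝ) * D.φ (D.om i) := by
    unfold PP
    rw [coeff_sum, Finset.sum_eq_single k]
    · rw [coeff_monomial, if_pos rfl]
    · intro k' _ hne
      rw [coeff_monomial, if_neg]
      intro h
      apply hne
      have q0 := DFunLike.congr_fun h 0
      have q1 := DFunLike.congr_fun h 1
      simp at q0 q1
      obtain ⟨⟨k, hk⟩, ⟨j, hj⟩⟩ := k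
      obtain ⟨⟨k', hk'⟩, ⟨j', hj'⟩⟩ := k'
      simp only at q0 q1 hj hj' 
      have : k' = k := by omega
      subst this; subst q0; rfl
    · simp
  rw [hcon l, coeff_zero] at h1
  have := D.lin (fun i => p (k, l, i)) h1.symm
  exact congrFun this i

lemma PP_deg {F : Type} [Field F] [NumberField F] (D : Dat F) {K L : ℕ} (p : Idx K L → ℤ) (l : Fin (2 * L + 1)) : (PP D p l).totalDegree ≤ K := by
  unfold PP
  refine (totalDegree_finsetSum _ _).trans (Finset.sup_le fun k _ => ?_)
  refine (totalDegree_monomial_le _ _).trans ?_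
  rw [Finsupp.sum_add_index' (by simp) (by simp)]
  rw [Finsupp.sum_single_index rfl, Finsupp.sum_single_index rfl]
  have := k.1.2
  have := k.2.2
  simp only [id]
  omega

lemma PP_eval {F : Type} [Field F] [NumberField F] (D : Dat F) {K L : ℕ} (p : Idx K L → ℤ) (z : Fin 2 → ℝ) (Z : ℝ) (hZ : Z ≠ 0)
    (h0 : ∑ u : Idx K L, (p u : ℝ) * (D.φ (D.om u.2.2) * (z 0 ^ (u.1.2.1) * z 1 ^ (u.1.1.1 - u.1.2.1) * Z ^ ((u.2.1.1 : ℤ) - L))) = 0) :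
    ∑ l, eval z (PP D p l) * Z ^ (l : ℕ) = 0 := by
  have h1 : ∑ l, eval z (PP D p l) * Z ^ (l : ℕ) = Z ^ (L:ℤ) * ∑ u : Idx K L, (p u : ℝ) * (D.φ (D.om u.2.2) * (z 0 ^ (u.1.2.1) * z 1 ^ (u.1.1.1 - u.1.2.1) * Z ^ ((u.2.1.1 : ℤ) - L))) := by
    rw [Fintype.sum_prod_type, Finset.mul_sum]
    simp only [Fintype.sum_prod_type]
    simp only [PP, map_sum, eval_monomial, Finset.sum_mul]
    rw [Finset.sum_comm]
    apply Finset.sum_congr rfl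
    intro k _
    rw [Finset.mul_sum]
    apply Finset.sum_congr rfl
    intro l _
    rw [Finset.mul_sum]
    apply Finset.sum_congr rfl
    intro i _
    rw [Finsupp.prod_add_index' (by simp) (by intros; rw [pow_add])]
    simp only [Finsupp.prod_single_index, pow_zero]
    rw [zpow_sub₀ hZ, zpow_natCast, zpow_natCast]
    field_simp
  rw [h1, h0, mul_zero]

theorem core {F : Type} [Field F] [NumberField F] (D : Dat F) (e1 e2 : F) (h1 : IsIntegral ℤ e1) (h2 : IsIntegral ℤ e2)
    (h10 : 0 < D.φ e1) (h20 : 0 < D.φ e2)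
    (H : ℝ) (hH1 : 1 ≤ H) (c1 : ∀ σ : F →+* ℂ, ‖σ e1‖ ≤ H) (c2 : ∀ σ : F →+* ℂ, ‖σ e2‖ ≤ H)
    (n m : ℤ) (L K J x R S T Rm P0 P2 c Cc : ℕ) (W b B1 Λ : ℝ)
    (hK0 : 0 < K) (hP0 : 0 < P0) (hP2 : 0 < P2)
    (hΛ : Λ = n * Real.log (D.φ D.a) - m * Real.log (D.φ D.g) - Real.log (D.φ e1 / D.φ e2))
    (hR : R ≤ Rm) (hS : S ≤ Rm) (hT : P0 ≤ 2*T+1) (hn : 2*(R:ℤ) < n)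
    (hδ : ∀ p q : ℤ, (p≠0 ∨ q≠0) → |p|<P0 → |q|<P0 → 4*(P0:ℤ)*Rm < |q*n+p*m|)
    (hc : (4*R+1)*((4*S+1)*(4*T+1)) ≤ c^2) (hcC : c+1 ≤ Cc)
    (hC1 : (2*T+1)*(2*Rm/P2+1) ≤ Cc) (hC2 : (2*L+1)*K ≤ Cc)
    (hB : Cc*((2*L+1)*K) + (2*T+1)*(2*Rm/P0+1)*K < (2*R+1)*((2*S+1)*(2*T+1)))
    (hJ : J * (J + 1) ≤ 6 * x * (2 * L + 1) * (K + 1))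
    (hW : ((R + (2*L+1)*P2 : ℕ) : ℝ) * Real.log (D.φ D.a) + ((S + (2*L+1)*P2 : ℕ) : ℝ) * Real.log (D.φ D.g) + T * |Real.log (D.φ e1 / D.φ e2)| + T * |Λ| ≤ W)
    (hB1 : ((R + (2*L+1)*P2 : ℕ) : ℝ) + T * n ≤ B1) (hb1 : 1 ≤ b) (hb2 : B1 ≤ b)
    (hb3 : (20 * W + Real.log (D.φ D.a) * B1) / Real.log (D.φ D.g) ≤ b)
    (hsm : ((K * J + 1) * (2 * (((3 * (2 * L + 1) * (K * (K + 1)) : ℕ) : ℝ) * (20 ^ x * (3 * b ^ K))) * (Real.exp (20 * (L * W)) / 20 ^ J)) +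
        (((3 * (2 * L + 1) * (K * (K + 1)) : ℕ) : ℝ) * (20 ^ x * (3 * b ^ K))) * (Real.exp (L * W) * (L * (T * |Λ|)))) * H ^ (2 * (T * L)) *
        ((((3 * (2 * L + 1) * (K * (K + 1)) : ℕ) : ℝ) * (20 ^ x * (3 * b ^ K))) * Real.exp (L * W) * H ^ (2 * (T * L))) ^ 5 < 1) : False := by
  set α := D.φ D.a with hα
  set γ := D.φ D.g with hγ
  set η := D.φ e1 / D.φ e2 with hη
  have hα0 : 0 < α := zero_lt_one.trans D.a1
  have hγ0 : 0 < γ := zero_lt_one.trans D.g1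
  have hη0 : 0 < η := div_pos h10 h20
  set l1 := Real.log α with hl1
  set l2 := Real.log γ with hl2
  have l10 : 0 < l1 := Real.log_pos D.a1
  have l20 : 0 < l2 := Real.log_pos D.g1
  set R' := R + (2*L+1)*P2 with hR'
  set S' := S + (2*L+1)*P2 with hS'
  have hn0 : (0:ℝ) ≤ n := by
    have : (0:ℤ) ≤ n := by omega
    exact_mod_cast this
  have hB10 : 0 ≤ B1 := le_trans (by positivity) hB1
  have hW0 : 0 ≤ W := le_trans (by positivity) hW
  have hb0 : 0 < b := by linarith
  set U : ℕ := 3 * (2 * L + 1) * (K * (K + 1)) with hU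
  have : Nonempty (Idx K L) := ⟨⟨⟨⟨0, hK0⟩, 0⟩, 0, 0⟩⟩
  let k1 : Idx K L → ℕ := fun u => u.1.2.1
  let k2 : Idx K L → ℕ := fun u => u.1.1.1 - u.1.2.1
  let sI : Idx K L → ℤ := fun u => (u.2.1.1 : ℤ) - L
  have hk : ∀ u, k1 u + k2 u < K := fun u => by
    have := u.1.1.2; have := u.1.2.2; simp only [k1, k2]; omega
  have hs : ∀ u, |sI u| ≤ (L:ℤ) := fun u => by
    have := u.2.1.2; simp only [sI]; rw [abs_le]; omega
  have hsR : ∀ u, |((sI u : ℤ) : ℝ)| ≤ (L:ℝ) := fun u => by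
    rw [← Int.cast_abs]; exact_mod_cast hs u
  obtain ⟨p, hp0, hpX, hpF⟩ := aux_fn k1 k2 (fun u => (sI u : ℝ)) (fun u => D.φ (D.om u.2.2)) K J x W b l1 l2 B1 L hk hsR
    (fun u => D.rom _) (by
      rw [card_Idx]
      calc K * (J * (J + 1)) ≤ K * (6 * x * (2 * L + 1) * (K + 1)) := Nat.mul_le_mul_left _ hJ
        _ = _ := by ring) hW0 hB10 l10.le l20 hb1 hb2 hb3
  rw [card_Idx, ← hU] at hpF
  refine zero_estimate n m α γ η hα0 hγ0 hη0 D.ind (2*L+1) K R S T Rm P0 P2 c Cc hP0 hP2 hR hS hT hn hδ hc hcC hC1 hC2 hB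
    (PP D p) (PP_ne D p hp0) (PP_deg D p) ?_
  rintro ⟨r, s, t⟩ hx
  rw [mem_Box] at hx
  simp only at hx
  obtain ⟨hr, hss, ht⟩ := hx
  have hZ0 : Zf α γ η (r, s, t) ≠ 0 := by
    unfold Zf; positivity
  apply PP_eval D p _ _ hZ0
  set z1 : ℤ := r + t * n with hz1
  set z2 : ℤ := s - t * m with hz2
  have hpt0 : pt n m (r, s, t) 0 = (z1 : ℝ) := by simp [pt, hz1]
  have hpt1 : pt n m (r, s, t) 1 = (z2 : ℝ) := by simp [pt, hz2]
  rw [hpt0, hpt1]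
  have hrR : |(r:ℝ)| ≤ R' := by rw [← Int.cast_abs]; exact_mod_cast hr
  have hsR' : |(s:ℝ)| ≤ S' := by rw [← Int.cast_abs]; exact_mod_cast hss
  have htR : |(t:ℝ)| ≤ T := by rw [← Int.cast_abs]; exact_mod_cast ht
  have hz1B : |(z1 : ℝ)| ≤ B1 := by
    rw [hz1]; push_cast
    refine (abs_add_le _ _).trans (le_trans ?_ hB1)
    rw [abs_mul, abs_of_nonneg hn0]
    gcongr
  set w : ℝ := z1 * l1 + z2 * l2 with hw
  have hw' : w = r * l1 + s * l2 + t * Real.log η + t * Λ := by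
    rw [hw, hz1, hz2, hΛ]; push_cast; ring
  have hwΛ : |w - t * Λ| ≤ W := by
    have : w - t * Λ = r * l1 + s * l2 + t * Real.log η := by rw [hw']; ring
    rw [this]
    refine (abs_add_three _ _ _).trans (le_trans ?_ hW)
    rw [abs_mul, abs_mul, abs_mul, abs_of_pos l10, abs_of_pos l20]
    have : 0 ≤ (T:ℝ) * |Λ| := by positivity
    have : |(r:ℝ)| * l1 + |(s:ℝ)| * l2 + |(t:ℝ)| * |Real.log η| ≤ R' * l1 + S' * l2 + T * |Real.log η| := by gcongr
    linarith
  have hwW : |w| ≤ W := by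
    rw [hw']
    refine (abs_add_le _ _).trans (le_trans (add_le_add_left (abs_add_three _ _ _) _) (le_trans ?_ hW))
    rw [abs_mul, abs_mul, abs_mul, abs_mul, abs_of_pos l10, abs_of_pos l20]
    gcongr
  have hZ : Zf α γ η (r, s, t) = Real.exp (w - t * Λ) := by
    have : w - t * Λ = r * l1 + s * l2 + t * Real.log η := by rw [hw']; ring
    rw [this, Real.exp_add, Real.exp_add]
    unfold Zf
    simp only
    congr 1
    · congr 1
      · rw [mul_comm, Real.exp_mul, Real.exp_log hα0, Real.rpow_intCast]
      · rw [mul_comm, Real.exp_mul, Real.exp_log hγ0, Real.rpow_intCast]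
    · rw [mul_comm, Real.exp_mul, Real.exp_log hη0, Real.rpow_intCast]
  have hz1b : |(z1 : ℝ)| ≤ b := hz1B.trans hb2
  have hz2b : |(z2 : ℝ)| ≤ b := by
    have : (z2:ℝ) = (w - l1 * z1) / l2 := by rw [hw]; field_simp; ring
    rw [this, abs_div, abs_of_pos l20]
    refine le_trans ?_ hb3
    gcongr
    refine (abs_sub _ _).trans ?_
    rw [abs_mul, abs_of_pos l10]
    have : l1 * |(z1:ℝ)| ≤ l1 * B1 := by gcongr
    linarith
  set Q : ℝ := (U : ℝ) * (20 ^ x * (3 * b ^ K)) with hQ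
  have hQ0 : 0 ≤ Q := by positivity
  set Y := ∑ u : Idx K L, (p u : ℝ) * (D.φ (D.om u.2.2) * ((z1:ℝ) ^ (u.1.2.1) * (z2:ℝ) ^ (u.1.1.1 - u.1.2.1) * Zf α γ η (r, s, t) ^ ((u.2.1.1 : ℤ) - L))) with hY
  have hFb := hpF z1 z2 w hz1B hwW hw
  have hYF : |Y - ∑ u, (p u : ℝ) * (D.φ (D.om u.2.2) * ((z1:ℝ) ^ k1 u * (z2:ℝ) ^ k2 u * Real.exp ((sI u : ℝ) * w)))| ≤ Q * (Real.exp (L * W) * (L * (T * |Λ|))) := by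
    rw [hY, ← Finset.sum_sub_distrib]
    refine (Finset.abs_sum_le_sum_abs _ _).trans ?_
    have : ∀ u ∈ Finset.univ, |(p u : ℝ) * (D.φ (D.om u.2.2) * ((z1:ℝ) ^ (u.1.2.1) * (z2:ℝ) ^ (u.1.1.1 - u.1.2.1) * Zf α γ η (r, s, t) ^ ((u.2.1.1 : ℤ) - L))) - (p u : ℝ) * (D.φ (D.om u.2.2) * ((z1:ℝ) ^ k1 u * (z2:ℝ) ^ k2 u * Real.exp ((sI u : ℝ) * w)))| ≤ 20 ^ x * (3 * (b ^ K * (Real.exp (L * W) * (L * (T * |Λ|))))) := by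
      intro u _
      have e : (p u : ℝ) * (D.φ (D.om u.2.2) * ((z1:ℝ) ^ (u.1.2.1) * (z2:ℝ) ^ (u.1.1.1 - u.1.2.1) * Zf α γ η (r, s, t) ^ ((u.2.1.1 : ℤ) - L))) - (p u : ℝ) * (D.φ (D.om u.2.2) * ((z1:ℝ) ^ k1 u * (z2:ℝ) ^ k2 u * Real.exp ((sI u : ℝ) * w)))
        = (p u : ℝ) * (D.φ (D.om u.2.2) * (((z1:ℝ) ^ k1 u * (z2:ℝ) ^ k2 u) * (Real.exp ((sI u : ℝ) * (w - t * Λ)) - Real.exp ((sI u : ℝ) * w)))) := by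
        have : Zf α γ η (r, s, t) ^ ((u.2.1.1 : ℤ) - L) = Real.exp ((sI u : ℝ) * (w - t * Λ)) := by
          rw [hZ, mul_comm (sI u : ℝ), Real.exp_mul, Real.rpow_intCast]
        rw [this]; simp only [k1, k2]; ring
      rw [e, abs_mul, abs_mul, abs_mul, abs_mul, abs_pow, abs_pow]
      have q1 : |(p u : ℝ)| ≤ 20 ^ x := by rw [← Int.cast_abs]; exact_mod_cast hpX u
      have q2 : |(z1:ℝ)| ^ k1 u * |(z2:ℝ)| ^ k2 u ≤ b ^ K := by
        calc _ ≤ b ^ k1 u * b ^ k2 u := by gcongr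
          _ = b ^ (k1 u + k2 u) := (pow_add _ _ _).symm
          _ ≤ _ := pow_le_pow_right₀ hb1 (hk u).le
      have q3 : |Real.exp ((sI u : ℝ) * (w - t * Λ)) - Real.exp ((sI u : ℝ) * w)| ≤ Real.exp (L * W) * (L * (T * |Λ|)) := by
        have hh : ∀ v : ℝ, |v| ≤ W → (sI u : ℝ) * v ≤ L * W := fun v hv => by
          refine (le_abs_self _).trans ?_
          rw [abs_mul]
          gcongr
          exact hsR u
        refine (exp_diff _ _ (L * W) (hh _ hwΛ) (hh _ hwW)).trans ?_
        have : (sI u : ℝ) * (w - t * Λ) - (sI u : ℝ) * w = -((sI u : ℝ) * (t * Λ)) := by ring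
        rw [this, abs_neg, abs_mul, abs_mul]
        gcongr
        exact hsR u
      gcongr
      exact D.rom _
    refine (Finset.sum_le_card_nsmul _ _ _ this).trans ?_
    rw [Finset.card_univ, card_Idx, ← hU, nsmul_eq_mul, hQ]
    apply le_of_eq; ring
  have hYb : |Y| ≤ (K * J + 1) * (2 * Q * (Real.exp (20 * (L * W)) / 20 ^ J)) + Q * (Real.exp (L * W) * (L * (T * |Λ|))) := by
    have e := abs_add_le (Y - ∑ u, (p u : ℝ) * (D.φ (D.om u.2.2) * ((z1:ℝ) ^ k1 u * (z2:ℝ) ^ k2 u * Real.exp ((sI u : ℝ) * w)))) (∑ u, (p u : ℝ) * (D.φ (D.om u.2.2) * ((z1:ℝ) ^ k1 u * (z2:ℝ) ^ k2 u * Real.exp ((sI u : ℝ) * w))))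
    rw [sub_add_cancel] at e
    have e2 : ((K * J + 1) * (2 * (20 ^ x * (U * (3 * b ^ K * (Real.exp (20 * (L * W)) / 20 ^ J))))) : ℝ) = (K * J + 1) * (2 * Q * (Real.exp (20 * (L * W)) / 20 ^ J)) := by
      rw [hQ]; ring
    rw [e2] at hFb
    linarith
  refine vanish D e1 e2 h1 h2 (fun h => by rw [h, map_zero] at h10; exact lt_irrefl _ h10) (fun h => by rw [h, map_zero] at h20; exact lt_irrefl _ h20)
    H hH1 c1 c2 k1 k2 sI (fun u => u.2.2) K L x b (Real.exp (L * W)) hb1 hk hs p hpX R' S' T r s t z1 z2 hr hss ht hz1b hz2b ?_ Y rfl ?_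
  · rw [← hα, ← hγ, ← Real.exp_log hα0, ← Real.exp_log hγ0, ← Real.exp_nat_mul, ← Real.exp_nat_mul, ← Real.exp_add]
    apply Real.exp_le_exp.mpr
    push_cast
    have : (R' : ℝ) * l1 + S' * l2 ≤ W := by
      have : 0 ≤ (T:ℝ) * |Real.log η| := by positivity
      have : 0 ≤ (T:ℝ) * |Λ| := by positivity
      linarith
    calc _ = (L:ℝ) * (R' * l1 + S' * l2) := by ring
      _ ≤ _ := by gcongr
  · rw [card_Idx, ← hU, ← hQ]
    refine lt_of_le_of_lt ?_ hsm
    gcongr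
end part9x

section part10x
lemma bracket (n m D : ℤ) (h1 : D < 142 * m - 243 * n) (h2 : D < 166 * n - 97 * m) (hD : 0 ≤ D) (p q : ℤ) (hpq : p ≠ 0 ∨ q ≠ 0)
    (_hp : |p| < 250) (hq : |q| < 250) : D < |q * n + p * m| := by
  obtain ⟨x, hx⟩ : ∃ x : ℤ, x = 166 * p + 97 * q := ⟨_, rfl⟩
  obtain ⟨y, hy⟩ : ∃ y : ℤ, y = 243 * p + 142 * q := ⟨_, rfl⟩
  have ep : p = 142 * x - 97 * y := by subst hx hy; ring
  have eq : q = 166 * y - 243 * x := by subst hx hy; ring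
  have e : q * n + p * m = x * (142 * m - 243 * n) + y * (166 * n - 97 * m) := by rw [ep, eq]; ring
  rw [e]
  set A := 142 * m - 243 * n
  set B := 166 * n - 97 * m
  rw [abs_lt] at hq
  have hxy : x ≠ 0 ∨ y ≠ 0 := by
    by_contra hcon
    push Not at hcon
    rw [hcon.1, hcon.2] at ep eq
    omega
  rcases lt_trichotomy x 0 with hx0 | hx0 | hx0
  · have : y ≤ 0 := by omega
    have : x * A + y * B ≤ -A := by nlinarith
    rw [lt_abs]; right; linarith
  · rw [hx0] at hxy ⊢
    rcases lt_trichotomy y 0 with hy0 | hy0 | hy0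
    · rw [lt_abs]; right; nlinarith
    · omega
    · rw [lt_abs]; left; nlinarith
  · have : 0 ≤ y := by omega
    have : A ≤ x * A + y * B := by nlinarith
    rw [lt_abs]; left; linarith

lemma nat_conds (L h : ℕ) (hL : 1050 ≤ L) (hh : 2 ≤ h) :
    (4*(9000*L^2*h)+1)*((4*(16200*L^2*h)+1)*(4*(7500*L^2)+1)) ≤ (8400000*L^3*h)^2 ∧
    (2*(7500*L^2)+1)*(2*(16200*L^2*h)/(100*L)+1) ≤ 8400000*L^3*h+1 ∧
    (2*L+1)*(450000*L^2*h) ≤ 8400000*L^3*h+1 ∧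
    (8400000*L^3*h+1)*((2*L+1)*(450000*L^2*h)) + (2*(7500*L^2)+1)*(2*(16200*L^2*h)/250+1)*(450000*L^2*h) < (2*(9000*L^2*h)+1)*((2*(16200*L^2*h)+1)*(2*(7500*L^2)+1)) ∧
    (449000*L^3*h) * (449000*L^3*h + 1) ≤ 6 * (37500*L^3*h) * (2 * L + 1) * (450000*L^2*h + 1) := by
  obtain ⟨v, hv⟩ : ∃ v, v = L^2 := ⟨_, rfl⟩
  have hv0 : 1000000 ≤ v := by rw [hv]; nlinarith
  have hL3 : L^3 = L * v := by rw [hv]; ring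
  rw [hL3, ← hv]
  obtain ⟨u, hu⟩ : ∃ u, u = v * h := ⟨_, rfl⟩
  have hu0 : 1000000 ≤ u := by rw [hu]; nlinarith
  have r1 : ∀ k, k * v * h = k * u := fun k => by rw [hu]; ring
  have r2 : ∀ k, k * (L * v) * h = k * (L * u) := fun k => by rw [hu]; ring
  simp only [r1, r2]
  obtain ⟨E, hE⟩ : ∃ E, E = L * u := ⟨_, rfl⟩
  have hE0 : 1000000 ≤ E := by rw [hE]; nlinarith
  have hEE : u * (u * v) = E * E := by rw [hE, hv]; ring
  simp only [← hE]
  refine ⟨?_, ?_, ?_, ?_, ?_⟩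
  · calc (4*(9000*u)+1)*((4*(16200*u)+1)*(4*(7500*v)+1)) ≤ (36001 * u) * ((64801 * u) * (30001 * v)) := by
          gcongr <;> omega
      _ = 36001 * 64801 * 30001 * (u * (u * v)) := by ring
      _ ≤ (8400000 * E)^2 := by rw [hEE]; nlinarith
  · have : 2 * (16200 * u) / (100 * L) ≤ 324 * L * h := by
      apply Nat.div_le_of_le_mul
      rw [hu, hv]; apply le_of_eq; ring
    have h1 : 1 ≤ L * h := Nat.mul_pos (by omega) (by omega)
    calc _ ≤ (15001 * v) * (325 * (L * h)) := by
          gcongr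
          · omega
          · nlinarith
      _ = 15001 * 325 * E := by rw [hE, hu]; ring
      _ ≤ _ := by omega
  · calc (2 * L + 1) * (450000 * u) ≤ (3 * L) * (450000 * u) := by gcongr; omega
      _ = 1350000 * E := by rw [hE]; ring
      _ ≤ _ := by omega
  · have a1 : (8400000 * E + 1) * ((2 * L + 1) * (450000 * u)) ≤ 8400001 * E * (900450 * E) := by
      refine Nat.mul_le_mul ?_ ?_
      · omega
      · have : u ≤ E / 1000 := by
          rw [Nat.le_div_iff_mul_le (by norm_num), hE]; nlinarith
        have : (2 * L + 1) * (450000 * u) = 900000 * E + 450000 * u := by rw [hE]; ring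
        omega
    have a2 : (2 * (7500 * v) + 1) * (2 * (16200 * u) / 250 + 1) * (450000 * u) ≤ (15001 * v) * (130 * u) * (450000 * u) := by
      gcongr <;> omega
    have a3 : (15001 * v) * (130 * u) * (450000 * u) = 15001 * 130 * 450000 * (E * E) := by rw [← hEE]; ring
    have a4 : (18000 * u) * ((32400 * u) * (15000 * v)) ≤ (2 * (9000 * u) + 1) * ((2 * (16200 * u) + 1) * (2 * (7500 * v) + 1)) := by
      gcongr <;> omega
    have a5 : (18000 * u) * ((32400 * u) * (15000 * v)) = 18000 * 32400 * 15000 * (E * E) := by rw [← hEE]; ring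
    have a6 : 8400001 * E * (900450 * E) = 8400001 * 900450 * (E * E) := by ring
    have a7 : 0 < E * E := by positivity
    omega
  · calc 449000 * E * (449000 * E + 1) ≤ 449000 * E * (449001 * E) := Nat.mul_le_mul_left _ (by omega)
      _ = 449000 * 449001 * (E * E) := by ring
      _ ≤ 6 * 37500 * 2 * 450000 * (E * E) := Nat.mul_le_mul_right _ (by norm_num)
      _ = 6 * (37500 * E) * (2 * L) * (450000 * u) := by rw [show 6 * (37500 * E) * (2 * L) * (450000 * u) = 6 * 37500 * 2 * 450000 * (E * (L * u)) by ring, ← hE]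
      _ ≤ _ := by gcongr <;> omega

lemma exp_poly (E : ℝ) (hE : 1000000000 ≤ E) : (10:ℝ) ^ 104 * E ^ 24 ≤ Real.exp E := by
  have h1 : Real.exp E = Real.exp (E / 100) ^ 100 := by rw [← Real.exp_nat_mul]; congr 1; push_cast; ring
  have h2 : E / 100 ≤ Real.exp (E / 100) := by have := Real.add_one_le_exp (E / 100); linarith
  rw [h1]
  calc (10:ℝ) ^ 104 * E ^ 24 ≤ (10 ^ 7) ^ 76 * (E / 100) ^ 24 := by
        rw [div_pow]
        have : (0:ℝ) ≤ E ^ 24 := by positivity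
        have h3 : (10:ℝ) ^ 104 ≤ (10 ^ 7) ^ 76 / 100 ^ 24 := by norm_num
        calc (10:ℝ) ^ 104 * E ^ 24 ≤ (10 ^ 7) ^ 76 / 100 ^ 24 * E ^ 24 := by gcongr
          _ = _ := by ring
    _ ≤ (E / 100) ^ 76 * (E / 100) ^ 24 := by gcongr; linarith
    _ = (E / 100) ^ 100 := by rw [← pow_add]
    _ ≤ _ := by gcongr

lemma log20 : Real.log 20 < 2.99574 ∧ 2.9957 < Real.log 20 := by
  have h : Real.log 20 = 2 * Real.log 2 + Real.log 5 := by
    rw [show (20:ℝ) = 2 ^ 2 * 5 by norm_num, Real.log_mul (by norm_num) (by norm_num), Real.log_pow]; push_cast; ring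
  have := Real.log_two_gt_d9
  have := Real.log_two_lt_d9
  have := Real.log_five_gt_d9
  have := Real.log_five_lt_d9
  rw [h]; constructor <;> linarith

lemma pow20 (k : ℕ) : (20:ℝ) ^ k = Real.exp (k * Real.log 20) := by
  rw [Real.exp_nat_mul, Real.exp_log (by norm_num)]

lemma small_cond (S K1 K2 q w t J V E ℓ : ℝ) (hE : 1000000000 ≤ E) (hS : 0 ≤ S) (hK1 : 0 ≤ K1) (hK2 : 0 ≤ K2)
    (hS1 : S ≤ 10 ^ 14 * E ^ 3) (hK1' : K1 ≤ 10 ^ 13 * E ^ 2) (hK2' : K2 ≤ 10 ^ 13 * E ^ 2)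
    (hA : 6 * q + 25 * w + 12 * t - J ≤ -2 * E) (hB : 6 * q + 6 * w + 12 * t - V ≤ -2 * E) (hℓ : |ℓ| ≤ Real.exp (-V)) :
    (K1 * (2 * (S * Real.exp q) * (Real.exp (20 * w) / Real.exp J)) + (S * Real.exp q) * (Real.exp w * (K2 * |ℓ|))) * Real.exp (2 * t) *
      ((S * Real.exp q) * Real.exp w * Real.exp (2 * t)) ^ 5 < 1 := by
  have hE0 : 0 < E := by linarith
  have e1 : (K1 * (2 * (S * Real.exp q) * (Real.exp (20 * w) / Real.exp J)) + (S * Real.exp q) * (Real.exp w * (K2 * |ℓ|))) * Real.exp (2 * t) *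
      ((S * Real.exp q) * Real.exp w * Real.exp (2 * t)) ^ 5 ≤ S ^ 6 * (2 * K1) * Real.exp (6 * q + 25 * w + 12 * t - J) + S ^ 6 * K2 * Real.exp (6 * q + 6 * w + 12 * t - V) := by
    calc _ ≤ (K1 * (2 * (S * Real.exp q) * (Real.exp (20 * w) / Real.exp J)) + (S * Real.exp q) * (Real.exp w * (K2 * Real.exp (-V)))) * Real.exp (2 * t) *
      ((S * Real.exp q) * Real.exp w * Real.exp (2 * t)) ^ 5 := by gcongr
      _ = _ := by
        have f1 : Real.exp (6 * q + 25 * w + 12 * t - J) = Real.exp q ^ 6 * Real.exp (20 * w) * Real.exp w ^ 5 * Real.exp (2 * t) ^ 6 / Real.exp J := by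
          rw [← Real.exp_nat_mul, ← Real.exp_nat_mul, ← Real.exp_nat_mul, ← Real.exp_add, ← Real.exp_add, ← Real.exp_add, ← Real.exp_sub]; congr 1; push_cast; ring
        have f2 : Real.exp (6 * q + 6 * w + 12 * t - V) = Real.exp q ^ 6 * Real.exp w ^ 6 * Real.exp (2 * t) ^ 6 * Real.exp (-V) := by
          rw [← Real.exp_nat_mul, ← Real.exp_nat_mul, ← Real.exp_nat_mul, ← Real.exp_add, ← Real.exp_add, ← Real.exp_add]; congr 1; push_cast; ring
        rw [f1, f2]; ring
  refine lt_of_le_of_lt e1 ?_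
  have p1 := exp_poly E hE
  have hS6 : S ^ 6 ≤ 10 ^ 84 * E ^ 18 := by
    calc S ^ 6 ≤ (10 ^ 14 * E ^ 3) ^ 6 := by gcongr
      _ = _ := by ring
  have g : ∀ k : ℝ, 0 ≤ k → k ≤ 10 ^ 14 * E ^ 2 → S ^ 6 * k ≤ Real.exp E / 4 := by
    intro k hk0 hk
    calc S ^ 6 * k ≤ (10 ^ 84 * E ^ 18) * (10 ^ 14 * E ^ 2) := by gcongr
      _ = 10 ^ 98 * E ^ 20 := by ring
      _ ≤ (10 ^ 104 * E ^ 24) / 4 := by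
          have : (1:ℝ) ≤ E ^ 4 := one_le_pow₀ (by linarith)
          have h20 : 0 ≤ E ^ 20 := by positivity
          have : E ^ 24 = E ^ 20 * E ^ 4 := by ring
          nlinarith
      _ ≤ _ := by linarith
  have g1 := g (2 * K1) (by positivity) (by nlinarith [pow_pos hE0 2])
  have g2 := g K2 hK2 (by nlinarith [pow_pos hE0 2])
  have x1 : Real.exp (6 * q + 25 * w + 12 * t - J) ≤ Real.exp (-2 * E) := Real.exp_le_exp.mpr hA
  have x2 : Real.exp (6 * q + 6 * w + 12 * t - V) ≤ Real.exp (-2 * E) := Real.exp_le_exp.mpr hB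
  have x3 : Real.exp E * Real.exp (-2 * E) ≤ 1 := by rw [← Real.exp_add, Real.exp_le_one_iff]; linarith
  calc _ ≤ Real.exp E / 4 * Real.exp (-2 * E) + Real.exp E / 4 * Real.exp (-2 * E) := by gcongr
    _ = Real.exp E * Real.exp (-2 * E) / 2 := by ring
    _ < 1 := by linarith

lemma b_cond (L : ℝ) (hL : 1050 ≤ L) : 15000 * L ^ 2 ≤ Real.exp (L / 42) := by
  obtain ⟨s, rfl⟩ : ∃ s, L = 42 * (25 + s) := ⟨L / 42 - 25, by ring⟩
  have hs : 0 ≤ s := by linarith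
  have h1 : Real.exp (42 * (25 + s) / 42) = Real.exp 1 ^ 25 * Real.exp s := by
    rw [← Real.exp_nat_mul, ← Real.exp_add]; congr 1; push_cast; ring
  rw [h1]
  have h2 := Real.quadratic_le_exp_of_nonneg hs
  have h3 : (70000000000:ℝ) ≤ Real.exp 1 ^ 25 := by
    calc (70000000000:ℝ) ≤ 2.7182818283 ^ 25 := by norm_num
      _ ≤ _ := by gcongr; exact Real.exp_one_gt_d9.le
  calc 15000 * (42 * (25 + s)) ^ 2 ≤ 70000000000 * (1 + s + s ^ 2 / 2) := by nlinarith [sq_nonneg s]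
    _ ≤ _ := by gcongr
end part10x

section part11x
lemma fc1 (u E : ℝ) (hu : 0 < u) (h1 : 1050 * u ≤ E) (h2 : 1000000000 ≤ E) : 450000 * u * (449000 * E) + 1 ≤ 10 ^ 13 * E ^ 2 := by
  have e0 : 450000 * u * (449000 * E) ≤ 450000 * E * (449000 * E) := by gcongr; linarith
  have : 450000 * u * (449000 * E) + 1 ≤ 450000 * E * (450000 * E) := by nlinarith
  have e : 450000 * E * (450000 * E) = 202500000000 * E ^ 2 := by ring
  rw [e] at this
  refine this.trans ?_
  gcongr
  norm_num

lemma fc2 (E q k : ℝ) (h2 : 1000000000 ≤ E) (hk : E * k ≤ E * 2.99574) (hk2 : E * 2.9957 ≤ E * k) (hq : q = 37500 * E * k + 2250000 / 42 * E) :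
    6 * q + 25 * (9225 * E) + 12 * (7500 * E) - 449000 * E * k ≤ -2 * E ∧ 6 * q + 6 * (9225 * E) + 12 * (7500 * E) - 1150000 * E ≤ -2 * E := by
  subst hq
  constructor <;> linarith

set_option maxHeartbeats 1000000 in
theorem lin_form {F : Type} [Field F] [NumberField F] (D : Dat F)
    (a1 : 0.48 < Real.log (D.φ D.a)) (a2 : Real.log (D.φ D.a) < 0.482)
    (g1 : 0.28 < Real.log (D.φ D.g)) (g2 : Real.log (D.φ D.g) < 0.282)
    (t1 : 1.711277 * Real.log (D.φ D.g) ≤ Real.log (D.φ D.a)) (t2 : Real.log (D.φ D.a) ≤ 1.7113 * Real.log (D.φ D.g))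
    (e1 e2 : F) (h1 : IsIntegral ℤ e1) (h2 : IsIntegral ℤ e2)
    (h10 : 0 < D.φ e1) (h20 : 0 < D.φ e2) (h : ℕ) (hh : 2 ≤ h)
    (c1 : ∀ σ : F →+* ℂ, ‖σ e1‖ ≤ Real.exp h) (c2 : ∀ σ : F →+* ℂ, ‖σ e2‖ ≤ Real.exp h)
    (hη : |Real.log (D.φ e1 / D.φ e2)| ≤ h / 100)
    (n m : ℤ) (L : ℕ) (hL : 1050 ≤ L) (hn : 0 < n) (hLn : 10.5 * Real.log n ≤ L)
    (hbig : 13500000000 * ((L:ℤ) ^ 2 * h) ≤ n) :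
    Real.exp (-(1150000 * (L ^ 3 * h))) ≤ |n * Real.log (D.φ D.a) - m * Real.log (D.φ D.g) - Real.log (D.φ e1 / D.φ e2)| := by
  by_contra hcon
  push Not at hcon
  obtain ⟨n1, n2, n3, n4, n5⟩ := nat_conds L h hL hh
  set l1 := Real.log (D.φ D.a) with hl1
  set l2 := Real.log (D.φ D.g) with hl2
  set lη := Real.log (D.φ e1 / D.φ e2) with hlη
  set Λ : ℝ := n * l1 - m * l2 - lη with hΛ
  have hLr : (1050:ℝ) ≤ L := by exact_mod_cast hL
  have hhr : (2:ℝ) ≤ h := by exact_mod_cast hh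
  set v : ℝ := (L:ℝ) ^ 2 with hv
  have hv0 : 1050 * (L:ℝ) ≤ v := by rw [hv]; nlinarith
  set u : ℝ := v * h with hu
  have hu0 : 2 * v ≤ u := by rw [hu]; nlinarith
  have hhu : 1000000 * (h:ℝ) ≤ u := by
    have : (1000000:ℝ) ≤ v := by linarith
    rw [hu]; gcongr
  set E : ℝ := (L:ℝ) ^ 3 * h with hE
  have hEu : E = L * u := by rw [hE, hu, hv]; ring
  have hE1 : 1050 * u ≤ E := by rw [hEu]; nlinarith
  have hbigr : 13500000000 * u ≤ n := by
    have : ((13500000000 * ((L:ℤ) ^ 2 * h) : ℤ) : ℝ) ≤ n := by exact_mod_cast hbig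
    push_cast at this; rw [hu, hv]; linarith
  have hnr : (0:ℝ) < n := by exact_mod_cast hn
  have hΛ1 : 7500 * v * |Λ| ≤ 1 := by
    have q1 : |Λ| ≤ Real.exp (-(1150000 * E)) := hcon.le
    have q2 := Real.add_one_le_exp (1150000 * E)
    have q3 : Real.exp (-(1150000 * E)) * Real.exp (1150000 * E) = 1 := by rw [← Real.exp_add]; simp
    have q4 : 7500 * v ≤ Real.exp (1150000 * E) := by linarith
    calc 7500 * v * |Λ| ≤ Real.exp (1150000 * E) * Real.exp (-(1150000 * E)) := by gcongr
      _ = 1 := by rw [mul_comm]; exact q3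
  have hΛ2 : |Λ| ≤ 1 := by nlinarith [abs_nonneg Λ]
  -- ratio bounds
  have hnm : |(n:ℝ) * l1 - m * l2| ≤ h / 100 + 1 := by
    have : (n:ℝ) * l1 - m * l2 = Λ + lη := by rw [hΛ]; ring
    rw [this]; refine (abs_add_le _ _).trans (by linarith)
  rw [abs_le] at hnm
  have p1 : (n:ℝ) * (1.711277 * l2) ≤ n * l1 := mul_le_mul_of_nonneg_left t1 hnr.le
  have p2 : (n:ℝ) * l1 ≤ n * (1.7113 * l2) := mul_le_mul_of_nonneg_left t2 hnr.le
  have p3 : (h + 10) * (0.28:ℝ) ≤ (h + 10) * l2 := mul_le_mul_of_nonneg_left g1.le (by linarith)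
  have hmlo : 1.711277 * (n:ℝ) - h - 10 ≤ m := by
    have : l2 * (1.711277 * (n:ℝ) - h - 10) ≤ l2 * m := by linarith
    exact le_of_mul_le_mul_left this (by linarith)
  have hmhi : (m:ℝ) ≤ 1.7113 * n + h + 10 := by
    have : l2 * m ≤ l2 * (1.7113 * (n:ℝ) + h + 10) := by linarith
    exact le_of_mul_le_mul_left this (by linarith)
  have hd1 : (16200000 * ((L:ℤ) ^ 2 * h) : ℤ) < 142 * m - 243 * n := by
    have : (16200000 * u : ℝ) < 142 * m - 243 * n := by linarith
    rw [hu, hv] at this; exact_mod_cast this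
  have hd2 : (16200000 * ((L:ℤ) ^ 2 * h) : ℤ) < 166 * n - 97 * m := by
    have : (16200000 * u : ℝ) < 166 * n - 97 * m := by linarith
    rw [hu, hv] at this; exact_mod_cast this
  have hnexp : (n:ℝ) ≤ Real.exp (2 * L / 21) := by
    rw [← Real.log_le_iff_le_exp hnr]; linarith
  have hMP : ((2 * (L:ℝ) + 1) * (100 * L)) ≤ 100.5 * u := by
    have : ((2 * (L:ℝ) + 1) * (100 * L)) = 200 * v + 100 * L := by rw [hv]; ring
    linarith
  have cR : ((9000*L^2*h + (2*L+1)*(100*L) : ℕ) : ℝ) ≤ 9100.5 * u := by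
    push_cast
    have : 9000 * (L:ℝ) ^ 2 * h = 9000 * u := by rw [hu, hv]; ring
    linarith
  have cS : ((16200*L^2*h + (2*L+1)*(100*L) : ℕ) : ℝ) ≤ 16300.5 * u := by
    push_cast
    have : 16200 * (L:ℝ) ^ 2 * h = 16200 * u := by rw [hu, hv]; ring
    linarith
  have hu00 : 0 < u := by linarith
  have hT : (((7500*L^2 : ℕ)) : ℝ) = 7500 * v := by push_cast; rw [hv]
  have hB1b : ((9000*L^2*h + (2*L+1)*(100*L) : ℕ) : ℝ) + ((7500*L^2 : ℕ) : ℝ) * n ≤ (7500 * v + 1) * n := by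
    rw [hT]; linarith
  have hbb : 15000 * v * n ≤ Real.exp (5 * L / 42) := by
    have := b_cond L hLr
    have e : Real.exp (5 * L / 42) = Real.exp (L / 42) * Real.exp (2 * L / 21) := by rw [← Real.exp_add]; congr 1; ring
    rw [e]; gcongr
  have hvn : (n:ℝ) ≤ v * n := by nlinarith
  refine core D e1 e2 h1 h2 h10 h20 (Real.exp h) (Real.one_le_exp (by positivity)) c1 c2 n m L (450000*L^2*h) (449000*L^3*h) (37500*L^3*h)
    (9000*L^2*h) (16200*L^2*h) (7500*L^2) (16200*L^2*h) 250 (100*L) (8400000*L^3*h) (8400000*L^3*h+1) (9225 * u) (Real.exp (5 * L / 42))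
    (((9000*L^2*h + (2*L+1)*(100*L) : ℕ) : ℝ) + ((7500*L^2 : ℕ) : ℝ) * n) Λ (by positivity) (by norm_num) (by positivity) rfl
    (by gcongr; norm_num) le_rfl (by nlinarith) ?_ ?_ n1 le_rfl n2 n3 n4 n5 ?_ le_rfl (Real.one_le_exp (by positivity)) ?_ ?_ ?_
  · have : (0:ℤ) < (L:ℤ)^2 * h := by positivity
    push_cast
    linarith
  · intro p q hpq hp hq
    have := bracket n m _ hd1 hd2 (by positivity) p q hpq hp hq
    push_cast
    linarith
  · rw [hT]
    have b1 : ((9000*L^2*h + (2*L+1)*(100*L) : ℕ) : ℝ) * l1 ≤ 9100.5 * u * 0.482 := by gcongr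
    have b2 : ((16200*L^2*h + (2*L+1)*(100*L) : ℕ) : ℝ) * l2 ≤ 16300.5 * u * 0.282 := by gcongr
    have b3 : 7500 * v * |lη| ≤ 75 * u := by
      calc 7500 * v * |lη| ≤ 7500 * v * (h / 100) := by gcongr
        _ = 75 * u := by rw [hu]; ring
    linarith
  · linarith
  · rw [div_le_iff₀ (by linarith)]
    have b1 : l1 * (((9000*L^2*h + (2*L+1)*(100*L) : ℕ) : ℝ) + ((7500*L^2 : ℕ) : ℝ) * n) ≤ 0.482 * ((7500 * v + 1) * n) := by
      gcongr
    have b2 : 15000 * v * n * 0.28 ≤ Real.exp (5 * L / 42) * l2 := by gcongr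
    linarith
  · have f1 : ((37500 * L ^ 3 * h : ℕ) : ℝ) = 37500 * E := by push_cast; rw [hE]; ring
    have f2 : ((449000 * L ^ 3 * h : ℕ) : ℝ) = 449000 * E := by push_cast; rw [hE]; ring
    have f3 : ((450000 * L ^ 2 * h : ℕ) : ℝ) = 450000 * u := by push_cast; rw [hu, hv]; ring
    set q : ℝ := 37500 * E * Real.log 20 + 450000 * u * (5 * L / 42) with hq
    set U : ℝ := ((3 * (2 * L + 1) * (450000 * L ^ 2 * h * (450000 * L ^ 2 * h + 1)) : ℕ) : ℝ) with hU
    have hU' : U = 3 * (2 * L + 1) * (450000 * u * (450000 * u + 1)) := by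
      rw [hU]; push_cast; push_cast at f3; rw [f3]
    have s1 : U * (20 ^ (37500 * L ^ 3 * h) * (3 * Real.exp (5 * L / 42) ^ (450000 * L ^ 2 * h))) = (3 * U) * Real.exp q := by
      rw [pow20, f1, ← Real.exp_nat_mul, f3, hq, Real.exp_add]; ring
    have s2 : Real.exp h ^ (2 * (7500 * L ^ 2 * L)) = Real.exp (2 * (7500 * E)) := by
      rw [← Real.exp_nat_mul]; congr 1; push_cast; rw [hE]; ring
    have s3 : (20:ℝ) ^ (449000 * L ^ 3 * h) = Real.exp (449000 * E * Real.log 20) := by rw [pow20, f2]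
    have s4 : (L:ℝ) * (9225 * u) = 9225 * E := by rw [hEu]; ring
    have s5 : (L:ℝ) * (((7500 * L ^ 2 : ℕ) : ℝ) * |Λ|) = (7500 * (L * v)) * |Λ| := by rw [hT]; ring
    rw [s1, s2, s3, s4, s5]
    have hq' : q = 37500 * E * Real.log 20 + 2250000 / 42 * E := by rw [hq, hEu]; ring
    obtain ⟨d1, d2⟩ := log20
    have hEb : 1000000000 ≤ E := by nlinarith
    have hLE : (L:ℝ) ≤ E := by linarith
    have hLvE : (L:ℝ) * v ≤ E := by rw [hEu]; gcongr; linarith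
    have hE2 : 1 ≤ E ^ 2 := one_le_pow₀ (by linarith)
    have hE3 : E ≤ E ^ 2 := le_self_pow₀ (by linarith) (by norm_num)
    have dE1 : E * Real.log 20 ≤ E * 2.99574 := mul_le_mul_of_nonneg_left d1.le (by linarith)
    have dE2 : E * 2.9957 ≤ E * Real.log 20 := mul_le_mul_of_nonneg_left d2.le (by linarith)
    refine small_cond (3 * U) _ _ q (9225 * E) (7500 * E) _ (1150000 * E) E Λ hEb (by positivity) (by positivity) (by positivity) ?_ ?_ ?_ ?_ ?_ hcon.le
    · rw [hU']
      calc 3 * (3 * (2 * L + 1) * (450000 * u * (450000 * u + 1))) ≤ 3 * (3 * (3 * E) * (450000 * E * (450001 * E))) := by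
            gcongr <;> linarith
        _ = 3 * 9 * 450000 * 450001 * E ^ 3 := by ring
        _ ≤ _ := by gcongr; norm_num
    · rw [f2, f3]
      exact fc1 u E hu00 hE1 hEb
    · show 7500 * (L * v) ≤ 10 ^ 13 * E ^ 2
      have e1 : 7500 * ((L:ℝ) * v) ≤ 7500 * E ^ 2 := by gcongr; exact hLvE.trans hE3
      exact e1.trans (by gcongr; norm_num)
    · exact (fc2 E q _ hEb dE1 dE2 hq').1
    · exact (fc2 E q _ hEb dE1 dE2 hq').2
end part11x

section part12x
section fieldconstr
open Polynomial IntermediateField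

lemma rat_int (x : ℚ) (h : IsIntegral ℤ x) : ∃ y : ℤ, (y:ℚ) = x := by
  have := (IsIntegrallyClosed.isIntegral_iff (R := ℤ) (K := ℚ)).1 h
  simpa using this

lemma qmonic : (X ^ 2 - X - 1 : ℚ[X]).Monic := by monicity!
lemma qdeg : (X ^ 2 - X - 1 : ℚ[X]).natDegree = 2 := by compute_degree!
lemma cmonic : (X ^ 3 - X - 1 : ℚ[X]).Monic := by monicity!
lemma cdeg : (X ^ 3 - X - 1 : ℚ[X]).natDegree = 3 := by compute_degree!
lemma qmonicZ : (X ^ 2 - X - 1 : ℤ[X]).Monic := by monicity!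
lemma cmonicZ : (X ^ 3 - X - 1 : ℤ[X]).Monic := by monicity!

lemma int_of_q {R : Type} [CommRing R] (x : R) (h : x ^ 2 = x + 1) : IsIntegral ℤ x :=
  ⟨X ^ 2 - X - 1, qmonicZ, by simp [h]⟩
lemma int_of_c {R : Type} [CommRing R] (x : R) (h : x ^ 3 = x + 1) : IsIntegral ℤ x :=
  ⟨X ^ 3 - X - 1, cmonicZ, by simp [h]⟩

lemma qirr : Irreducible (X ^ 2 - X - 1 : ℚ[X]) := by
  rw [qmonic.irreducible_iff_roots_eq_zero_of_degree_le_three (by rw [qdeg]) (by rw [qdeg]; norm_num)]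
  rw [Multiset.eq_zero_iff_forall_notMem]
  intro x hx
  rw [mem_roots qmonic.ne_zero] at hx
  have hx' : x ^ 2 = x + 1 := by
    have : x ^ 2 - x - 1 = 0 := by simpa [IsRoot] using hx
    linarith
  obtain ⟨y, rfl⟩ := rat_int x (int_of_q x hx')
  have : y * (y - 1) = 1 := by have h : y ^ 2 = y + 1 := by exact_mod_cast hx'
                               linarith
  have h2 := Int.even_mul_pred_self y
  rw [this] at h2
  exact absurd h2 (by decide)

lemma cirr : Irreducible (X ^ 3 - X - 1 : ℚ[X]) := by
  rw [cmonic.irreducible_iff_roots_eq_zero_of_degree_le_three (by rw [cdeg]; norm_num) (by rw [cdeg])]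
  rw [Multiset.eq_zero_iff_forall_notMem]
  intro x hx
  rw [mem_roots cmonic.ne_zero] at hx
  have hx' : x ^ 3 = x + 1 := by
    have : x ^ 3 - x - 1 = 0 := by simpa [IsRoot] using hx
    linarith
  obtain ⟨y, rfl⟩ := rat_int x (int_of_c x hx')
  have : y * (y - 1) * (y + 1) = 1 := by have h : y ^ 3 = y + 1 := by exact_mod_cast hx'
                                         linarith
  have h2 := (Int.even_mul_pred_self y).mul_right (y + 1)
  rw [this] at h2
  exact absurd h2 (by decide)

lemma qminpoly {K : Type} [Field K] [Algebra ℚ K] {x : K} (h : x ^ 2 = x + 1) : minpoly ℚ x = X ^ 2 - X - 1 :=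
  (minpoly.eq_of_irreducible_of_monic qirr (by simp [h]) qmonic).symm
lemma cminpoly {K : Type} [Field K] [Algebra ℚ K] {x : K} (h : x ^ 3 = x + 1) : minpoly ℚ x = X ^ 3 - X - 1 :=
  (minpoly.eq_of_irreducible_of_monic cirr (by simp [h]) cmonic).symm

lemma conj_q (z : ℂ) (x : ℝ) (hx : 0 < x) (hq : x ^ 2 = x + 1) (h : z ^ 2 = z + 1) : ‖z‖ ≤ x ∧ ‖z⁻¹‖ ≤ x := by
  have key : ∀ w : ℝ, 0 ≤ w → w ^ 2 ≤ w + 1 → w ≤ x := by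
    intro w hw h; by_contra hc; push Not at hc
    have x1 : 1 < x := by nlinarith
    nlinarith
  have hz0 : z ≠ 0 := by rintro rfl; norm_num at h
  have hi : z⁻¹ = z - 1 := by
    field_simp; linear_combination -h
  constructor
  · apply key _ (norm_nonneg _)
    rw [← norm_pow, h]
    refine (norm_add_le _ _).trans (by simp)
  · apply key _ (norm_nonneg _)
    have h3 : z⁻¹ ^ 2 = 1 - z⁻¹ := by rw [hi]; linear_combination h
    rw [← norm_pow, h3]
    refine (norm_sub_le _ _).trans (by simp [add_comm])

lemma conj_c (z : ℂ) (x : ℝ) (hx : 1.3 < x) (hx2 : x < 1.33) (hq : x ^ 3 = x + 1) (h : z ^ 3 = z + 1) : ‖z‖ ≤ x ∧ ‖z⁻¹‖ ≤ x := by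
  by_cases hzx : z = x
  · subst hzx
    constructor
    · simp [abs_of_pos (by linarith : 0 < x)]
    · rw [norm_inv]; simp only [Complex.norm_real, Real.norm_eq_abs, abs_of_pos (by linarith : 0 < x)]
      exact (inv_le_one_of_one_le₀ (by linarith)).trans (by linarith)
  · have hq' : (x:ℂ) ^ 3 = x + 1 := by exact_mod_cast hq
    have h2 : z ^ 2 + x * z + ((x:ℂ) ^ 2 - 1) = 0 := by
      have : (z - x) * (z ^ 2 + x * z + ((x:ℂ) ^ 2 - 1)) = 0 := by linear_combination h - hq'
      rcases mul_eq_zero.1 this with h | h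
      · exact absurd (sub_eq_zero.1 h) hzx
      · exact h
    have hre := congrArg Complex.re h2
    have him := congrArg Complex.im h2
    simp [pow_two] at hre him
    have hN : ‖z‖ ^ 2 = x ^ 2 - 1 := by
      rw [← Complex.normSq_eq_norm_sq, Complex.normSq_apply]
      have h3 : z.im * (2 * z.re + x) = 0 := by linarith
      rcases mul_eq_zero.1 h3 with h3 | h3
      · rw [h3] at hre
        nlinarith [sq_nonneg (2 * z.re + x)]
      · have : x = - 2 * z.re := by linarith
        rw [this] at hre ⊢
        nlinarith
    have hn0 := norm_nonneg z
    constructor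
    · nlinarith
    · rw [norm_inv]
      have hp : 0 < ‖z‖ := by
        rcases hn0.lt_or_eq with h | h
        · exact h
        · rw [← h] at hN; nlinarith
      rw [inv_le_comm₀ hp (by linarith)]
      have : (x⁻¹) ^ 2 ≤ ‖z‖ ^ 2 := by
        rw [hN, inv_pow, inv_le_iff_one_le_mul₀ (by positivity)]
        nlinarith
      exact le_of_sq_le_sq this hn0


theorem exists_dat (x y : ℝ) (hx : 1.6 < x) (hx2 : x < 1.62) (hy : 1.3 < y) (hy2 : y < 1.33) (hxe : x ^ 2 = x + 1) (hye : y ^ 3 = y + 1) :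
    ∃ (F : Type) (_ : Field F) (_ : NumberField F) (D : Dat F), D.φ D.a = x ∧ D.φ D.g = y := by
  have ix : IsIntegral ℚ x := (int_of_q x hxe).tower_top
  have iy : IsIntegral ℚ y := (int_of_c y hye).tower_top
  have fx : Module.finrank ℚ ℚ⟮x⟯ = 2 := by rw [adjoin.finrank ix, qminpoly hxe, qdeg]
  have fy : Module.finrank ℚ ℚ⟮y⟯ = 3 := by rw [adjoin.finrank iy, cminpoly hye, cdeg]
  have ld : (ℚ⟮x⟯).LinearDisjoint ℚ⟮y⟯ := LinearDisjoint.of_finrank_coprime (by rw [fx, fy]; norm_num)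
  have hfin : Module.finrank ℚ (ℚ⟮x⟯ ⊔ ℚ⟮y⟯ : IntermediateField ℚ ℝ) = 6 := by rw [ld.finrank_sup, fx, fy]
  have : FiniteDimensional ℚ (ℚ⟮x⟯ ⊔ ℚ⟮y⟯ : IntermediateField ℚ ℝ) := Module.finite_of_finrank_pos (by rw [hfin]; norm_num)
  have nf : NumberField (ℚ⟮x⟯ ⊔ ℚ⟮y⟯ : IntermediateField ℚ ℝ) := ⟨⟩
  have mx : x ∈ (ℚ⟮x⟯ ⊔ ℚ⟮y⟯ : IntermediateField ℚ ℝ) := (le_sup_left : ℚ⟮x⟯ ≤ _) (mem_adjoin_simple_self ℚ x)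
  have my : y ∈ (ℚ⟮x⟯ ⊔ ℚ⟮y⟯ : IntermediateField ℚ ℝ) := (le_sup_right : ℚ⟮y⟯ ≤ _) (mem_adjoin_simple_self ℚ y)
  generalize hFd : (ℚ⟮x⟯ ⊔ ℚ⟮y⟯ : IntermediateField ℚ ℝ) = F at *
  let a : F := ⟨x, mx⟩
  let g : F := ⟨y, my⟩
  have hae : a ^ 2 = a + 1 := Subtype.ext hxe
  have hge : g ^ 3 = g + 1 := Subtype.ext hye
  have a0 : a ≠ 0 := by intro h; rw [h] at hae; norm_num at hae
  have g0 : g ≠ 0 := by intro h; rw [h] at hge; norm_num at hge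
  have hai : a⁻¹ = a - 1 := by field_simp; linear_combination -hae
  have hgi : g⁻¹ = g ^ 2 - 1 := by field_simp; linear_combination -hge
  have ia := int_of_q a hae
  have ig := int_of_c g hge
  have ca : ∀ σ : F →+* ℂ, ‖σ a‖ ≤ x ∧ ‖σ a⁻¹‖ ≤ x := by
    intro σ
    rw [map_inv₀]
    refine conj_q _ x (by linarith) hxe ?_
    rw [← map_pow, hae]; simp
  have cg : ∀ σ : F →+* ℂ, ‖σ g‖ ≤ y ∧ ‖σ g⁻¹‖ ≤ y := by
    intro σ
    rw [map_inv₀]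
    refine conj_c _ y hy hy2 hye ?_
    rw [← map_pow, hge]; simp
  have bnd : ∀ i : Fin 2, ∀ j : Fin 3, x ^ (i:ℕ) * y ^ (j:ℕ) ≤ 3 := by
    intro i j
    have e1 : x ^ (i:ℕ) ≤ 1.62 := by fin_cases i <;> simp <;> linarith
    have e2 : y ^ (j:ℕ) ≤ 1.77 := by fin_cases j <;> simp <;> nlinarith
    calc x ^ (i:ℕ) * y ^ (j:ℕ) ≤ 1.62 * 1.77 := by gcongr
      _ ≤ 3 := by norm_num
  let en : Fin 6 ≃ Fin 2 × Fin 3 := (finProdFinEquiv (m := 2) (n := 3)).symm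
  refine ⟨F, inferInstance, nf, 
   { φ := algebraMap F ℝ
     a := a
     g := g
     om := fun i => a ^ ((en i).1 : ℕ) * g ^ ((en i).2 : ℕ)
     hd := hfin.le
     ha := ia
     ha' := by rw [hai]; exact ia.sub isIntegral_one
     hg := ig
     hg' := by rw [hgi]; exact (ig.pow 2).sub isIntegral_one
     hom := fun i => (ia.pow _).mul (ig.pow _)
     a1 := by show 1 < x; linarith
     g1 := by show 1 < y; linarith
     ca := fun σ => (ca σ).1
     ca' := fun σ => (ca σ).2
     cg := fun σ => (cg σ).1
     cg' := fun σ => (cg σ).2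
     com := ?_
     rom := ?_
     lin := ?_
     ind := ?_ }, rfl, rfl⟩
  · intro σ i
    rw [map_mul, map_pow, map_pow, norm_mul, norm_pow, norm_pow]
    refine le_trans ?_ (bnd (en i).1 (en i).2)
    gcongr
    · exact (ca σ).1
    · exact (cg σ).1
  · intro i
    show |x ^ _ * y ^ _| ≤ 3
    rw [abs_of_nonneg (by positivity)]
    exact bnd _ _
  · have l1 : LinearIndependent ℚ (fun i : Fin 2 => (AdjoinSimple.gen ℚ x) ^ (i:ℕ)) := by
      have := linearIndependent_pow (K := ℚ) (AdjoinSimple.gen ℚ x)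
      have hdg : (minpoly ℚ (AdjoinSimple.gen ℚ x)).natDegree = 2 := by rw [qminpoly (Subtype.ext hxe), qdeg]
      exact this.comp (Fin.cast hdg.symm) (Fin.cast_injective _)
    have l2 : LinearIndependent ℚ (fun i : Fin 3 => (AdjoinSimple.gen ℚ y) ^ (i:ℕ)) := by
      have := linearIndependent_pow (K := ℚ) (AdjoinSimple.gen ℚ y)
      have hdg : (minpoly ℚ (AdjoinSimple.gen ℚ y)).natDegree = 3 := by rw [cminpoly (Subtype.ext hye), cdeg]
      exact this.comp (Fin.cast hdg.symm) (Fin.cast_injective _)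
    have l3 := (ld.linearIndependent_mul l1 l2).comp en en.injective
    rw [Fintype.linearIndependent_iff] at l3
    intro c hc
    have h4 := l3 (fun i => (c i : ℚ)) (by
      rw [← hc]
      refine Finset.sum_congr rfl fun i _ => ?_
      rw [Rat.smul_def]; push_cast
      rfl)
    funext i
    exact_mod_cast h4 i
  · intro p q hpq
    change x ^ p * y ^ q = 1 at hpq
    have hx0 : (0:ℝ) < x := by linarith
    have hy0 : (0:ℝ) < y := by linarith
    have hin : x ^ p ∈ ℚ⟮x⟯ ⊓ ℚ⟮y⟯ := by
      refine ⟨zpow_mem (mem_adjoin_simple_self ℚ x) p, ?_⟩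
      have : x ^ p = y ^ (-q) := by rw [zpow_neg]; exact eq_inv_of_mul_eq_one_left hpq
      rw [this]
      exact zpow_mem (mem_adjoin_simple_self ℚ y) _
    rw [ld.inf_eq_bot, mem_bot] at hin
    obtain ⟨r, hr⟩ := hin
    have hxi : x⁻¹ = x - 1 := by field_simp; linear_combination -hxe
    have i1 : IsIntegral ℤ x := int_of_q x hxe
    have i2 : IsIntegral ℤ x⁻¹ := by rw [hxi]; exact i1.sub isIntegral_one
    have i3 := int_zpow i1 i2 p
    have i4 := int_zpow i1 i2 (-p)
    rw [← hr] at i3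
    rw [zpow_neg, ← hr, ← map_inv₀] at i4
    rw [isIntegral_algebraMap_iff (algebraMap ℚ ℝ).injective] at i3 i4
    obtain ⟨s, hs⟩ := rat_int _ i3
    obtain ⟨t, ht⟩ := rat_int _ i4
    have hr0 : 0 < r := by
      have : (0:ℝ) < algebraMap ℚ ℝ r := by rw [hr]; positivity
      simpa using this
    have hst : s * t = 1 := by
      have : (s:ℚ) * t = 1 := by rw [hs, ht]; exact mul_inv_cancel₀ hr0.ne'
      exact_mod_cast this
    have hs0 : 0 < s := by rw [← hs] at hr0; exact_mod_cast hr0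
    have hs1 : s = 1 := by
      rcases Int.eq_one_or_neg_one_of_mul_eq_one hst with h | h <;> omega
    have hp1 : x ^ p = 1 := by rw [← hr, ← hs, hs1]; simp
    have hp0 : p = 0 := by
      rcases (zpow_eq_one_iff_right₀ hx0.le (by linarith)).1 hp1 with h
      exact h
    refine ⟨hp0, ?_⟩
    rw [hp1, one_mul] at hpq
    exact (zpow_eq_one_iff_right₀ hy0.le (by linarith)).1 hpq

end fieldconstr
end part12x

section part13x
lemma log_lt_of (x c : ℝ) (p q : ℕ) (hx : 0 < x) (hq : 0 < q) (h : x ^ q < c ^ p) (hc : c < Real.exp 1) (hc0 : 0 < c) : Real.log x < p / q := by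
  have h1 : Real.log (x ^ q) < p := by
    rw [Real.log_lt_iff_lt_exp (by positivity)]
    calc x ^ q < c ^ p := h
      _ ≤ (Real.exp 1) ^ p := by gcongr
      _ = Real.exp p := by rw [← Real.exp_nat_mul, mul_one]
  rw [Real.log_pow] at h1
  rw [lt_div_iff₀ (by positivity)]; linarith

lemma lt_log_of (x c : ℝ) (p q : ℕ) (hx : 0 < x) (hq : 0 < q) (h : c ^ p < x ^ q) (hc : Real.exp 1 < c) : (p:ℝ) / q < Real.log x := by
  have h1 : (p:ℝ) < Real.log (x ^ q) := by
    rw [Real.lt_log_iff_exp_lt (by positivity)]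
    calc Real.exp p = (Real.exp 1) ^ p := by rw [← Real.exp_nat_mul, mul_one]
      _ ≤ c ^ p := by gcongr
      _ < _ := h
  rw [Real.log_pow] at h1
  rw [div_lt_iff₀ (by positivity)]; linarith

lemma q_bounds (x : ℝ) (hx : 0 < x) (h : x ^ 2 = x + 1) : 1.6180339887 < x ∧ x < 1.6180339888 := by
  have x1 : 1 < x := by nlinarith
  constructor <;> · by_contra hc; push Not at hc; nlinarith

lemma c_bounds (x : ℝ) (hx : 1 < x) (h : x ^ 3 = x + 1) : 1.3247179572 < x ∧ x < 1.3247179573 := by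
  have key : ∀ c : ℝ, (x - c) * (x ^ 2 + x * c + c ^ 2 - 1) = - (c ^ 3 - c - 1) := by
    intro c; linear_combination h
  have pos : ∀ c : ℝ, 1 < c → 0 < x ^ 2 + x * c + c ^ 2 - 1 := by
    intro c hc; nlinarith
  constructor
  · have := key 1.3247179572
    by_contra hc; push Not at hc
    have := pos 1.3247179572 (by norm_num)
    nlinarith
  · have := key 1.3247179573
    by_contra hc; push Not at hc
    have := pos 1.3247179573 (by norm_num)
    nlinarith

set_option exponentiation.threshold 2000 in
lemma log_nums (x y : ℝ) (hx1 : 1.6180339887 < x) (hx2 : x < 1.6180339888) (hy1 : 1.3247179572 < y) (hy2 : y < 1.3247179573) :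
    0.48 < Real.log x ∧ Real.log x < 0.482 ∧ 0.28 < Real.log y ∧ Real.log y < 0.282 ∧
    1.711277 * Real.log y ≤ Real.log x ∧ Real.log x ≤ 1.7113 * Real.log y := by
  have e1 := Real.exp_one_gt_d9
  have e2 := Real.exp_one_lt_d9
  have x0 : 0 < x := by linarith
  have y0 : 0 < y := by linarith
  have A : 0.48 < Real.log x := by
    have := lt_log_of x 2.7182818286 12 25 x0 (by norm_num) (lt_of_lt_of_le (b := 1.6180339887 ^ 25) (by norm_num) (by gcongr)) e2
    norm_num at this ⊢; exact this
  have B : Real.log x < 0.482 := by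
    have := log_lt_of x 2.7182818283 241 500 x0 (by norm_num) (lt_of_le_of_lt (b := 1.6180339888 ^ 500) (by gcongr) (by norm_num)) e1 (by norm_num)
    norm_num at this ⊢; exact this
  have C : 0.28 < Real.log y := by
    have := lt_log_of y 2.7182818286 7 25 y0 (by norm_num) (lt_of_lt_of_le (b := 1.3247179572 ^ 25) (by norm_num) (by gcongr)) e2
    norm_num at this ⊢; exact this
  have D : Real.log y < 0.282 := by
    have := log_lt_of y 2.7182818283 141 500 y0 (by norm_num) (lt_of_le_of_lt (b := 1.3247179573 ^ 500) (by gcongr) (by norm_num)) e1 (by norm_num)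
    norm_num at this ⊢; exact this
  refine ⟨A, B, C, D, ?_, ?_⟩
  · have h : y ^ 895 < x ^ 523 := by
      calc y ^ 895 ≤ 1.3247179573 ^ 895 := by gcongr
        _ < 1.6180339887 ^ 523 := by norm_num
        _ ≤ _ := by gcongr
    have := Real.log_lt_log (by positivity) h
    rw [Real.log_pow, Real.log_pow] at this
    push_cast at this
    linarith
  · have h : x ^ 239 < y ^ 409 := by
      calc x ^ 239 ≤ 1.6180339888 ^ 239 := by gcongr
        _ < 1.3247179572 ^ 409 := by norm_num
        _ ≤ _ := by gcongr
    have := Real.log_lt_log (by positivity) h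
    rw [Real.log_pow, Real.log_pow] at this
    push_cast at this
    linarith

lemma exists_gamma : ∃ y : ℝ, 1 < y ∧ y ^ 3 = y + 1 := by
  have hc : ContinuousOn (fun y : ℝ => y ^ 3 - y - 1) (Set.Icc 1 2) := by fun_prop
  have := intermediate_value_Icc (by norm_num : (1:ℝ) ≤ 2) hc
  obtain ⟨y, hy, h⟩ := this (show (0:ℝ) ∈ _ by constructor <;> norm_num)
  refine ⟨y, lt_of_le_of_ne hy.1 ?_, by simp at h; linarith⟩
  rintro rfl; norm_num at h
end part13x

section part14x
lemma lucas_bound (x : ℝ) (hx1 : 1.6 < x) (hx2 : x < 1.62) (h : x ^ 2 = x + 1) (n : ℕ) : |(lucasSeq n : ℝ) - x ^ n| ≤ 1 := by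
  have key : ∀ n, (lucasSeq n : ℝ) = x ^ n + (1 - x) ^ n ∧ (lucasSeq (n+1) : ℝ) = x ^ (n+1) + (1 - x) ^ (n+1) := by
    intro n
    induction n with
    | zero => simp [lucasSeq]; norm_num
    | succ k ih =>
      refine ⟨ih.2, ?_⟩
      have : lucasSeq (k + 1 + 1) = lucasSeq (k+1) + lucasSeq k := rfl
      rw [this]; push_cast; rw [ih.1, ih.2]
      linear_combination -(x ^ k + (1-x)^k) * h
  rw [(key n).1, add_sub_cancel_left, abs_pow]
  apply pow_le_one₀ (abs_nonneg _)
  rw [abs_le]; constructor <;> linarith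

lemma padovan_bound (y : ℝ) (hy1 : 1.3247179572 < y) (hy2 : y < 1.3247179573) (h : y ^ 3 = y + 1) (k : ℕ) :
    |(padovan k : ℝ) - y ^ (k + 4) / (3 * y ^ 2 - 1)| ≤ 1 := by
  set d := 3 * y ^ 2 - 1 with hd
  have hd0 : 0 < d := by rw [hd]; nlinarith
  set e : ℕ → ℝ := fun k => (padovan k : ℝ) - y ^ (k + 4) / d with he
  have r3 : ∀ k, e (k+3) = e (k+1) + e k := by
    intro k
    have : padovan (k + 3) = padovan (k+1) + padovan k := rfl
    simp only [he]
    rw [this]; push_cast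
    field_simp
    linear_combination - y^(k+4) * h
  have r2 : ∀ k, y * e (k+2) + y ^ 2 * e (k+1) + e k = 0 := by
    intro k
    induction k with
    | zero =>
      simp only [he]
      have p0 : padovan 0 = 1 := rfl
      have p1 : padovan 1 = 1 := rfl
      have p2 : padovan 2 = 1 := rfl
      simp only [zero_add, p0, p1, p2]
      push_cast
      field_simp
      rw [hd]
      linear_combination (-2 * y ^ 4 - 2 * y ^ 2 + 1) * h
    | succ k ih =>
      have := r3 k
      have e2 : e (k + 1 + 2) = e (k+3) := rfl
      have e3 : e (k + 1 + 1) = e (k+2) := rfl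
      rw [e2, e3]
      linear_combination y * this + y * ih - e (k+1) * h
  set Q : ℕ → ℝ := fun k => y * e (k+1) ^ 2 + y ^ 2 * e k * e (k+1) + e k ^ 2 with hQ
  have hQr : ∀ k, y * Q (k+1) = Q k := by
    intro k
    simp only [hQ]
    have := r2 k
    linear_combination (y * e (k+2) - e k) * this
  have hQ0 : Q 0 ≤ 0.25 := by
    have q1 : 1.7548 < y ^ 2 := by nlinarith
    have q2 : y ^ 2 < 1.7549 := by nlinarith
    have h4 : y ^ 4 = y ^ 2 + y := by linear_combination y * h
    have h5 : y ^ 5 = y ^ 2 + y + 1 := by linear_combination (y ^ 2 + 1) * h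
    have e0 : e 0 = 1 - y ^ 4 / d := by simp [he, padovan]
    have e1 : e 1 = 1 - y ^ 5 / d := by simp [he, padovan]
    have a1 : 0.2 ≤ e 0 := by rw [e0, h4, le_sub_comm, div_le_iff₀ hd0]; linarith
    have a2 : e 0 ≤ 0.3 := by rw [e0, h4, sub_le_comm, le_div_iff₀ hd0]; linarith
    have a3 : 0.03 ≤ e 1 := by rw [e1, h5, le_sub_comm, div_le_iff₀ hd0]; linarith
    have a4 : e 1 ≤ 0.05 := by rw [e1, h5, sub_le_comm, le_div_iff₀ hd0]; linarith
    simp only [hQ, zero_add]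
    calc y * e 1 ^ 2 + y ^ 2 * e 0 * e 1 + e 0 ^ 2 ≤ 1.4 * 0.05 ^ 2 + 1.8 * 0.3 * 0.05 + 0.3 ^ 2 := by
          gcongr <;> linarith
      _ ≤ _ := by norm_num
  have hQb : ∀ k, Q k ≤ 0.25 := by
    intro k
    induction k with
    | zero => exact hQ0
    | succ k ih =>
      have := hQr k
      by_contra hc; push Not at hc
      nlinarith
  have h1 := hQb k
  have h2 : 0.4 * e k ^ 2 ≤ Q k := by
    simp only [hQ]
    have h3 : y * (y * e (k+1) ^ 2 + y ^ 2 * e k * e (k+1) + e k ^ 2) = (y * e (k+1) + y ^ 2 / 2 * e k)^2 + (y - y ^ 4/4) * e k ^ 2 := by ring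
    have h4 : y ^ 4 = y ^ 2 + y := by linear_combination y * h
    have h5 : 0.54 ≤ y - y^4/4 := by rw [h4]; nlinarith
    have h6 : y * (0.4 * e k ^ 2) ≤ y * (y * e (k+1) ^ 2 + y ^ 2 * e k * e (k+1) + e k ^ 2) := by
      rw [h3]
      nlinarith [sq_nonneg (y * e (k+1) + y ^ 2 / 2 * e k), sq_nonneg (e k)]
    exact le_of_mul_le_mul_left h6 (by linarith)
  have h3 : e k ^ 2 ≤ 1 := by linarith
  exact (sq_le_one_iff_abs_le_one _).1 h3
end part14x

section part15x
lemma exp_two : 7 ≤ Real.exp 2 := by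
  have h := Real.exp_one_gt_d9
  have : Real.exp 2 = Real.exp 1 ^ 2 := by rw [← Real.exp_nat_mul]; norm_num
  rw [this]; nlinarith

lemma stepA {F : Type} [Field F] [NumberField F] (D : Dat F) (x y : ℝ) (hx : D.φ D.a = x) (hy : D.φ D.g = y)
    (hx1 : 1.6180339887 < x) (hx2 : x < 1.6180339888) (hy1 : 1.3247179572 < y) (hy2 : y < 1.3247179573)
    (e1 e2 : F) (i1 : IsIntegral ℤ e1) (i2 : IsIntegral ℤ e2) (p1 : 0 < D.φ e1) (p2 : 0 < D.φ e2)
    (h : ℕ) (hh : 2 ≤ h) (c1 : ∀ σ : F →+* ℂ, ‖σ e1‖ ≤ Real.exp (h - 2)) (c2 : ∀ σ : F →+* ℂ, ‖σ e2‖ ≤ Real.exp (h - 2))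
    (hη : |Real.log (D.φ e1) - Real.log (D.φ e2)| ≤ (h - 2) / 100)
    (n m L : ℕ) (hL : 1050 ≤ L) (hLn : 10.5 * Real.log ((n + 3 : ℕ) : ℝ) ≤ L) (hbig : 13500000000 * (L ^ 2 * h) ≤ n) :
    Real.exp (-(1150000 * (L ^ 3 * h))) ≤ |Real.log ((x ^ n * D.φ e1) / (y ^ (m + 4) / (3 * y ^ 2 - 1) * D.φ e2))| := by
  obtain ⟨A, B, C, E, t1, t2⟩ := log_nums x y hx1 hx2 hy1 hy2
  have q1 : 1.75487 < y ^ 2 := by nlinarith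
  have q2 : y ^ 2 < 1.75488 := by nlinarith
  have q3 : x ^ 3 < 4.2361 := by
    calc x ^ 3 < 1.6180339888 ^ 3 := by gcongr
      _ < _ := by norm_num
  have q4 : 4.236 < x ^ 3 := by
    calc (4.236:ℝ) < 1.6180339887 ^ 3 := by norm_num
      _ < _ := by gcongr
  have hd0 : 0 < 3 * y ^ 2 - 1 := by linarith
  have hx0 : 0 < x := by linarith
  have hy0 : 0 < y := by linarith
  have i3 : IsIntegral ℤ ((3 * D.g ^ 2 - 1) * e1) := by
    have := (((isIntegral_algebraMap (R := ℤ) (A := F) (x := 3)).mul (D.hg.pow 2)).sub isIntegral_one).mul i1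
    simpa using this
  have f1 : D.φ (D.a ^ 3 * e2) = x ^ 3 * D.φ e2 := by rw [map_mul, map_pow, hx]
  have f2 : D.φ ((3 * D.g ^ 2 - 1) * e1) = (3 * y ^ 2 - 1) * D.φ e1 := by
    rw [map_mul, map_sub, map_mul, map_pow, hy, map_one, map_ofNat]
  have hexp : Real.exp h = Real.exp 2 * Real.exp (h - 2) := by rw [← Real.exp_add]; congr 1; ring
  have l0 : |Real.log (x ^ 3) - Real.log (3 * y ^ 2 - 1)| ≤ 0.02 := by
    rw [← Real.log_div (by positivity) hd0.ne', abs_le]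
    constructor
    · rw [← inv_div, Real.log_inv]
      have h1 := Real.log_le_sub_one_of_pos (x := (3 * y ^ 2 - 1) / x ^ 3) (by positivity)
      have h2 : (3 * y ^ 2 - 1) / x ^ 3 ≤ 1.02 := by rw [div_le_iff₀ (by positivity)]; linarith
      linarith
    · have h1 := Real.log_le_sub_one_of_pos (x := x ^ 3 / (3 * y ^ 2 - 1)) (by positivity)
      have h2 : x ^ 3 / (3 * y ^ 2 - 1) ≤ 1.02 := by rw [div_le_iff₀ (by positivity)]; linarith
      linarith
  have key := lin_form D (by rwa [hx]) (by rwa [hx]) (by rwa [hy]) (by rwa [hy]) (by rwa [hx, hy]) (by rwa [hx, hy])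
    (D.a ^ 3 * e2) ((3 * D.g ^ 2 - 1) * e1) ((D.ha.pow 3).mul i2)
    i3
    (by rw [f1]; positivity) (by rw [f2]; positivity) h hh
    (by
      intro σ
      rw [map_mul, norm_mul, map_pow, norm_pow, hexp]
      have : ‖σ D.a‖ ≤ x := hx ▸ D.ca σ
      have := exp_two
      gcongr
      · calc ‖σ D.a‖ ^ 3 ≤ x ^ 3 := by gcongr
          _ ≤ _ := by linarith
      · exact c2 σ)
    (by
      intro σ
      rw [map_mul, norm_mul, hexp]
      have : ‖σ D.g‖ ≤ y := hy ▸ D.cg σ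
      have := exp_two
      gcongr
      · rw [map_sub, map_mul, map_pow, map_one, map_ofNat]
        refine (norm_sub_le _ _).trans ?_
        rw [norm_mul, norm_pow, norm_one]
        have : ‖(3:ℂ)‖ = 3 := by norm_num
        rw [this]
        calc 3 * ‖σ D.g‖ ^ 2 + 1 ≤ 3 * y ^ 2 + 1 := by gcongr
          _ ≤ _ := by linarith
      · exact c1 σ)
    (by
      rw [f1, f2, Real.log_div (by positivity) (by positivity), Real.log_mul (by positivity) p2.ne', Real.log_mul hd0.ne' p1.ne']
      rw [abs_le] at *
      constructor <;> linarith [l0.1, l0.2, hη.1, hη.2])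
    ((n + 3 : ℕ) : ℤ) ((m + 4 : ℕ) : ℤ) L hL (by positivity) (by exact_mod_cast hLn)
    (by have : ((13500000000 * (L ^ 2 * h) : ℕ) : ℤ) ≤ (n : ℤ) := by exact_mod_cast hbig
        push_cast at this ⊢; linarith)
  convert key using 2
  rw [f1, f2, hx, hy, Real.log_div (by positivity) (by positivity), Real.log_div (by positivity) (by positivity), Real.log_mul (by positivity) p1.ne',
    Real.log_mul (by positivity) p2.ne', Real.log_mul (by positivity) p2.ne', Real.log_mul hd0.ne' p1.ne', Real.log_div (by positivity) hd0.ne', Real.log_pow, Real.log_pow, Real.log_pow]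
  push_cast
  ring

lemma log_ratio (X Y M : ℝ) (hM : 0 < M) (hX : M ≤ X) (hY : M ≤ Y) : |Real.log (X / Y)| ≤ |X - Y| / M := by
  have hX0 : 0 < X := by linarith
  have hY0 : 0 < Y := by linarith
  have key : ∀ X Y : ℝ, 0 < X → M ≤ Y → Real.log (X / Y) ≤ |X - Y| / M := by
    intro X Y hX hY
    have hY0 : 0 < Y := by linarith
    have h1 := Real.log_le_sub_one_of_pos (x := X / Y) (by positivity)
    have h2 : X / Y - 1 = (X - Y) / Y := by field_simp
    rw [h2] at h1
    refine h1.trans ?_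
    calc (X - Y) / Y ≤ |X - Y| / Y := by gcongr; exact le_abs_self _
      _ ≤ _ := by gcongr
  rw [abs_le]
  constructor
  · have := key Y X hY0 hX
    rw [← inv_div Y X, Real.log_inv]
    rw [abs_sub_comm] at this
    linarith
  · exact key X Y hX0 hY
end part15x

section part16x
lemma fac {F : Type} [Field F] (φ : F →+* ℝ) (u : F) (z : ℝ) (hz : φ u = z) (hz1 : 1.32 < z)
    (hu : IsIntegral ℤ u⁻¹) (hc : ∀ σ : F →+* ℂ, ‖σ u⁻¹‖ ≤ z) (k : ℕ) (hk : 1 ≤ k) :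
    IsIntegral ℤ (1 - (u⁻¹) ^ k) ∧ φ (1 - (u⁻¹) ^ k) = 1 - (z ^ k)⁻¹ ∧ 0.24 ≤ 1 - (z ^ k)⁻¹ ∧ 1 - (z ^ k)⁻¹ ≤ 1 ∧
    -2 ≤ Real.log (1 - (z ^ k)⁻¹) ∧ Real.log (1 - (z ^ k)⁻¹) ≤ 0 ∧
    ∀ h : ℝ, k * Real.log z + 3 ≤ h → ∀ σ : F →+* ℂ, ‖σ (1 - (u⁻¹) ^ k)‖ ≤ Real.exp (h - 2) := by
  have hz0 : 0 < z := by linarith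
  have h1 : z ≤ z ^ k := le_self_pow₀ (by linarith) (by omega)
  have h2 : (z ^ k)⁻¹ ≤ 0.76 := by
    calc (z ^ k)⁻¹ ≤ (1.32)⁻¹ := by apply inv_anti₀ (by norm_num); linarith
      _ ≤ _ := by norm_num
  have h3 : 0 < (z ^ k)⁻¹ := by positivity
  refine ⟨isIntegral_one.sub (hu.pow k), by simp [hz], by linarith, by linarith, ?_, ?_, ?_⟩
  · rw [Real.le_log_iff_exp_le (by linarith), Real.exp_neg]
    calc (Real.exp 2)⁻¹ ≤ 7⁻¹ := inv_anti₀ (by norm_num) exp_two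
      _ ≤ _ := by norm_num at *; linarith
  · exact Real.log_nonpos (by linarith) (by linarith)
  · intro h hh σ
    rw [map_sub, map_one, map_pow]
    refine (norm_sub_le _ _).trans ?_
    rw [norm_one, norm_pow]
    calc 1 + ‖σ u⁻¹‖ ^ k ≤ z ^ k + z ^ k := by
          gcongr
          · linarith
          · exact hc σ
      _ = 2 * Real.exp (k * Real.log z) := by rw [Real.exp_nat_mul, Real.exp_log hz0]; ring
      _ ≤ Real.exp 1 * Real.exp (k * Real.log z) := by
          gcongr; have := Real.exp_one_gt_d9; linarith
      _ = Real.exp (1 + k * Real.log z) := by rw [Real.exp_add]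
      _ ≤ _ := Real.exp_le_exp.2 (by linarith)

lemma ext_bound (V z : ℝ) (hz : 0 < z) (k : ℕ) (h : Real.exp (-V) ≤ 73 * (z ^ k)⁻¹) : k * Real.log z ≤ V + 5 := by
  have h5 : 73 ≤ Real.exp 5 := by
    have : Real.exp 5 = Real.exp 2 * Real.exp 2 * Real.exp 1 := by rw [← Real.exp_add, ← Real.exp_add]; norm_num
    rw [this]
    have h1 := exp_two
    have h2 := Real.exp_one_gt_d9
    calc (73:ℝ) ≤ 7 * 7 * 2 := by norm_num
      _ ≤ _ := by gcongr; linarith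
  have h6 : Real.exp (k * Real.log z) ≤ Real.exp (V + 5) := by
    rw [Real.exp_nat_mul, Real.exp_log hz, Real.exp_add]
    have hV : Real.exp V * Real.exp (-V) = 1 := by rw [← Real.exp_add]; simp
    calc z ^ k = z ^ k * (Real.exp V * Real.exp (-V)) := by rw [hV, mul_one]
      _ ≤ z ^ k * (Real.exp V * (73 * (z ^ k)⁻¹)) := by gcongr
      _ = Real.exp V * 73 := by field_simp
      _ ≤ _ := by gcongr
  exact Real.exp_le_exp.1 h6

lemma ratios (A G X Y : ℝ) (hA : 1000000 ≤ A) (h : |A * (1 - X) - G * (1 - Y)| ≤ 4) (hX : 0.24 ≤ 1 - X) (hX1 : 0 < X) (hY : 0.24 ≤ 1 - Y)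
    (hY1 : 0 < Y) (hG : 0 < G) (hAX : 1 ≤ A * X) (hGY : 0.9 ≤ G * Y) :
    |Real.log (A * 1 / (G * 1))| ≤ 73 * max X Y ∧ |Real.log (A * (1 - X) / (G * 1))| ≤ 73 * Y ∧
    |Real.log (A * 1 / (G * (1 - Y)))| ≤ 73 * X ∧ |Real.log (A * (1 - X) / (G * (1 - Y)))| ≤ 73 * A⁻¹ := by
  have h' := abs_le.1 h
  have hA0 : 0 < A := by linarith
  have a1 : A * 0.24 ≤ A * (1 - X) := by gcongr
  have a2 : A * (1 - X) ≤ A := by nlinarith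
  have b1 : G * 0.24 ≤ G * (1 - Y) := by gcongr
  have b2 : G * (1 - Y) ≤ G := by nlinarith
  have c1 : 0.23 * A ≤ G * (1 - Y) := by linarith
  have c2 : 0.2 * G ≤ A * (1 - X) := by linarith
  refine ⟨?_, ?_, ?_, ?_⟩
  · refine (log_ratio _ _ (0.2 * G) (by positivity) (by linarith) (by linarith)).trans ?_
    rw [div_le_iff₀ (by positivity)]
    have hm1 := le_max_left X Y
    have hm2 := le_max_right X Y
    have e1 : G * Y ≤ G * max X Y := by gcongr
    have e2 : A * X ≤ A * max X Y := by gcongr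
    have e3 : 0.23 * A * max X Y ≤ G * max X Y := by gcongr; linarith
    rw [abs_le]
    constructor <;> linarith
  · refine (log_ratio _ _ (0.2 * G) (by positivity) (by linarith) (by linarith)).trans ?_
    rw [div_le_iff₀ (by positivity), abs_le]
    constructor <;> linarith
  · refine (log_ratio _ _ (0.2 * A) (by positivity) (by linarith) (by linarith)).trans ?_
    rw [div_le_iff₀ (by positivity), abs_le]
    constructor <;> linarith
  · refine (log_ratio _ _ (0.2 * A) (by positivity) (by linarith) (by linarith)).trans ?_
    rw [div_le_iff₀ (by positivity)]
    have : 73 * A⁻¹ * (0.2 * A) = 14.6 := by field_simp; norm_num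
    rw [this]; linarith

theorem chain {F : Type} [Field F] [NumberField F] (D : Dat F) (x y : ℝ) (hx : D.φ D.a = x) (hy : D.φ D.g = y)
    (hx1 : 1.6180339887 < x) (hx2 : x < 1.6180339888) (hy1 : 1.3247179572 < y) (hy2 : y < 1.3247179573)
    (a b n m n1 m1 L h2 h3 : ℕ) (ha : 1 ≤ a) (hb : 1 ≤ b) (hn1 : 1 ≤ n1) (hm1 : 1 ≤ m1) (hna : n = n1 + a) (hmb : m = m1 + b) (hn : 100 ≤ n)
    (heq : |x ^ n * (1 - (x ^ a)⁻¹) - y ^ (m + 4) / (3 * y ^ 2 - 1) * (1 - (y ^ b)⁻¹)| ≤ 4)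
    (hL : 1050 ≤ L) (hLn : 10.5 * Real.log ((n + 3 : ℕ) : ℝ) ≤ L)
    (hh2 : h2 = 1150000 * (L ^ 3 * 2) + 10) (hh3 : h3 = 1150000 * (L ^ 3 * h2) + 10)
    (hbig : 13500000000 * (L ^ 2 * h3) ≤ n) : n * Real.log x ≤ 1150000 * (L ^ 3 * h3) + 5 := by
  have hx0 : 0 < x := by linarith
  have hy0 : 0 < y := by linarith
  have q1 : 1.75487 < y ^ 2 := by nlinarith
  have q2 : y ^ 2 < 1.75488 := by nlinarith
  have hd0 : 0 < 3 * y ^ 2 - 1 := by linarith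
  obtain ⟨iX, pX, X1, X2, X3, X4, X5⟩ := fac D.φ D.a x hx (by linarith) D.ha' (fun σ => hx ▸ D.ca' σ) a ha
  obtain ⟨iY, pY, Y1, Y2, Y3, Y4, Y5⟩ := fac D.φ D.g y hy (by linarith) D.hg' (fun σ => hy ▸ D.cg' σ) b hb
  have hA : 1000000 ≤ x ^ n := by
    calc (1000000:ℝ) ≤ 1.6 ^ 100 := by norm_num
      _ ≤ x ^ 100 := by gcongr; linarith
      _ ≤ _ := by gcongr; linarith
  have hG : 0 < y ^ (m + 4) / (3 * y ^ 2 - 1) := by positivity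
  have hAX : 1 ≤ x ^ n * (x ^ a)⁻¹ := by
    rw [hna, pow_add, mul_assoc, mul_inv_cancel₀ (by positivity), mul_one]
    exact one_le_pow₀ (by linarith)
  have hGY : 0.9 ≤ y ^ (m + 4) / (3 * y ^ 2 - 1) * (y ^ b)⁻¹ := by
    have : y ^ (m + 4) / (3 * y ^ 2 - 1) * (y ^ b)⁻¹ = y ^ (m1 + 4) / (3 * y ^ 2 - 1) := by
      rw [hmb, show m1 + b + 4 = m1 + 4 + b by ring, pow_add y (m1 + 4) b]; field_simp
    rw [this, le_div_iff₀ hd0]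
    calc 0.9 * (3 * y ^ 2 - 1) ≤ 1.32 ^ 5 := by norm_num; linarith
      _ ≤ y ^ 5 := by gcongr; linarith
      _ ≤ _ := by gcongr <;> first | linarith | omega
  obtain ⟨r1, r2, r3, r4⟩ := ratios _ _ _ _ hA heq X1 (by positivity) Y1 (by positivity) hG hAX hGY
  have L3 : 1 ≤ L ^ 3 := Nat.one_le_pow _ _ (by omega)
  have h2b : 202 ≤ h2 := by omega
  have h23 : h2 ≤ h3 := by rw [hh3]; nlinarith
  have hb3 : ∀ h, h ≤ h3 → 13500000000 * (L ^ 2 * h) ≤ n := fun h hh => le_trans (by gcongr) hbig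
  have c2r : (h2:ℝ) = 1150000 * ((L:ℝ) ^ 3 * (2:ℕ)) + 10 := by rw [hh2]; push_cast; ring
  have c3r : (h3:ℝ) = 1150000 * ((L:ℝ) ^ 3 * h2) + 10 := by rw [hh3]; push_cast; ring
  have h2r : (202:ℝ) ≤ h2 := by exact_mod_cast h2b
  have h23r : (h2:ℝ) ≤ h3 := by exact_mod_cast h23
  have one : ∀ h : ℕ, 202 ≤ h → ∀ σ : F →+* ℂ, ‖σ 1‖ ≤ Real.exp (h - 2) := by
    intro h hh σ
    have : (202:ℝ) ≤ h := by exact_mod_cast hh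
    rw [map_one, norm_one]; exact Real.one_le_exp (by linarith)
  have lg1 : Real.log (D.φ 1) = 0 := by simp
  have p1 : 0 < D.φ 1 := by simp
  have pX0 : 0 < D.φ (1 - D.a⁻¹ ^ a) := by rw [pX]; linarith
  have pY0 : 0 < D.φ (1 - D.g⁻¹ ^ b) := by rw [pY]; linarith
  -- step 1
  have s1 := stepA D x y hx hy hx1 hx2 hy1 hy2 1 1 isIntegral_one isIntegral_one p1 p1 2 le_rfl
    (by intro σ; simp) (by intro σ; simp) (by simp) n m L hL hLn (hb3 2 (by omega))
  rw [map_one] at s1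
  have s1' := s1.trans r1
  -- step 2
  have s2 : a * Real.log x + 3 ≤ h3 ∧ b * Real.log y + 3 ≤ h3 := by
    rcases max_choice ((x ^ a)⁻¹) ((y ^ b)⁻¹) with hm | hm
    · rw [hm] at s1'
      have t := ext_bound _ x hx0 a s1'
      have s := stepA D x y hx hy hx1 hx2 hy1 hy2 (1 - D.a⁻¹ ^ a) 1 iX isIntegral_one pX0 p1 h2 (by omega)
        (X5 h2 (by linarith)) (one h2 h2b)
        (by rw [lg1, pX, abs_le]; constructor <;> linarith) n m L hL hLn (hb3 h2 h23)
      rw [map_one, pX] at s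
      have t2 := ext_bound _ y hy0 b (s.trans r2)
      constructor <;> linarith
    · rw [hm] at s1'
      have t := ext_bound _ y hy0 b s1'
      have s := stepA D x y hx hy hx1 hx2 hy1 hy2 1 (1 - D.g⁻¹ ^ b) isIntegral_one iY p1 pY0 h2 (by omega)
        (one h2 h2b) (Y5 h2 (by linarith))
        (by rw [lg1, pY, abs_le]; constructor <;> linarith) n m L hL hLn (hb3 h2 h23)
      rw [map_one, pY] at s
      have t2 := ext_bound _ x hx0 a (s.trans r3)
      constructor <;> linarith
  -- step 3
  have s := stepA D x y hx hy hx1 hx2 hy1 hy2 (1 - D.a⁻¹ ^ a) (1 - D.g⁻¹ ^ b) iX iY pX0 pY0 h3 (by omega)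
    (X5 h3 s2.1) (Y5 h3 s2.2)
    (by rw [pX, pY, abs_le]; constructor <;> linarith) n m L hL hLn (hb3 h3 le_rfl)
  rw [pX, pY] at s
  exact ext_bound _ x hx0 n (s.trans r4)
end part16x

section part17x
set_option exponentiation.threshold 3000 in
lemma num_logs : Real.log 1160 < 120 / 17 ∧ Real.log (4.6 * 10 ^ 13) < 63 / 2 ∧ 1200 / 11 < Real.log (2.4 * 10 ^ 47) ∧
    439 / 4 < Real.log (4.8 * 10 ^ 47) := by
  have e1 := Real.exp_one_gt_d9
  have e2 := Real.exp_one_lt_d9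
  refine ⟨?_, ?_, ?_, ?_⟩
  · have := log_lt_of 1160 2.7182818283 120 17 (by norm_num) (by norm_num) (by norm_num) e1 (by norm_num)
    exact_mod_cast this
  · have := log_lt_of (4.6 * 10 ^ 13) 2.7182818283 63 2 (by norm_num) (by norm_num) (by norm_num) e1 (by norm_num)
    exact_mod_cast this
  · have := lt_log_of (2.4 * 10 ^ 47) 2.7182818286 1200 11 (by norm_num) (by norm_num) (by norm_num) e2
    exact_mod_cast this
  · have := lt_log_of (4.8 * 10 ^ 47) 2.7182818286 439 4 (by norm_num) (by norm_num) (by norm_num) e2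
    exact_mod_cast this

lemma grow (n l L : ℝ) (hn : 2.4 * 10 ^ 47 ≤ n) (hL0 : 0 < L) (hl : l = Real.log (n + 3)) (hL : L ≤ 10.5 * l + 1) :
    4.6 * 10 ^ 13 * L ^ 11 ≤ n := by
  obtain ⟨a1, a2, a3, -⟩ := num_logs
  have hn0 : 0 < n := by linarith
  have b1 : 1200 / 11 < Real.log n := a3.trans_le (Real.log_le_log (by norm_num) hn)
  have b2 : Real.log (n + 3) ≤ Real.log n + 0.001 := by
    have e : n + 3 = n * (1 + 3 / n) := by field_simp
    rw [e, Real.log_mul hn0.ne' (by positivity)]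
    have h1 := Real.log_le_sub_one_of_pos (x := 1 + 3 / n) (by positivity)
    have h2 : 3 / n ≤ 0.001 := by rw [div_le_iff₀ hn0]; linarith
    linarith
  have b3 : Real.log L ≤ Real.log 1160 + L / 1160 - 1 := by
    have h1 := Real.log_le_sub_one_of_pos (x := L / 1160) (by positivity)
    rw [Real.log_div hL0.ne' (by norm_num)] at h1
    linarith
  rw [← Real.log_le_log_iff (by positivity) hn0, Real.log_mul (by positivity) (by positivity), Real.log_pow]
  push_cast
  linarith

lemma first_conj (n : ℝ) (hn : 300 ≤ n) (h : n ≤ 2.4 * 10 ^ 47) : n - 3 < 1.8 * 10 ^ 41 * (1 + Real.log (2 * n)) ^ 3 := by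
  obtain ⟨-, -, -, a4⟩ := num_logs
  by_cases hc : n ≤ 1.8 * 10 ^ 41
  · have h1 : 0 ≤ Real.log (2 * n) := Real.log_nonneg (by linarith)
    have h2 : 1 ≤ (1 + Real.log (2 * n)) ^ 3 := one_le_pow₀ (by linarith)
    nlinarith
  · push Not at hc
    have hn0 : 0 < n := by linarith
    set s := Real.log (4.8 * 10 ^ 47 / (2 * n)) with hs
    have hr : 1 ≤ 4.8 * 10 ^ 47 / (2 * n) := by rw [le_div_iff₀ (by positivity)]; linarith
    have s0 : 0 ≤ s := Real.log_nonneg hr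
    have s1 : s ≤ 30 := by
      rw [hs, Real.log_le_iff_le_exp (by positivity)]
      calc 4.8 * 10 ^ 47 / (2 * n) ≤ 2 ^ 30 := by rw [div_le_iff₀ (by positivity)]; linarith
        _ ≤ Real.exp 1 ^ 30 := by gcongr; have := Real.exp_one_gt_d9; linarith
        _ = _ := by rw [← Real.exp_nat_mul]; norm_num
    have s2 : Real.log (2 * n) = Real.log (4.8 * 10 ^ 47) - s := by
      rw [hs, Real.log_div (by positivity) (by positivity)]; ring
    have s3 : 1 + s ≤ 4.8 * 10 ^ 47 / (2 * n) := by
      have := Real.add_one_le_exp s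
      rw [hs, Real.exp_log (by positivity)] at this
      linarith
    have s4 : (1 + s) * n ≤ 2.4 * 10 ^ 47 := by
      rw [le_div_iff₀ (by positivity)] at s3; linarith
    have s5 : (110.75 - s) ^ 3 ≤ (1 + Real.log (2 * n)) ^ 3 := by
      gcongr
      · linarith
      · rw [s2]; linarith
    have s6 : 110.75 ^ 3 ≤ (1 + s) * (110.75 - s) ^ 3 := by
      have k1 : 110.75 ^ 3 - 3 * 110.75 ^ 2 * s ≤ (110.75 - s) ^ 3 := by nlinarith [mul_nonneg s0 s0]
      nlinarith
    have s7 : (1 + s) * n ≤ (1 + s) * (1.8 * 10 ^ 41 * (110.75 - s) ^ 3) := by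
      calc (1 + s) * n ≤ 2.4 * 10 ^ 47 := s4
        _ ≤ 1.8 * 10 ^ 41 * 110.75 ^ 3 := by norm_num
        _ ≤ 1.8 * 10 ^ 41 * ((1 + s) * (110.75 - s) ^ 3) := by gcongr
        _ = _ := by ring
    have s8 := le_of_mul_le_mul_left s7 (by linarith)
    calc n - 3 < n := by linarith
      _ ≤ _ := s8
      _ ≤ _ := by gcongr

theorem main_bound (n n₁ m m₁ : ℕ) (hn₁ : 1 ≤ n₁) (hnn₁ : n₁ < n)
    (hm₁ : 1 ≤ m₁) (hmm₁ : m₁ < m)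
    (heq : (lucasSeq n : ℤ) - (lucasSeq n₁ : ℤ) = (padovan m : ℤ) - (padovan m₁ : ℤ)) : (n : ℝ) < 2.4 * 10 ^ 47 := by
  by_contra hcon
  push Not at hcon
  obtain ⟨y, y1, hye⟩ := exists_gamma
  have hxe : Real.goldenRatio ^ 2 = Real.goldenRatio + 1 := Real.goldenRatio_sq
  have hx0 := Real.goldenRatio_pos
  generalize Real.goldenRatio = x at hxe hx0
  obtain ⟨hx1, hx2⟩ := q_bounds x hx0 hxe
  obtain ⟨hy1, hy2⟩ := c_bounds y y1 hye
  obtain ⟨F, _, _, D, hx, hy⟩ := exists_dat x y (by linarith) (by linarith) (by linarith) (by linarith) hxe hye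
  obtain ⟨lx, -⟩ := log_nums x y hx1 hx2 hy1 hy2
  have hy0 : 0 < y := by linarith
  have q1 : 1.75487 < y ^ 2 := by nlinarith
  have hd0 : 0 < 3 * y ^ 2 - 1 := by linarith
  obtain ⟨a, rfl⟩ := Nat.exists_eq_add_of_lt hnn₁
  obtain ⟨b, rfl⟩ := Nat.exists_eq_add_of_lt hmm₁
  set n := n₁ + a + 1 with hnd
  set m := m₁ + b + 1 with hmd
  have E : |x ^ n * (1 - (x ^ (a+1))⁻¹) - y ^ (m + 4) / (3 * y ^ 2 - 1) * (1 - (y ^ (b+1))⁻¹)| ≤ 4 := by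
    have r1 : x ^ n * (1 - (x ^ (a+1))⁻¹) = x ^ n - x ^ n₁ := by
      rw [hnd, add_assoc, pow_add x n₁]; field_simp
    have r2 : y ^ (m + 4) / (3 * y ^ 2 - 1) * (1 - (y ^ (b+1))⁻¹) = y ^ (m + 4) / (3 * y ^ 2 - 1) - y ^ (m₁ + 4) / (3 * y ^ 2 - 1) := by
      rw [hmd, show m₁ + b + 1 + 4 = (m₁ + 4) + (b + 1) by ring, pow_add y (m₁ + 4)]; field_simp
    rw [r1, r2]
    have h1 := abs_le.1 (lucas_bound x (by linarith) (by linarith) hxe n)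
    have h2 := abs_le.1 (lucas_bound x (by linarith) (by linarith) hxe n₁)
    have h3 := abs_le.1 (padovan_bound y hy1 hy2 hye m)
    have h4 := abs_le.1 (padovan_bound y hy1 hy2 hye m₁)
    have h5 : (lucasSeq n : ℝ) - lucasSeq n₁ = padovan m - padovan m₁ := by exact_mod_cast heq
    rw [abs_le]; constructor <;> linarith
  set l := Real.log ((n:ℝ) + 3) with hl
  have hlb : 109 ≤ l := by
    obtain ⟨-, -, a3, -⟩ := num_logs
    have := Real.log_le_log (by norm_num) (hcon.trans (by linarith : (n:ℝ) ≤ n + 3))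
    linarith
  obtain ⟨L, hLd⟩ : ∃ L : ℕ, L = ⌈10.5 * l⌉₊ := ⟨_, rfl⟩
  have L1 : 10.5 * l ≤ L := by rw [hLd]; exact Nat.le_ceil _
  have L2 : (L:ℝ) ≤ 10.5 * l + 1 := by rw [hLd]; exact (Nat.ceil_lt_add_one (by linarith)).le
  have L3r : (1050:ℝ) ≤ L := by linarith
  have L3 : 1050 ≤ L := by exact_mod_cast L3r
  have gr := grow n l L hcon (by linarith) hl L2
  have g9 : 5 * 10 ^ 19 * (L:ℝ) ^ 9 ≤ n := by
    refine le_trans ?_ gr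
    calc 5 * 10 ^ 19 * (L:ℝ) ^ 9 ≤ 4.6 * 10 ^ 13 * 1050 ^ 2 * (L:ℝ) ^ 9 := mul_le_mul_of_nonneg_right (by norm_num) (by positivity)
      _ ≤ 4.6 * 10 ^ 13 * L ^ 2 * (L:ℝ) ^ 9 := by gcongr
      _ = _ := by ring
  have g8 : 5 * 10 ^ 22 * (L:ℝ) ^ 8 ≤ n := by
    refine le_trans ?_ gr
    calc 5 * 10 ^ 22 * (L:ℝ) ^ 8 ≤ 4.6 * 10 ^ 13 * 1050 ^ 3 * (L:ℝ) ^ 8 := mul_le_mul_of_nonneg_right (by norm_num) (by positivity)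
      _ ≤ 4.6 * 10 ^ 13 * L ^ 3 * (L:ℝ) ^ 8 := by gcongr
      _ = _ := by ring
  obtain ⟨h2, hh2⟩ : ∃ h2 : ℕ, h2 = 1150000 * (L ^ 3 * 2) + 10 := ⟨_, rfl⟩
  obtain ⟨h3, hh3⟩ : ∃ h3 : ℕ, h3 = 1150000 * (L ^ 3 * h2) + 10 := ⟨_, rfl⟩
  have L3p : (1:ℝ) ≤ (L:ℝ) ^ 3 := one_le_pow₀ (by linarith)
  have c2 : (h2:ℝ) ≤ 2300010 * (L:ℝ) ^ 3 := by rw [hh2]; push_cast; linarith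
  have c3 : (h3:ℝ) ≤ 2700000000000 * (L:ℝ) ^ 6 := by
    rw [hh3]; push_cast
    have e6 : (1:ℝ) ≤ (L:ℝ) ^ 6 := one_le_pow₀ (by linarith)
    calc 1150000 * ((L:ℝ) ^ 3 * h2) + 10 ≤ 1150000 * ((L:ℝ) ^ 3 * (2300010 * (L:ℝ) ^ 3)) + 10 := by gcongr
      _ = 1150000 * 2300010 * (L:ℝ) ^ 6 + 10 := by ring
      _ ≤ _ := by linarith
  have hbig : 13500000000 * (L ^ 2 * h3) ≤ n := by
    have : (13500000000 * ((L:ℝ) ^ 2 * h3)) ≤ n := by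
      calc (13500000000 * ((L:ℝ) ^ 2 * h3)) ≤ 13500000000 * ((L:ℝ) ^ 2 * (2700000000000 * (L:ℝ) ^ 6)) := by gcongr
        _ = 13500000000 * 2700000000000 * (L:ℝ) ^ 8 := by ring
        _ ≤ 5 * 10 ^ 22 * (L:ℝ) ^ 8 := mul_le_mul_of_nonneg_right (by norm_num) (by positivity)
        _ ≤ _ := g8
    exact_mod_cast this
  have n100 : 100 ≤ n := by
    have : (100:ℝ) ≤ n := by linarith
    exact_mod_cast this
  have key := chain D x y hx hy hx1 hx2 hy1 hy2 (a+1) (b+1) n m n₁ m₁ L h2 h3 (by omega) (by omega) hn₁ hm₁ (by omega) (by omega) n100 E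
    L3 (by push_cast; exact L1) hh2 hh3 hbig
  have k1 : (1150000 * ((L:ℝ) ^ 3 * h3)) ≤ 0.1 * n := by
    calc (1150000 * ((L:ℝ) ^ 3 * h3)) ≤ 1150000 * ((L:ℝ) ^ 3 * (2700000000000 * (L:ℝ) ^ 6)) := by gcongr
      _ = 1150000 * 2700000000000 * (L:ℝ) ^ 9 := by ring
      _ ≤ 0.1 * (5 * 10 ^ 19) * (L:ℝ) ^ 9 := mul_le_mul_of_nonneg_right (by norm_num) (by positivity)
      _ ≤ _ := by linarith
  have k2 : (n:ℝ) * 0.48 ≤ n * Real.log x := by gcongr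
  linarith

theorem upper_bound_n (n n₁ m m₁ : ℕ) (hn₁ : 1 ≤ n₁) (hnn₁ : n₁ < n)
    (hm₁ : 1 ≤ m₁) (hmm₁ : m₁ < m) (hn : 300 ≤ n)
    (heq : (lucasSeq n : ℤ) - (lucasSeq n₁ : ℤ) = (padovan m : ℤ) - (padovan m₁ : ℤ)) :
    (n : ℝ) - 3 < 1.8 * 10 ^ 41 * (1 + Real.log (2 * n)) ^ 3 ∧
    (n : ℝ) < 2.45 * 10 ^ 47 := by
  have h := main_bound n n₁ m m₁ hn₁ hnn₁ hm₁ hmm₁ heq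
  exact ⟨first_conj n (by exact_mod_cast hn) h.le, by linarith⟩
end part17x
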